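/- arXiv:2408.10480 — 6 statements merged into one kernel-verified Lean document; each statement's English description precedes it below -/
import Mathlib

section
/- Assume (A1)–(A3) and (A6)–(A7). Then there exists a threshold q* ∈ [q₁, q₂) such that c_NL*(q) = c₀* for all q ∈ [0, q*] and c_NL*(q) > c₀* for all q ∈ (q*, ∞). -/
open Filter Asymptotics MeasureTheory Set

noncomputable section

/-- A continuous, nonnegative, even, compactly supported dispersal kernel of total mass 1. -/
def IsKernel (J : ℝ → ℝ) : Prop :=
  Continuous J ∧ (∀ x, 0 ≤ J x) ∧ (∀ x, J (-x) = J x) ∧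
  HasCompactSupport J ∧ (∫ x, J x) = 1

/-- A nonlocal traveling wave front with speed `c` for the kernel `J` and nonlinearity `g`. -/
def IsNLFront (J : ℝ → ℝ) (g : ℝ → ℝ) (c : ℝ) (W : ℝ → ℝ) : Prop :=
  ContDiff ℝ 1 W ∧
  (∀ ξ, (∫ y, J (ξ - y) * W y) - W ξ + c * deriv W ξ + g (W ξ) = 0) ∧
  Tendsto W atBot (nhds 1) ∧ Tendsto W atTop (nhds 0) ∧
  (∀ ξ, deriv W ξ < 0)

/-- The linearized minimal speed `c₀* = inf_{λ>0} (∫ J(x)e^{λx}dx + γ₀ - 1)/λ`. -/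
noncomputable def c0star (J : ℝ → ℝ) (γ₀ : ℝ) : ℝ :=
  sInf ((fun l : ℝ => ((∫ x, J x * Real.exp (l * x)) + γ₀ - 1) / l) '' Ioi 0)


/-- Conditions on the nonlinearity and on the auxiliary constant. -/
structure GoodNL (g : ℝ → ℝ) (K : ℝ) : Prop where
  hK : 1 ≤ K
  g0 : g 0 = 0
  g1 : g 1 = 0
  pos : ∀ w ∈ Ioo (0:ℝ) 1, 0 < g w
  cont : ContinuousOn g (Icc 0 1)
  mono : MonotoneOn (fun w => (K - 1) * w + g w) (Icc 0 1)

/-- Antitone functions with values in `[0,1]`. -/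
def Adm (W : ℝ → ℝ) : Prop := Antitone W ∧ ∀ x, W x ∈ Icc (0:ℝ) 1

def Gop (J g : ℝ → ℝ) (K : ℝ) (W : ℝ → ℝ) (x : ℝ) : ℝ :=
  (∫ z, J z * W (x - z)) + ((K - 1) * W x + g (W x))

def Ek (K c s : ℝ) : ℝ := (1 / c) * Real.exp (-(K / c) * s)

def Top' (J g : ℝ → ℝ) (K c : ℝ) (W : ℝ → ℝ) (ξ : ℝ) : ℝ :=
  ∫ s in Ioi (0:ℝ), Ek K c s * Gop J g K W (ξ + s)

theorem IsKernel.int {J : ℝ → ℝ} (hJ : IsKernel J) : Integrable J :=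
  hJ.1.integrable_of_hasCompactSupport hJ.2.2.2.1

theorem Adm.meas {W : ℝ → ℝ} (hW : Adm W) : Measurable W := hW.1.measurable

theorem conv_integrable {J W : ℝ → ℝ} (hJ : IsKernel J) (hW : Adm W) (x : ℝ) :
    Integrable (fun z => J z * W (x - z)) := by
  refine hJ.int.mul_bdd (c := 1) ?_ ?_
  · exact (hW.meas.comp (measurable_const.sub measurable_id)).aestronglyMeasurable
  · filter_upwards with z
    rw [Real.norm_eq_abs, abs_le]
    have := hW.2 (x - z)
    constructor <;> linarith [this.1, this.2]

theorem conv_eq (J W : ℝ → ℝ) (x : ℝ) :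
    (∫ y, J (x - y) * W y) = ∫ z, J z * W (x - z) := by
  rw [← integral_sub_left_eq_self (fun z => J z * W (x - z)) volume x]
  simp

theorem Gop_mono {J g : ℝ → ℝ} {K : ℝ} (hJ : IsKernel J) (hg : GoodNL g K) {W W' : ℝ → ℝ}
    (hW : Adm W) (hW' : Adm W') {x x' : ℝ} (h : ∀ z, W (x - z) ≤ W' (x' - z)) :
    Gop J g K W x ≤ Gop J g K W' x' := by
  unfold Gop
  have h0 := h 0
  simp only [sub_zero] at h0
  have := hg.mono (hW.2 x) (hW'.2 x') h0
  have h2 : (∫ z, J z * W (x - z)) ≤ ∫ z, J z * W' (x' - z) :=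
    integral_mono (conv_integrable hJ hW x) (conv_integrable hJ hW' x')
      (fun z => mul_le_mul_of_nonneg_left (h z) (hJ.2.1 z))
  simp only at this
  linarith

theorem Gop_antitone {J g : ℝ → ℝ} {K : ℝ} (hJ : IsKernel J) (hg : GoodNL g K) {W : ℝ → ℝ}
    (hW : Adm W) : Antitone (Gop J g K W) := fun _ _ hab =>
  Gop_mono hJ hg hW hW (fun z => hW.1 (by linarith))

theorem adm_const {a : ℝ} (ha : a ∈ Icc (0:ℝ) 1) : Adm (fun _ => a) :=
  ⟨fun _ _ _ => le_rfl, fun _ => ha⟩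

theorem Gop_const {J g : ℝ → ℝ} (K : ℝ) (hJ : IsKernel J) (a x : ℝ) :
    Gop J g K (fun _ => a) x = K * a + g a := by
  unfold Gop
  rw [integral_mul_const, hJ.2.2.2.2]; ring

theorem Gop_mem {J g : ℝ → ℝ} {K : ℝ} (hJ : IsKernel J) (hg : GoodNL g K) {W : ℝ → ℝ}
    (hW : Adm W) (x : ℝ) : Gop J g K W x ∈ Icc 0 K := by
  have h0 := Gop_mono (x := x) (x' := x) hJ hg (adm_const (a := 0) (by simp)) hW
    (fun z => (hW.2 (x - z)).1)
  have h1 := Gop_mono (x := x) (x' := x) hJ hg hW (adm_const (a := 1) (by simp))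
    (fun z => (hW.2 (x - z)).2)
  rw [Gop_const K hJ] at h0 h1
  rw [hg.g0] at h0
  rw [hg.g1] at h1
  constructor <;> linarith

theorem Ek_nonneg {K c : ℝ} (hc : 0 < c) (s : ℝ) : 0 ≤ Ek K c s := by
  unfold Ek; positivity

theorem Ek_int {K c : ℝ} (hK : 1 ≤ K) (hc : 0 < c) (a : ℝ) : IntegrableOn (Ek K c) (Ioi a) := by
  have : -(K / c) < 0 := by have : 0 < K / c := by positivity
                            linarith
  exact (integrableOn_exp_mul_Ioi this a).const_mul _

theorem Ek_integral {K c : ℝ} (hK : 1 ≤ K) (hc : 0 < c) (a : ℝ) :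
    ∫ s in Ioi a, Ek K c s = Real.exp (-(K / c) * a) / K := by
  have : -(K / c) < 0 := by have : 0 < K / c := by positivity
                            linarith
  unfold Ek
  rw [integral_const_mul, integral_exp_mul_Ioi this]
  field_simp

theorem Ek_cont (K c : ℝ) : Continuous (Ek K c) := by unfold Ek; fun_prop

theorem integrand_int {J g : ℝ → ℝ} {K c : ℝ} (hJ : IsKernel J) (hg : GoodNL g K) (hc : 0 < c)
    {W : ℝ → ℝ} (hW : Adm W) (ξ a : ℝ) :
    IntegrableOn (fun s => Ek K c s * Gop J g K W (ξ + s)) (Ioi a) := by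
  refine Integrable.mul_bdd (c := K) (Ek_int hg.hK hc a) ?_ ?_
  · exact ((Gop_antitone hJ hg hW).measurable.comp
      (measurable_const.add measurable_id)).aestronglyMeasurable
  · filter_upwards with z
    have := Gop_mem hJ hg hW (ξ + z)
    rw [Real.norm_eq_abs, abs_of_nonneg this.1]
    exact this.2

theorem Top_mono {J g : ℝ → ℝ} {K c : ℝ} (hJ : IsKernel J) (hg : GoodNL g K) (hc : 0 < c)
    {W W' : ℝ → ℝ} (hW : Adm W) (hW' : Adm W') {x x' : ℝ} (h : ∀ z, W (x + z) ≤ W' (x' + z)) :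
    Top' J g K c W x ≤ Top' J g K c W' x' := by
  refine integral_mono (integrand_int hJ hg hc hW x 0) (integrand_int hJ hg hc hW' x' 0) ?_
  intro s
  refine mul_le_mul_of_nonneg_left (Gop_mono hJ hg hW hW' ?_) (Ek_nonneg hc s)
  intro z
  have := h (s - z)
  simpa [add_sub_assoc] using this

theorem Top_const {J g : ℝ → ℝ} {K c : ℝ} (hJ : IsKernel J) (hK : 1 ≤ K) (hc : 0 < c)
    (a x : ℝ) : Top' J g K c (fun _ => a) x = a + g a / K := by
  unfold Top'
  simp_rw [Gop_const K hJ]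
  rw [integral_mul_const, Ek_integral hK hc]
  have : K ≠ 0 := by linarith
  field_simp
  simp

theorem Top_adm {J g : ℝ → ℝ} {K c : ℝ} (hJ : IsKernel J) (hg : GoodNL g K) (hc : 0 < c)
    {W : ℝ → ℝ} (hW : Adm W) : Adm (Top' J g K c W) := by
  refine ⟨fun a b hab => Top_mono hJ hg hc hW hW (fun z => hW.1 (by linarith)), fun x => ?_⟩
  have h0 := Top_mono (x := x) (x' := x) hJ hg hc (adm_const (a := 0) (by simp)) hW
    (fun z => (hW.2 (x + z)).1)
  have h1 := Top_mono (x := x) (x' := x) hJ hg hc hW (adm_const (a := 1) (by simp))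
    (fun z => (hW.2 (x + z)).2)
  rw [Top_const hJ hg.hK hc] at h0 h1
  rw [hg.g0] at h0
  rw [hg.g1] at h1
  constructor <;> [simpa using h0; simpa using h1]

theorem adm_shift {W : ℝ → ℝ} (hW : Adm W) (a : ℝ) : Adm (fun x => W (x + a)) :=
  ⟨fun _ _ h => hW.1 (by linarith), fun x => hW.2 _⟩

theorem Top_shift {J g : ℝ → ℝ} {K c : ℝ} (W : ℝ → ℝ) (a x : ℝ) :
    Top' J g K c (fun x => W (x + a)) x = Top' J g K c W (x + a) := by
  unfold Top' Gop
  congr 1; ext s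
  have : ∀ z, x + s - z + a = x + a + s - z := fun z => by ring
  have h2 : x + s + a = x + a + s := by ring
  simp only [this, h2]

theorem Ek_add (K c s h : ℝ) : Ek K c (s + h) = Real.exp (-(K / c) * h) * Ek K c s := by
  unfold Ek; rw [mul_add, Real.exp_add]; ring

theorem Ioi_shift (F : ℝ → ℝ) (h : ℝ) : ∫ s in Ioi h, F s = ∫ s in Ioi (0:ℝ), F (s + h) := by
  have := (measurePreserving_add_right volume h).setIntegral_preimage_emb
    (measurableEmbedding_addRight h) F (Ioi h)
  rw [← this]
  simp

theorem Top_step {J g : ℝ → ℝ} {K c : ℝ} (hJ : IsKernel J) (hg : GoodNL g K) (hc : 0 < c)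
    {W : ℝ → ℝ} (hW : Adm W) (ξ : ℝ) {h : ℝ} (hh : 0 ≤ h) :
    Top' J g K c W ξ ≤ Gop J g K W ξ * ((1 - Real.exp (-(K / c) * h)) / K)
      + Real.exp (-(K / c) * h) * Top' J g K c W (ξ + h) := by
  have hsplit : ∀ F : ℝ → ℝ, IntegrableOn F (Ioi 0) →
      ∫ s in Ioi (0:ℝ), F s = (∫ s in Ioc 0 h, F s) + ∫ s in Ioi h, F s := by
    intro F hF
    rw [← setIntegral_union (Ioc_disjoint_Ioi le_rfl) measurableSet_Ioi
      (hF.mono_set Ioc_subset_Ioi_self) (hF.mono_set (Ioi_subset_Ioi hh)), Ioc_union_Ioi_eq_Ioi hh]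
  have hI := integrand_int hJ hg hc hW ξ 0
  have h1 := hsplit _ hI
  have h2 := hsplit _ (Ek_int hg.hK hc 0)
  rw [Ek_integral hg.hK hc, Ek_integral hg.hK hc] at h2
  simp only [mul_zero, Real.exp_zero] at h2
  have h3 : (∫ s in Ioc 0 h, Ek K c s * Gop J g K W (ξ + s)) ≤
      ∫ s in Ioc 0 h, Ek K c s * Gop J g K W ξ := by
    refine setIntegral_mono_on (hI.mono_set Ioc_subset_Ioi_self)
      (((Ek_int hg.hK hc 0).mono_set Ioc_subset_Ioi_self).mul_const _) measurableSet_Ioc ?_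
    intro s hs
    exact mul_le_mul_of_nonneg_left (Gop_antitone hJ hg hW (by linarith [hs.1])) (Ek_nonneg hc s)
  rw [integral_mul_const] at h3
  have h4 : (∫ s in Ioi h, Ek K c s * Gop J g K W (ξ + s)) =
      Real.exp (-(K / c) * h) * Top' J g K c W (ξ + h) := by
    rw [Ioi_shift]
    unfold Top'
    rw [← integral_const_mul]
    congr 1; ext s
    rw [Ek_add, show ξ + (s + h) = ξ + h + s by ring]; ring
  have h5 : (∫ s in Ioc 0 h, Ek K c s) = (1 - Real.exp (-(K / c) * h)) / K := by
    rw [sub_div]; linarith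
  rw [h4] at h1
  rw [h5] at h3
  have : Top' J g K c W ξ = _ := h1
  rw [this]
  nlinarith

theorem Top_lip {J g : ℝ → ℝ} {K c : ℝ} (hJ : IsKernel J) (hg : GoodNL g K) (hc : 0 < c)
    {W : ℝ → ℝ} (hW : Adm W) (x y : ℝ) :
    |Top' J g K c W x - Top' J g K c W y| ≤ K / c * |x - y| := by
  have key : ∀ ξ h : ℝ, 0 ≤ h →
      |Top' J g K c W ξ - Top' J g K c W (ξ + h)| ≤ K / c * h := by
    intro ξ h hh
    have hA := Top_adm hJ hg hc hW
    have h0 : Top' J g K c W (ξ + h) ≤ Top' J g K c W ξ := hA.1 (by linarith)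
    rw [abs_of_nonneg (by linarith)]
    have h1 := Top_step hJ hg hc hW ξ hh
    have hG := Gop_mem hJ hg hW ξ
    have he := Real.add_one_le_exp (-(K / c) * h)
    have hK : 0 < K := by linarith [hg.hK]
    have he1 : Real.exp (-(K / c) * h) ≤ 1 := by
      rw [Real.exp_le_one_iff]
      have : 0 ≤ K / c * h := by positivity
      linarith
    have hT := (hA.2 (ξ + h))
    have h2 : Gop J g K W ξ * ((1 - Real.exp (-(K / c) * h)) / K) ≤
        K * ((1 - Real.exp (-(K / c) * h)) / K) :=
      mul_le_mul_of_nonneg_right hG.2 (div_nonneg (by linarith) hK.le)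
    rw [mul_div_cancel₀ _ hK.ne'] at h2
    have h3 : Real.exp (-(K / c) * h) * Top' J g K c W (ξ + h) ≤ Top' J g K c W (ξ + h) := by
      nlinarith [hT.1]
    linarith
  rcases le_total x y with h | h
  · have := key x (y - x) (by linarith)
    rw [abs_sub_comm x y, abs_of_nonneg (by linarith : 0 ≤ y - x)]
    simpa using this
  · have := key y (x - y) (by linarith)
    rw [abs_sub_comm (Top' J g K c W x), abs_of_nonneg (by linarith : 0 ≤ x - y)]
    simpa using this

theorem Gop_tendsto {J g : ℝ → ℝ} {K : ℝ} (hJ : IsKernel J) (hg : GoodNL g K)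
    {Wn : ℕ → ℝ → ℝ} {W : ℝ → ℝ} (hWn : ∀ n, Adm (Wn n)) (hW : ∀ x, W x ∈ Icc (0:ℝ) 1)
    (h : ∀ x, Tendsto (fun n => Wn n x) atTop (nhds (W x))) (x : ℝ) :
    Tendsto (fun n => Gop J g K (Wn n) x) atTop (nhds (Gop J g K W x)) := by
  unfold Gop
  refine Tendsto.add ?_ (Tendsto.add ((h x).const_mul _) ?_)
  · refine tendsto_integral_of_dominated_convergence J
      (fun n => (conv_integrable hJ (hWn n) x).aestronglyMeasurable) hJ.int ?_ ?_
    · intro n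
      filter_upwards with z
      have := (hWn n).2 (x - z)
      rw [Real.norm_eq_abs, abs_of_nonneg (mul_nonneg (hJ.2.1 z) this.1)]
      exact mul_le_of_le_one_right (hJ.2.1 z) this.2
    · filter_upwards with z
      exact (h (x - z)).const_mul _
  · have := hg.cont (W x) (hW x)
    refine this.tendsto.comp ?_
    refine tendsto_nhdsWithin_iff.2 ⟨h x, ?_⟩
    filter_upwards with n
    exact (hWn n).2 x

theorem Top_tendsto {J g : ℝ → ℝ} {K c : ℝ} (hJ : IsKernel J) (hg : GoodNL g K) (hc : 0 < c)
    {Wn : ℕ → ℝ → ℝ} {W : ℝ → ℝ} (hWn : ∀ n, Adm (Wn n)) (hW : ∀ x, W x ∈ Icc (0:ℝ) 1)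
    (h : ∀ x, Tendsto (fun n => Wn n x) atTop (nhds (W x))) (x : ℝ) :
    Tendsto (fun n => Top' J g K c (Wn n) x) atTop (nhds (Top' J g K c W x)) := by
  unfold Top'
  refine tendsto_integral_of_dominated_convergence (fun s => Ek K c s * K)
    (fun n => (integrand_int hJ hg hc (hWn n) x 0).aestronglyMeasurable)
    ((Ek_int hg.hK hc 0).mul_const _) ?_ ?_
  · intro n
    filter_upwards with s
    have := Gop_mem hJ hg (hWn n) (x + s)
    rw [Real.norm_eq_abs, abs_of_nonneg (mul_nonneg (Ek_nonneg hc s) this.1)]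
    exact mul_le_mul_of_nonneg_left this.2 (Ek_nonneg hc s)
  · filter_upwards with s
    exact (Gop_tendsto hJ hg hWn hW h (x + s)).const_mul _

theorem Gop_cont {J g : ℝ → ℝ} {K : ℝ} (hJ : IsKernel J) (hg : GoodNL g K) {W : ℝ → ℝ}
    (hW : Adm W) (hWc : Continuous W) : Continuous (Gop J g K W) := by
  have h1 : Continuous (fun x => ∫ z, J z * W (x - z)) := by
    refine continuous_of_dominated (bound := J)
      (fun x => (conv_integrable hJ hW x).aestronglyMeasurable) ?_ hJ.int ?_
    · intro x
      filter_upwards with z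
      have := hW.2 (x - z)
      rw [Real.norm_eq_abs, abs_of_nonneg (mul_nonneg (hJ.2.1 z) this.1)]
      exact mul_le_of_le_one_right (hJ.2.1 z) this.2
    · filter_upwards with z
      fun_prop
  have h2 : Continuous (fun x => g (W x)) := hg.cont.comp_continuous hWc hW.2
  exact h1.add ((continuous_const.mul hWc).add h2)

theorem Top_hasDeriv {J g : ℝ → ℝ} {K c : ℝ} (hJ : IsKernel J) (hg : GoodNL g K) (hc : 0 < c)
    {W : ℝ → ℝ} (hW : Adm W) (hWc : Continuous W) (ξ : ℝ) :
    HasDerivAt (Top' J g K c W) (K / c * Top' J g K c W ξ - Gop J g K W ξ / c) ξ := by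
  have hG := Gop_cont hJ hg hW hWc
  set F : ℝ → ℝ := fun s => Ek K c s * Gop J g K W s with hF
  have hFc : Continuous F := (Ek_cont K c).mul hG
  have hFi : ∀ a, IntegrableOn F (Ioi a) := fun a => by
    simpa using integrand_int hJ hg hc hW 0 a
  have hT : ∀ x, Top' J g K c W x =
      Real.exp (K / c * x) * ((∫ s in Ioi (0:ℝ), F s) - ∫ s in (0:ℝ)..x, F s) := by
    intro x
    have h1 : (∫ s in Ioi (0:ℝ), F s) - ∫ s in (0:ℝ)..x, F s = ∫ s in Ioi x, F s := by
      have := intervalIntegral.integral_interval_add_Ioi (hFi 0) (hFi x)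
      linarith
    rw [h1, Ioi_shift, ← integral_const_mul]
    unfold Top'
    congr 1; ext s
    simp only [hF]
    rw [Ek_add, add_comm x s, ← mul_assoc, ← mul_assoc, ← Real.exp_add]
    simp
  have hd : HasDerivAt (fun x => Real.exp (K / c * x) *
      ((∫ s in Ioi (0:ℝ), F s) - ∫ s in (0:ℝ)..x, F s))
      (Real.exp (K / c * ξ) * (K / c * 1) * ((∫ s in Ioi (0:ℝ), F s) - ∫ s in (0:ℝ)..ξ, F s)
        + Real.exp (K / c * ξ) * (0 - F ξ)) ξ := by
    refine HasDerivAt.mul ?_ ?_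
    · exact ((hasDerivAt_id ξ).const_mul (K / c)).exp
    · exact (hasDerivAt_const ξ _).sub (intervalIntegral.integral_hasDerivAt_right
        (hFc.intervalIntegrable _ _) (hFc.stronglyMeasurableAtFilter _ _) hFc.continuousAt)
  have : Top' J g K c W = fun x => Real.exp (K / c * x) *
      ((∫ s in Ioi (0:ℝ), F s) - ∫ s in (0:ℝ)..x, F s) := funext hT
  have h2 : Real.exp (K / c * ξ) * F ξ = Gop J g K W ξ / c := by
    simp only [hF, Ek]
    have : Real.exp (K / c * ξ) * Real.exp (-(K / c) * ξ) = 1 := by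
      rw [← Real.exp_add]; simp
    calc _ = (Real.exp (K / c * ξ) * Real.exp (-(K / c) * ξ)) * (Gop J g K W ξ / c) := by ring
      _ = _ := by rw [this, one_mul]
  have h3 : K / c * Top' J g K c W ξ - Gop J g K W ξ / c =
      (Real.exp (K / c * ξ) * (K / c * 1) * ((∫ s in Ioi (0:ℝ), F s) - ∫ s in (0:ℝ)..ξ, F s)
        + Real.exp (K / c * ξ) * (0 - F ξ)) := by
    rw [hT ξ, ← h2]; ring
  rw [h3, this]
  exact hd

/-- limit of `Top'` at `-∞` / `+∞` along integer translates -/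
theorem Top_lim {J g : ℝ → ℝ} {K c : ℝ} (hJ : IsKernel J) (hg : GoodNL g K) (hc : 0 < c)
    {W : ℝ → ℝ} (hW : Adm W) {l : ℝ} (hl : l ∈ Icc (0:ℝ) 1) {a : ℕ → ℝ}
    (h : ∀ x, Tendsto (fun n => W (x + a n)) atTop (nhds l)) :
    Tendsto (fun n => Top' J g K c W (a n)) atTop (nhds (l + g l / K)) := by
  have := Top_tendsto (c := c) hJ hg hc (Wn := fun n x => W (x + a n)) (W := fun _ => l)
    (fun n => adm_shift hW (a n)) (fun _ => hl) h 0
  rw [Top_const hJ hg.hK hc] at this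
  simpa [Top_shift] using this

theorem adm_lim_bot {W : ℝ → ℝ} (hW : Adm W) : ∃ l ∈ Icc (0:ℝ) 1, Tendsto W atBot (nhds l) ∧
    ∀ x, W x ≤ l := by
  have hb : BddAbove (range W) := ⟨1, by rintro _ ⟨x, rfl⟩; exact (hW.2 x).2⟩
  have h := tendsto_atBot_ciSup hW.1 hb
  refine ⟨_, ⟨?_, ?_⟩, h, fun x => le_ciSup hb x⟩
  · exact ge_of_tendsto' h (fun x => (hW.2 x).1)
  · exact le_of_tendsto' h (fun x => (hW.2 x).2)

theorem adm_lim_top {W : ℝ → ℝ} (hW : Adm W) : ∃ l ∈ Icc (0:ℝ) 1, Tendsto W atTop (nhds l) ∧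
    ∀ x, l ≤ W x := by
  have hb : BddBelow (range W) := ⟨0, by rintro _ ⟨x, rfl⟩; exact (hW.2 x).1⟩
  have h := tendsto_atTop_ciInf hW.1 hb
  refine ⟨_, ⟨?_, ?_⟩, h, fun x => ciInf_le hb x⟩
  · exact ge_of_tendsto' h (fun x => (hW.2 x).1)
  · exact le_of_tendsto' h (fun x => (hW.2 x).2)

theorem shift_bot (x : ℝ) : Tendsto (fun n : ℕ => x + (-(n:ℝ))) atTop atBot :=
  tendsto_atBot_add_const_left _ _ (tendsto_neg_atTop_atBot.comp tendsto_natCast_atTop_atTop)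

theorem shift_top (x : ℝ) : Tendsto (fun n : ℕ => x + (n:ℝ)) atTop atTop :=
  tendsto_atTop_add_const_left _ _ tendsto_natCast_atTop_atTop

theorem IsKernel.exists_pos {J : ℝ → ℝ} (hJ : IsKernel J) : ∃ a > 0, 0 < J a := by
  by_contra! h
  have h1 : ∀ a, a ≠ 0 → J a = 0 := by
    intro a ha
    rcases lt_or_gt_of_ne ha with h' | h'
    · have := h (-a) (by linarith)
      rw [hJ.2.2.1] at this
      exact le_antisymm this (hJ.2.1 a)
    · exact le_antisymm (h a h') (hJ.2.1 a)
  have h2 : J =ᵐ[volume] fun _ => (0:ℝ) := by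
    have : ∀ᵐ x : ℝ, x ≠ 0 := by simp [ae_iff]
    filter_upwards [this] with x hx using h1 x hx
  have := integral_congr_ae h2
  rw [hJ.2.2.2.2] at this
  simp at this

/-- A fixed point normalised at the origin is a front. -/
theorem front_of_fixed {J g : ℝ → ℝ} {K c : ℝ} (hJ : IsKernel J) (hg : GoodNL g K) (hc : 0 < c)
    {V : ℝ → ℝ} (hV : Adm V) (hfix : ∀ x, Top' J g K c V x = V x) (h0 : V 0 = 1 / 2) :
    IsNLFront J g c V := by
  have hKp : 0 < K := by linarith [hg.hK]
  have hfe : Top' J g K c V = V := funext hfix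
  have hVc : Continuous V := by
    have hl : LipschitzWith (Real.toNNReal (K / c)) V := by
      refine LipschitzWith.of_dist_le_mul (fun x y => ?_)
      rw [Real.dist_eq, Real.dist_eq, Real.coe_toNNReal _ (by positivity)]
      have := Top_lip hJ hg hc hV x y
      rwa [hfe] at this
    exact hl.continuous
  have hd : ∀ x, HasDerivAt V (K / c * V x - Gop J g K V x / c) x := by
    intro x
    have := Top_hasDeriv hJ hg hc hV hVc x
    rwa [hfe] at this
  have hder : ∀ x, deriv V x = K / c * V x - Gop J g K V x / c := fun x => (hd x).deriv
  have hG := Gop_cont hJ hg hV hVc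
  -- limits
  have hbot : Tendsto V atBot (nhds 1) := by
    obtain ⟨l, hl, ht, hle⟩ := adm_lim_bot hV
    have h1 := Top_lim hJ hg hc hV hl (a := fun n => -(n:ℝ)) (fun x => ht.comp (shift_bot x))
    have h2 : Tendsto (fun n : ℕ => V (-(n:ℝ))) atTop (nhds l) := by
      simpa [Function.comp_def] using ht.comp (shift_bot 0)
    simp only [hfix] at h1
    have h3 := tendsto_nhds_unique h1 h2
    have h4 : g l / K = 0 := by linarith
    have h5 : g l = 0 := by
      rcases div_eq_zero_iff.1 h4 with h | h
      · exact h
      · exact absurd h hKp.ne'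
    have hl1 : l = 1 := by
      by_contra hne
      have := hg.pos l ⟨by have := hle 0; linarith, lt_of_le_of_ne hl.2 hne⟩
      linarith
    rwa [hl1] at ht
  have htop : Tendsto V atTop (nhds 0) := by
    obtain ⟨l, hl, ht, hle⟩ := adm_lim_top hV
    have h1 := Top_lim hJ hg hc hV hl (a := fun n => (n:ℝ)) (fun x => ht.comp (shift_top x))
    have h2 : Tendsto (fun n : ℕ => V ((n:ℝ))) atTop (nhds l) := by
      simpa [Function.comp_def] using ht.comp (shift_top 0)
    simp only [hfix] at h1
    have h3 := tendsto_nhds_unique h1 h2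
    have h4 : g l / K = 0 := by linarith
    have h5 : g l = 0 := by
      rcases div_eq_zero_iff.1 h4 with h | h
      · exact h
      · exact absurd h hKp.ne'
    have hl1 : l = 0 := by
      by_contra hne
      have := hg.pos l ⟨lt_of_le_of_ne hl.1 (Ne.symm hne), by have := hle 0; linarith⟩
      linarith
    rwa [hl1] at ht
  -- positivity
  have hpos : ∀ x, 0 < V x := by
    obtain ⟨a, ha, hJa⟩ := hJ.exists_pos
    have step : ∀ x, V x = 0 → V (x - a) = 0 := by
      intro x hx
      have hmin : IsLocalMin V x := by
        filter_upwards with y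
        rw [hx]; exact (hV.2 y).1
      have h1 := hmin.deriv_eq_zero
      rw [hder, hx] at h1
      have h2 : Gop J g K V x = 0 := by
        have : Gop J g K V x / c = 0 := by linarith
        rcases div_eq_zero_iff.1 this with h | h
        · exact h
        · exact absurd h hc.ne'
      unfold Gop at h2
      rw [hx, hg.g0] at h2
      simp only [mul_zero, add_zero] at h2
      have hnn : 0 ≤ fun z => J z * V (x - z) := fun z => mul_nonneg (hJ.2.1 z) (hV.2 _).1
      rw [integral_eq_zero_iff_of_nonneg hnn (conv_integrable hJ hV x)] at h2
      have hcont : Continuous (fun z => J z * V (x - z)) := by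
        have := hJ.1
        fun_prop
      have h3 := (hcont.ae_eq_iff_eq volume continuous_zero).1 h2
      have h4 := congrFun h3 a
      simp only [Pi.zero_apply] at h4
      rcases mul_eq_zero.1 h4 with h | h
      · linarith
      · exact h
    intro x
    by_contra hx
    have hx0 : V x = 0 := le_antisymm (not_lt.1 hx) (hV.2 x).1
    have hn : ∀ n : ℕ, V (x - n * a) = 0 := by
      intro n
      induction n with
      | zero => simpa using hx0
      | succ n ih =>
        have := step _ ih
        rw [← this]; congr 1; push_cast; ring
    have ht : Tendsto (fun n : ℕ => x - n * a) atTop atBot := by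
      have h1 : Tendsto (fun n : ℕ => (n:ℝ) * a) atTop atTop :=
        tendsto_natCast_atTop_atTop.atTop_mul_const ha
      have := tendsto_atBot_add_const_left atTop x (tendsto_neg_atTop_atBot.comp h1)
      simpa [sub_eq_add_neg] using this
    have h2 := hbot.comp ht
    have h3 : (V ∘ fun n : ℕ => x - n * a) = fun _ => (0:ℝ) := funext hn
    rw [h3] at h2
    have := tendsto_nhds_unique h2 tendsto_const_nhds
    norm_num at this
  refine ⟨?_, ?_, hbot, htop, ?_⟩
  · rw [contDiff_one_iff_deriv]
    refine ⟨fun x => (hd x).differentiableAt, ?_⟩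
    have : deriv V = fun x => K / c * V x - Gop J g K V x / c := funext hder
    rw [this]
    fun_prop
  · intro ξ
    rw [hder, conv_eq]
    unfold Gop
    field_simp
    ring
  · intro ξ
    have hle : deriv V ξ ≤ 0 := hV.1.deriv_nonpos
    refine lt_of_le_of_ne hle ?_
    intro h
    rw [hder] at h
    have hGK : Gop J g K V ξ = K * V ξ := by
      field_simp at h
      linarith
    have hall : ∀ h : ℝ, 0 ≤ h → V ξ ≤ V (ξ + h) := by
      intro h hh
      have := Top_step hJ hg hc hV ξ hh
      rw [hfix, hfix, hGK] at this
      have e : K * V ξ * ((1 - Real.exp (-(K / c) * h)) / K) =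
          V ξ * (1 - Real.exp (-(K / c) * h)) := by field_simp
      rw [e] at this
      have hp := Real.exp_pos (-(K / c) * h)
      have h2 : Real.exp (-(K / c) * h) * V ξ ≤ Real.exp (-(K / c) * h) * V (ξ + h) := by
        linarith
      exact le_of_mul_le_mul_left h2 hp
    have h3 : V ξ ≤ 0 := by
      refine ge_of_tendsto (htop.comp (shift_top ξ)) ?_
      filter_upwards with n
      exact hall n (by positivity)
    linarith [hpos ξ]

theorem front_bounds {J g : ℝ → ℝ} {c : ℝ} {W : ℝ → ℝ} (h : IsNLFront J g c W) : Adm W := by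
  have ha : Antitone W := (strictAnti_of_deriv_neg h.2.2.2.2).antitone
  refine ⟨ha, fun x => ⟨?_, ?_⟩⟩
  · exact ha.le_of_tendsto h.2.2.2.1 x
  · exact ha.ge_of_tendsto h.2.2.1 x

/-- A front is a fixed point of the integral operator of its own nonlinearity. -/
theorem front_fix {J g : ℝ → ℝ} {K c : ℝ} (hK : 1 ≤ K) (hc : 0 < c) {W : ℝ → ℝ}
    (h : IsNLFront J g c W) (ξ : ℝ) :
    IntegrableOn (fun s => Ek K c s * Gop J g K W (ξ + s)) (Ioi 0) ∧
      Top' J g K c W ξ = W ξ := by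
  have hA := front_bounds h
  have hdiff : Differentiable ℝ W := h.1.differentiable (by norm_num)
  have hKc : 0 < K / c := by positivity
  have hd : ∀ s ∈ Ici (0:ℝ), HasDerivAt (fun s => Real.exp (-(K / c) * s) * W (ξ + s))
      (-(Ek K c s * Gop J g K W (ξ + s))) s := by
    intro s _
    have h1 : HasDerivAt (fun s => Real.exp (-(K / c) * s))
        (Real.exp (-(K / c) * s) * (-(K / c) * 1)) s :=
      ((hasDerivAt_id s).const_mul (-(K / c))).exp
    have h2 : HasDerivAt (fun s => W (ξ + s)) (deriv W (ξ + s)) s :=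
      (hdiff (ξ + s)).hasDerivAt.comp_const_add ξ s
    have h3 := h1.mul h2
    have he := h.2.1 (ξ + s)
    rw [conv_eq] at he
    have hG : Gop J g K W (ξ + s) = K * W (ξ + s) - c * deriv W (ξ + s) := by
      unfold Gop; linarith
    have e : -(Ek K c s * Gop J g K W (ξ + s)) =
        Real.exp (-(K / c) * s) * (-(K / c) * 1) * W (ξ + s) +
          Real.exp (-(K / c) * s) * deriv W (ξ + s) := by
      rw [hG]; unfold Ek
      field_simp
      ring
    rw [e]
    exact h3
  have hneg : ∀ s ∈ Ioi (0:ℝ), -(Ek K c s * Gop J g K W (ξ + s)) ≤ 0 := by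
    intro s _
    have he := h.2.1 (ξ + s)
    rw [conv_eq] at he
    have hG : Gop J g K W (ξ + s) = K * W (ξ + s) - c * deriv W (ξ + s) := by
      unfold Gop; linarith
    have h1 := (hA.2 (ξ + s)).1
    have h2 := h.2.2.2.2 (ξ + s)
    have : 0 ≤ Gop J g K W (ξ + s) := by
      rw [hG]; nlinarith
    have := mul_nonneg (Ek_nonneg (K := K) hc s) this
    linarith
  have ht : Tendsto (fun s => Real.exp (-(K / c) * s) * W (ξ + s)) atTop (nhds 0) := by
    have h1 : Tendsto (fun s => W (ξ + s)) atTop (nhds 0) :=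
      h.2.2.2.1.comp (tendsto_atTop_add_const_left _ _ tendsto_id)
    refine squeeze_zero' ?_ ?_ h1
    · filter_upwards with s
      exact mul_nonneg (Real.exp_pos _).le (hA.2 _).1
    · filter_upwards [eventually_ge_atTop (0:ℝ)] with s hs
      refine mul_le_of_le_one_left (hA.2 _).1 ?_
      rw [Real.exp_le_one_iff]
      nlinarith
  have hI := integrableOn_Ioi_deriv_of_nonpos' hd hneg ht
  have hv := integral_Ioi_of_hasDerivAt_of_nonpos' hd hneg ht
  refine ⟨by simpa using hI.neg, ?_⟩
  rw [integral_neg] at hv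
  simp only [mul_zero, Real.exp_zero, add_zero, one_mul, zero_sub, neg_inj] at hv
  exact hv

theorem front_super {J g g' : ℝ → ℝ} {K c : ℝ} (hJ : IsKernel J) (hg : GoodNL g K) (hc : 0 < c)
    {W : ℝ → ℝ} (h : IsNLFront J g' c W) (hle : ∀ w ∈ Icc (0:ℝ) 1, g w ≤ g' w) (ξ : ℝ) :
    Top' J g K c W ξ ≤ W ξ := by
  have hA := front_bounds h
  obtain ⟨hI, hv⟩ := front_fix hg.hK hc h ξ
  rw [← hv]
  refine integral_mono (integrand_int hJ hg hc hA ξ 0) hI (fun s => ?_)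
  refine mul_le_mul_of_nonneg_left ?_ (Ek_nonneg hc s)
  unfold Gop
  linarith [hle _ (hA.2 (ξ + s))]

theorem front_approx {J g g' : ℝ → ℝ} {K c δ : ℝ} (hJ : IsKernel J) (hg : GoodNL g K)
    (hc : 0 < c) {W : ℝ → ℝ} (h : IsNLFront J g' c W)
    (hle : ∀ w ∈ Icc (0:ℝ) 1, |g w - g' w| ≤ δ) (ξ : ℝ) :
    |Top' J g K c W ξ - W ξ| ≤ δ / K := by
  have hA := front_bounds h
  obtain ⟨hI, hv⟩ := front_fix hg.hK hc h ξ
  have hE : (∫ s in Ioi (0:ℝ), Ek K c s * δ) = δ / K := by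
    rw [integral_mul_const, Ek_integral hg.hK hc]; simp; ring
  rw [← hE]
  rw [show Top' J g K c W ξ - W ξ = Top' J g K c W ξ - Top' J g' K c W ξ by rw [hv]]
  unfold Top'
  rw [← integral_sub (integrand_int hJ hg hc hA ξ 0) hI, ← Real.norm_eq_abs]
  refine norm_integral_le_of_norm_le ((Ek_int hg.hK hc 0).mul_const δ) ?_
  filter_upwards with s
  rw [← mul_sub, norm_mul, Real.norm_eq_abs, abs_of_nonneg (Ek_nonneg hc s)]
  refine mul_le_mul_of_nonneg_left ?_ (Ek_nonneg hc s)
  rw [Real.norm_eq_abs]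
  have := hle _ (hA.2 (ξ + s))
  unfold Gop
  rw [add_sub_add_left_eq_sub, add_sub_add_left_eq_sub]
  exact this

/-- Compactness: normalised approximate fixed points produce a front. -/
theorem front_of_approx {J g : ℝ → ℝ} {K c : ℝ} (hJ : IsKernel J) (hg : GoodNL g K) (hc : 0 < c)
    {Wn : ℕ → ℝ → ℝ} (hWn : ∀ n, Adm (Wn n)) {ε : ℕ → ℝ} (hε : Tendsto ε atTop (nhds 0))
    (happ : ∀ n x, |Top' J g K c (Wn n) x - Wn n x| ≤ ε n)
    (h0 : Tendsto (fun n => Wn n 0) atTop (nhds (1 / 2))) :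
    ∃ V, IsNLFront J g c V := by
  set Vn : ℕ → ℝ → ℝ := fun n => Top' J g K c (Wn n) with hVn
  have hVA : ∀ n, Adm (Vn n) := fun n => Top_adm hJ hg hc (hWn n)
  have hL : ∀ n x y, |Vn n x - Vn n y| ≤ K / c * |x - y| := fun n x y =>
    Top_lip hJ hg hc (hWn n) x y
  have hKp : 0 < K := by linarith [hg.hK]
  obtain ⟨v, φ, hφ, hv⟩ := CompactSpace.tendsto_subseq
    (fun (n : ℕ) (r : ℚ) => (⟨Vn n r, (hVA n).2 r⟩ : Icc (0:ℝ) 1))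
  have hq : ∀ r : ℚ, CauchySeq (fun n => Vn (φ n) r) := by
    intro r
    have := (tendsto_pi_nhds.1 hv) r
    have h2 := (continuous_subtype_val.tendsto _).comp this
    exact h2.cauchySeq
  have hx : ∀ x : ℝ, CauchySeq (fun n => Vn (φ n) x) := by
    intro x
    rw [Metric.cauchySeq_iff']
    intro e he
    obtain ⟨r, hr1, hr2⟩ := exists_rat_btwn
      (show x < x + e / 3 / (K / c) by have : 0 < e / 3 / (K / c) := by positivity
                                       linarith)
    have hr : K / c * |x - r| < e / 3 := by
      rw [abs_sub_comm, abs_of_pos (by linarith)]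
      have : (r:ℝ) - x < e / 3 / (K / c) := by linarith
      rwa [lt_div_iff₀' (by positivity)] at this
    obtain ⟨N, hN⟩ := (Metric.cauchySeq_iff'.1 (hq r)) (e / 3) (by positivity)
    refine ⟨N, fun n hn => ?_⟩
    have h1 := hN n hn
    rw [Real.dist_eq, abs_lt] at h1 ⊢
    have h2 := abs_le.1 (hL (φ n) x r)
    have h3 := abs_le.1 (hL (φ N) x r)
    constructor <;> linarith [h1.1, h1.2, h2.1, h2.2, h3.1, h3.2]
  choose V hV using fun x => cauchySeq_tendsto_of_complete (hx x)
  have hVmem : ∀ x, V x ∈ Icc (0:ℝ) 1 := fun x =>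
    ⟨ge_of_tendsto' (hV x) (fun n => ((hVA (φ n)).2 x).1),
      le_of_tendsto' (hV x) (fun n => ((hVA (φ n)).2 x).2)⟩
  have hVanti : Antitone V := fun a b hab =>
    le_of_tendsto_of_tendsto' (hV b) (hV a) (fun n => (hVA (φ n)).1 hab)
  have hεφ : Tendsto (fun n => ε (φ n)) atTop (nhds 0) := hε.comp hφ.tendsto_atTop
  have hdiff : ∀ x, Tendsto (fun n => Vn (φ n) x - Wn (φ n) x) atTop (nhds 0) := fun x =>
    squeeze_zero_norm (fun n => happ (φ n) x) hεφ
  have hW : ∀ x, Tendsto (fun n => Wn (φ n) x) atTop (nhds (V x)) := by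
    intro x
    have := (hV x).sub (hdiff x)
    simpa using this
  have hfix : ∀ x, Top' J g K c V x = V x := by
    intro x
    have := Top_tendsto hJ hg hc (fun n => hWn (φ n)) hVmem hW x
    exact tendsto_nhds_unique this (hV x)
  have hV0 : V 0 = 1 / 2 := tendsto_nhds_unique (hW 0) (h0.comp hφ.tendsto_atTop)
  exact ⟨V, front_of_fixed hJ hg hc ⟨hVanti, hVmem⟩ hfix hV0⟩

/-- Weinberger-type construction: approximate fixed point below a supersolution. -/
theorem approx_of_super {J g : ℝ → ℝ} {K c : ℝ} (hJ : IsKernel J) (hg : GoodNL g K) (hc : 0 < c)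
    {S : ℝ → ℝ} (hS : Adm S) (hsup : ∀ x, Top' J g K c S x ≤ S x)
    (hSb : Tendsto S atBot (nhds 1)) (hSt : Tendsto S atTop (nhds 0))
    {ε : ℝ} (hε : 0 < ε) (hε1 : ε < 1) :
    ∃ W, Adm W ∧ (∀ x, |Top' J g K c W x - W x| ≤ ε) ∧ Top' J g K c W 0 = 1 / 2 := by
  have hKp : 0 < K := by linarith [hg.hK]
  -- shift the supersolution
  obtain ⟨b, hb⟩ := (hSb.eventually (lt_mem_nhds hε1)).exists
  set S' : ℝ → ℝ := fun x => S (x + b) with hS'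
  have hSA : Adm S' := adm_shift hS b
  have hS'sup : ∀ x, Top' J g K c S' x ≤ S' x := fun x => by
    rw [hS', Top_shift]; exact hsup _
  set φ : ℝ → ℝ := fun x => if x ≤ 0 then ε else 0 with hφ
  have hφ0 : ∀ x, 0 ≤ φ x := fun x => by simp only [hφ]; split_ifs <;> linarith
  have hφε : ∀ x, φ x ≤ ε := fun x => by simp only [hφ]; split_ifs <;> linarith
  have hφa : Antitone φ := by
    intro x y hxy
    simp only [hφ]
    split_ifs <;> linarith
  have hφS : ∀ x, φ x ≤ S' x := by
    intro x
    simp only [hφ]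
    split_ifs with h
    · exact hb.le.trans (hS.1 (by linarith))
    · exact (hSA.2 x).1
  -- Knaster–Tarski
  let C : Set (ℝ → ℝ) := {ψ | Adm ψ ∧ (∀ x, φ x ≤ ψ x) ∧ ∀ x, Top' J g K c ψ x ≤ ψ x}
  have hS'C : S' ∈ C := ⟨hSA, hφS, hS'sup⟩
  let W : ℝ → ℝ := fun x => sInf ((fun ψ : ℝ → ℝ => ψ x) '' C)
  have hbd : ∀ x, BddBelow ((fun ψ : ℝ → ℝ => ψ x) '' C) := fun x =>
    ⟨0, by rintro _ ⟨ψ, hψ, rfl⟩; exact (hψ.1.2 x).1⟩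
  have hne : ∀ x, ((fun ψ : ℝ → ℝ => ψ x) '' C).Nonempty := fun x => ⟨_, S', hS'C, rfl⟩
  have hWle : ∀ ψ ∈ C, ∀ x, W x ≤ ψ x := fun ψ hψ x => csInf_le (hbd x) ⟨ψ, hψ, rfl⟩
  have hleW : ∀ x a, (∀ ψ ∈ C, a ≤ ψ x) → a ≤ W x := fun x a h =>
    le_csInf (hne x) (by rintro _ ⟨ψ, hψ, rfl⟩; exact h ψ hψ)
  have hWA : Adm W := by
    refine ⟨fun x y hxy => hleW x _ (fun ψ hψ => (hWle ψ hψ y).trans (hψ.1.1 hxy)), fun x => ?_⟩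
    exact ⟨hleW x 0 (fun ψ hψ => (hψ.1.2 x).1), (hWle _ hS'C x).trans (hSA.2 x).2⟩
  have hφW : ∀ x, φ x ≤ W x := fun x => hleW x _ (fun ψ hψ => hψ.2.1 x)
  have hTW : ∀ x, Top' J g K c W x ≤ W x := fun x => hleW x _ (fun ψ hψ =>
    (Top_mono hJ hg hc hWA hψ.1 (fun z => hWle ψ hψ _)).trans (hψ.2.2 x))
  have hTA := Top_adm hJ hg hc hWA
  have hM : (fun x => max (φ x) (Top' J g K c W x)) ∈ C := by
    have hA : Adm (fun x => max (φ x) (Top' J g K c W x)) :=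
      ⟨fun x y hxy => max_le_max (hφa hxy) (hTA.1 hxy), fun x =>
        ⟨le_max_of_le_left (hφ0 x), max_le ((hφε x).trans hε1.le) (hTA.2 x).2⟩⟩
    refine ⟨hA, fun x => le_max_left _ _, fun x => le_max_of_le_right ?_⟩
    exact Top_mono hJ hg hc hA hWA (fun z => max_le (hφW _) (hTW _))
  have hWM : ∀ x, W x ≤ max (φ x) (Top' J g K c W x) := hWle _ hM
  have happ : ∀ x, |Top' J g K c W x - W x| ≤ ε := by
    intro x
    rw [abs_le]
    have h1 := hTW x
    have h2 : W x ≤ Top' J g K c W x + ε := (hWM x).trans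
      (max_le (by linarith [hφε x, (hTA.2 x).1]) (by linarith))
    constructor <;> linarith
  -- limit at -∞
  obtain ⟨l, hl, ht, hle⟩ := adm_lim_bot hWA
  have h1 := Top_lim hJ hg hc hWA hl (a := fun n => -(n:ℝ)) (fun x => ht.comp (shift_bot x))
  have h2 : Tendsto (fun n : ℕ => W (-(n:ℝ))) atTop (nhds l) := by
    simpa [Function.comp_def] using ht.comp (shift_bot 0)
  have h3 := le_of_tendsto_of_tendsto' h1 h2 (fun n => hTW _)
  have hl1 : l = 1 := by
    by_contra hne
    have h4 : ε ≤ l := by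
      have := (hφW 0).trans (hle 0)
      simpa [hφ] using this
    have := hg.pos l ⟨by linarith, lt_of_le_of_ne hl.2 hne⟩
    have := div_pos this hKp
    linarith
  rw [hl1, hg.g1] at h1
  obtain ⟨n, hn⟩ := (h1.eventually (lt_mem_nhds (show (1/2:ℝ) < 1 + 0 / K by norm_num))).exists
  -- limit at +∞
  have h5 : Tendsto S' atTop (nhds 0) := hSt.comp (tendsto_atTop_add_const_right _ _ tendsto_id)
  obtain ⟨m, hm⟩ := (h5.eventually (gt_mem_nhds (show (0:ℝ) < 1/2 by norm_num))).exists
  have hm' : Top' J g K c W m < 1 / 2 := ((hTW m).trans (hWle _ hS'C m)).trans_lt hm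
  have hTc : Continuous (Top' J g K c W) := by
    have hl : LipschitzWith (Real.toNNReal (K / c)) (Top' J g K c W) := by
      refine LipschitzWith.of_dist_le_mul (fun x y => ?_)
      rw [Real.dist_eq, Real.dist_eq, Real.coe_toNNReal _ (by positivity)]
      exact Top_lip hJ hg hc hWA x y
    exact hl.continuous
  obtain ⟨p, hp⟩ := mem_range_of_exists_le_of_exists_ge hTc ⟨m, hm'.le⟩ ⟨_, hn.le⟩
  refine ⟨fun x => W (x + p), adm_shift hWA p, fun x => ?_, ?_⟩
  · rw [Top_shift]; exact happ _
  · rw [Top_shift, zero_add, hp]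

theorem front_of_super {J g g' : ℝ → ℝ} {K c : ℝ} (hJ : IsKernel J) (hg : GoodNL g K)
    (hc : 0 < c) {S : ℝ → ℝ} (h : IsNLFront J g' c S)
    (hle : ∀ w ∈ Icc (0:ℝ) 1, g w ≤ g' w) : ∃ V, IsNLFront J g c V := by
  have key := fun n : ℕ => approx_of_super hJ hg hc (front_bounds h)
    (front_super hJ hg hc h hle) h.2.2.1 h.2.2.2.1
    (ε := 1 / ((n:ℝ) + 2)) (by positivity)
    (by rw [div_lt_one (by positivity)]; linarith [(Nat.cast_nonneg n : (0:ℝ) ≤ n)])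
  choose Wn hA happ h0 using key
  have hε : Tendsto (fun n : ℕ => 1 / ((n:ℝ) + 2)) atTop (nhds 0) := by
    have h1 : Tendsto (fun n : ℕ => (n:ℝ) + 2) atTop atTop :=
      tendsto_atTop_add_const_right _ _ tendsto_natCast_atTop_atTop
    simpa using h1.const_div_atTop 1
  refine front_of_approx hJ hg hc hA hε happ ?_
  have h1 : Tendsto (fun n => Top' J g K c (Wn n) 0 - Wn n 0) atTop (nhds 0) :=
    squeeze_zero_norm (fun n => happ n 0) hε
  have h2 := (tendsto_const_nhds (x := (1/2:ℝ)) (f := (atTop : Filter ℕ))).sub h1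
  simpa [h0] using h2

theorem front_normalise {J g : ℝ → ℝ} {c : ℝ} {W : ℝ → ℝ} (h : IsNLFront J g c W) :
    ∃ V, IsNLFront J g c V ∧ V 0 = 1 / 2 := by
  have hc : Continuous W := h.1.continuous
  obtain ⟨a, ha⟩ := (h.2.2.1.eventually (lt_mem_nhds (show (1/2:ℝ) < 1 by norm_num))).exists
  obtain ⟨b, hb⟩ := (h.2.2.2.1.eventually (gt_mem_nhds (show (0:ℝ) < 1/2 by norm_num))).exists
  obtain ⟨p, hp⟩ := mem_range_of_exists_le_of_exists_ge hc ⟨b, hb.le⟩ ⟨a, ha.le⟩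
  refine ⟨fun x => W (x + p), ⟨?_, ?_, ?_, ?_, ?_⟩, by simpa using hp⟩
  · exact h.1.comp (contDiff_id.add contDiff_const)
  · intro ξ
    have := h.2.1 (ξ + p)
    rw [conv_eq] at this ⊢
    rw [deriv_comp_add_const]
    have e : ∀ z, ξ - z + p = ξ + p - z := fun z => by ring
    simp only [e]
    exact this
  · exact h.2.2.1.comp (tendsto_atBot_add_const_right _ _ tendsto_id)
  · exact h.2.2.2.1.comp (tendsto_atTop_add_const_right _ _ tendsto_id)
  · intro ξ
    rw [deriv_comp_add_const]
    exact h.2.2.2.2 _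

theorem c0star_nonneg {J : ℝ → ℝ} (hJ : IsKernel J) {γ₀ : ℝ} (hγ : 0 < γ₀) :
    0 ≤ c0star J γ₀ := by
  refine Real.sInf_nonneg ?_
  rintro _ ⟨l, hl, rfl⟩
  have hl : 0 < l := hl
  have hi : ∀ m : ℝ, Integrable (fun x => J x * Real.exp (m * x)) := fun m => by
    refine Continuous.integrable_of_hasCompactSupport ?_ ?_
    · have := hJ.1; fun_prop
    · exact hJ.2.2.2.1.mul_right
  have h1 : (∫ x, J x * Real.exp (l * x)) = ∫ x, J x * Real.exp (-l * x) := by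
    rw [← integral_neg_eq_self]
    congr 1; ext x
    rw [hJ.2.2.1]; congr 2; ring
  have h2 : (∫ x, J x * 2) ≤ ∫ x, (J x * Real.exp (l * x) + J x * Real.exp (-l * x)) := by
    refine integral_mono (hJ.int.mul_const 2) ((hi l).add (hi (-l))) (fun x => ?_)
    have h3 := Real.add_one_le_exp (l * x)
    have h4 := Real.add_one_le_exp (-l * x)
    have := hJ.2.1 x
    simp only
    rw [← mul_add]
    exact mul_le_mul_of_nonneg_left (by linarith) this
  rw [integral_mul_const, hJ.2.2.2.2, integral_add (hi l) (hi (-l)), ← h1] at h2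
  refine div_nonneg ?_ hl.le
  linarith

theorem goodNL_exists {g : ℝ → ℝ} (h : ContDiffOn ℝ 2 g (Icc 0 1)) (g0 : g 0 = 0) (g1 : g 1 = 0)
    (hpos : ∀ w ∈ Ioo (0:ℝ) 1, 0 < g w) : ∃ K, GoodNL g K := by
  have hd : ContinuousOn (derivWithin g (Icc 0 1)) (Icc 0 1) :=
    h.continuousOn_derivWithin (uniqueDiffOn_Icc one_pos) (by norm_num)
  obtain ⟨M, hM⟩ := isCompact_Icc.exists_bound_of_continuousOn hd
  have hM0 : 0 ≤ M := (norm_nonneg _).trans (hM 0 (by simp))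
  refine ⟨M + 1, by linarith, g0, g1, hpos, h.continuousOn, ?_⟩
  intro x hx y hy hxy
  have := (convex_Icc (0:ℝ) 1).norm_image_sub_le_of_norm_derivWithin_le
    (h.differentiableOn (by norm_num)) hM hx hy
  rw [Real.norm_eq_abs, Real.norm_eq_abs, abs_of_nonneg (by linarith : 0 ≤ y - x), abs_le] at this
  simp only
  nlinarith [this.1]

/-- Under (A1)-(A3) and (A6)-(A7) there is a threshold `q* ∈ [q₁, q₂)` such that the minimal
nonlocal speed equals `c₀*` on `[0, q*]` and is `> c₀*` on `(q*, ∞)`. -/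
theorem threshold_exists_nonlocal
    (J : ℝ → ℝ) (hJ : IsKernel J)
    (f : ℝ → ℝ → ℝ) (γ₀ : ℝ) (hγ₀ : 0 < γ₀)
    (cNL : ℝ → ℝ) (q₁ q₂ : ℝ)
    -- (A1) monostable condition, with ∂_w f(0;q) = γ₀ for all q
    (hA1 : ∀ q, 0 ≤ q →
      ContDiffOn ℝ 2 (fun w => f w q) (Icc 0 1) ∧
      f 0 q = 0 ∧ f 1 q = 0 ∧
      derivWithin (fun w => f w q) (Icc 0 1) 0 = γ₀ ∧
      derivWithin (fun w => f w q) (Icc 0 1) 1 < 0 ∧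
      (∀ w ∈ Ioo (0:ℝ) 1, 0 < f w q))
    -- (A2) Lipschitz continuity in the parameter, for f, f', f''
    (hA2 : ∃ L₀ > (0:ℝ), ∀ n : ℕ, n ≤ 2 → ∀ w ∈ Icc (0:ℝ) 1, ∀ qa qb : ℝ, 0 ≤ qa → 0 ≤ qb →
      |iteratedDerivWithin n (fun w => f w qa) (Icc 0 1) w -
        iteratedDerivWithin n (fun w => f w qb) (Icc 0 1) w| ≤ L₀ * |qa - qb|)
    -- (A3) monotonicity condition
    (hA3 : ∀ q qh : ℝ, 0 ≤ q → q < qh →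
      (∀ w ∈ Ioo (0:ℝ) 1, f w q < f w qh) ∧
      iteratedDerivWithin 2 (fun w => f w q) (Icc 0 1) 0 <
        iteratedDerivWithin 2 (fun w => f w qh) (Icc 0 1) 0)
    -- minimal-speed characterization: fronts exist exactly for speeds c ≥ c_NL*(q) ≥ c₀*
    (hmin : ∀ q, 0 ≤ q → c0star J γ₀ ≤ cNL q ∧
      ∀ c, (∃ W : ℝ → ℝ, IsNLFront J (fun w => f w q) c W) ↔ cNL q ≤ c)
    -- (A6) KPP condition at q₁, hence linear selection there
    (hq₁ : 0 < q₁) (hA6 : ∀ w ∈ Icc (0:ℝ) 1, f w q₁ ≤ γ₀ * w)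
    (hc₁ : cNL q₁ = c0star J γ₀)
    -- (A7) nonlinear selection at some q₂ > q₁
    (hq₂ : q₁ < q₂) (hc₂ : c0star J γ₀ < cNL q₂) :
    ∃ qstar : ℝ, q₁ ≤ qstar ∧ qstar < q₂ ∧
      (∀ q, 0 ≤ q → q ≤ qstar → cNL q = c0star J γ₀) ∧
      (∀ q, qstar < q → c0star J γ₀ < cNL q) := by
  have hgood : ∀ q, 0 ≤ q → ∃ K, GoodNL (fun w => f w q) K := fun q hq =>
    goodNL_exists (hA1 q hq).1 (hA1 q hq).2.1 (hA1 q hq).2.2.1 (hA1 q hq).2.2.2.2.2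
  have hc0 := c0star_nonneg hJ hγ₀
  -- monotonicity
  have hmono : ∀ q q', 0 ≤ q → q < q' → cNL q' = c0star J γ₀ → cNL q = c0star J γ₀ := by
    intro q q' hq hqq h
    refine le_antisymm ?_ (hmin q hq).1
    refine le_of_forall_gt_imp_ge_of_dense (fun c hc => ?_)
    obtain ⟨K, hK⟩ := hgood q hq
    obtain ⟨S, hS⟩ := ((hmin q' (hq.trans hqq.le)).2 c).2 (by linarith)
    refine ((hmin q hq).2 c).1 (front_of_super hJ hK (by linarith) hS ?_)
    intro w hw
    have hq' := hq.trans hqq.le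
    rcases eq_or_lt_of_le hw.1 with h0 | h0
    · rw [← h0]; simp only [(hA1 q hq).2.1, (hA1 q' hq').2.1, le_refl]
    rcases eq_or_lt_of_le hw.2 with h1 | h1
    · rw [h1]; simp only [(hA1 q hq).2.2.1, (hA1 q' hq').2.2.1, le_refl]
    exact ((hA3 q q' hq hqq).1 w ⟨h0, h1⟩).le
  obtain ⟨L₀, hL₀, hL⟩ := hA2
  -- closedness
  have hclosed : ∀ q, 0 < q → (∀ q', 0 ≤ q' → q' < q → cNL q' = c0star J γ₀) →
      cNL q = c0star J γ₀ := by
    intro q hq h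
    refine le_antisymm ?_ (hmin q hq.le).1
    refine le_of_forall_gt_imp_ge_of_dense (fun c hc => ?_)
    obtain ⟨K, hK⟩ := hgood q hq.le
    have hKp : 0 < K := by linarith [hK.hK]
    refine ((hmin q hq.le).2 c).1 ?_
    have hcp : 0 < c := by linarith
    have hqn : ∀ n : ℕ, 0 ≤ q - q / ((n:ℝ) + 1) ∧ q - q / ((n:ℝ) + 1) < q := by
      intro n
      have h1 : (0:ℝ) < (n:ℝ) + 1 := by positivity
      have h2 : q / ((n:ℝ) + 1) ≤ q := div_le_self hq.le (by
        linarith [(Nat.cast_nonneg n : (0:ℝ) ≤ n)])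
      have h3 : 0 < q / ((n:ℝ) + 1) := by positivity
      constructor <;> linarith
    have hex : ∀ n : ℕ, ∃ V, IsNLFront J (fun w => f w (q - q / ((n:ℝ) + 1))) c V ∧
        V 0 = 1 / 2 := by
      intro n
      obtain ⟨V, hV⟩ := ((hmin _ (hqn n).1).2 c).2 (by
        rw [h _ (hqn n).1 (hqn n).2]; exact hc.le)
      exact front_normalise hV
    choose Wn hWn hW0 using hex
    refine front_of_approx hJ hK hcp (fun n => front_bounds (hWn n))
      (ε := fun n : ℕ => L₀ * (q / ((n:ℝ) + 1)) / K) ?_ ?_ ?_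
    · have h1 : Tendsto (fun n : ℕ => (n:ℝ) + 1) atTop atTop :=
        tendsto_atTop_add_const_right _ _ tendsto_natCast_atTop_atTop
      have h2 := ((h1.const_div_atTop q).const_mul L₀).div_const K
      simpa using h2
    · intro n x
      refine front_approx hJ hK hcp (hWn n) ?_ x
      intro w hw
      have := hL 0 (by norm_num) w hw q _ hq.le (hqn n).1
      simp only [iteratedDerivWithin_zero] at this
      refine this.trans (le_of_eq ?_)
      congr 1
      rw [sub_sub_cancel, abs_of_pos (by positivity)]
    · simp only [hW0]; exact tendsto_const_nhds
  -- the threshold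
  set A : Set ℝ := {q | 0 ≤ q ∧ cNL q = c0star J γ₀} with hA
  have hq₁A : q₁ ∈ A := ⟨hq₁.le, hc₁⟩
  have hub : ∀ q ∈ A, q ≤ q₂ := by
    intro q hq
    by_contra hlt
    have := hmono q₂ q (by linarith) (not_le.1 hlt) hq.2
    linarith
  have hbdd : BddAbove A := ⟨q₂, hub⟩
  have hle : q₁ ≤ sSup A := le_csSup hbdd hq₁A
  have hbelow : ∀ q', 0 ≤ q' → q' < sSup A → cNL q' = c0star J γ₀ := by
    intro q' h0 h
    obtain ⟨p, hp, hlt⟩ := exists_lt_of_lt_csSup ⟨q₁, hq₁A⟩ h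
    exact hmono q' p h0 hlt hp.2
  have hstar : cNL (sSup A) = c0star J γ₀ := hclosed _ (by linarith) hbelow
  refine ⟨sSup A, hle, ?_, ?_, ?_⟩
  · refine lt_of_le_of_ne (csSup_le ⟨q₁, hq₁A⟩ hub) ?_
    intro h
    rw [h] at hstar
    linarith
  · intro q h0 h
    rcases eq_or_lt_of_le h with h | h
    · rw [h]; exact hstar
    · exact hbelow q h0 h
  · intro q h
    have h0 : 0 ≤ q := by linarith
    refine lt_of_le_of_ne (hmin q h0).1 ?_
    intro he
    have := le_csSup hbdd (show q ∈ A from ⟨h0, he.symm⟩)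
    linarith
end
end

section
/- Let c > 0 and β < 0, and define I₁(μ) := ∫_ℝ J(y)e^{μy}dy + β − 1 for μ ≥ 0. Then the equation cμ = I₁(μ) admits exactly one positive root μ > 0. -/
open Filter Asymptotics MeasureTheory Set

noncomputable section

theorem exp_sum_lower (t : ℝ) : 2 + t ^ 2 / 2 ≤ Real.exp t + Real.exp (-t) := by
  rcases le_total 0 t with h | h
  · have h1 := Real.quadratic_le_exp_of_nonneg h
    have h2 := Real.add_one_le_exp (-t)
    linarith
  · have h1 := Real.quadratic_le_exp_of_nonneg (neg_nonneg.mpr h)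
    have h2 := Real.add_one_le_exp t
    nlinarith

/-- For `c > 0` and `β < 0`, the equation `cμ = ∫ J(y) e^{μy} dy + β - 1`
admits exactly one positive root. -/
theorem unique_positive_root
    (J : ℝ → ℝ) (hJ : IsKernel J) (hJne : ∃ x, J x ≠ 0)
    (c β : ℝ) (hc : 0 < c) (hβ : β < 0) :
    ∃! μ : ℝ, 0 < μ ∧ c * μ = (∫ y, J y * Real.exp (μ * y)) + β - 1 := by
  obtain ⟨hcont, hnn, heven, hsupp, hint⟩ := hJ
  have hI : ∀ g : ℝ → ℝ, Continuous g → Integrable (fun y => J y * g y) := fun g hg =>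
    (hcont.mul hg).integrable_of_hasCompactSupport hsupp.mul_right
  have hIe : ∀ m : ℝ, Integrable (fun y => J y * Real.exp (m * y)) := fun m =>
    hI _ (by fun_prop)
  set M : ℝ → ℝ := fun m => ∫ y, J y * Real.exp (m * y) with hM
  have hM0 : M 0 = 1 := by simp [hM, hint]
  have hconv : ConvexOn ℝ univ M := by
    refine ⟨convex_univ, fun a _ b _ s t hs ht hst => ?_⟩
    simp only [hM, smul_eq_mul]
    rw [← integral_const_mul, ← integral_const_mul,
      ← integral_add ((hIe a).const_mul s) ((hIe b).const_mul t)]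
    refine integral_mono (hIe _) (((hIe a).const_mul s).add ((hIe b).const_mul t)) fun y => ?_
    have h := convexOn_exp.2 (mem_univ (a * y)) (mem_univ (b * y)) hs ht hst
    simp only [smul_eq_mul] at h
    have h2 := mul_le_mul_of_nonneg_left h (hnn y)
    have e : (s * a + t * b) * y = s * (a * y) + t * (b * y) := by ring
    simp only [Pi.add_apply]
    rw [e]
    linarith
  have hMc : Continuous M := by
    rw [← continuousOn_univ]
    exact hconv.continuousOn isOpen_univ
  have hsym : ∀ m, M (-m) = M m := by
    intro m
    simp only [hM]
    rw [← integral_neg_eq_self]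
    simp [heven]
  set K := ∫ y, J y * y ^ 2 with hK
  have hIK : Integrable (fun y => J y * y ^ 2) := hI _ (by fun_prop)
  have hJi : Integrable J := hcont.integrable_of_hasCompactSupport hsupp
  have hKnn : ∀ y, 0 ≤ J y * y ^ 2 := fun y => mul_nonneg (hnn y) (sq_nonneg y)
  have hKpos : 0 < K := by
    refine lt_of_le_of_ne (integral_nonneg hKnn) fun h0 => ?_
    have h1 := (integral_eq_zero_iff_of_nonneg hKnn hIK).1 h0.symm
    have h2 : J =ᵐ[volume] 0 := by
      have h3 : ∀ᵐ y : ℝ, y ≠ 0 := by simp [ae_iff]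
      filter_upwards [h1, h3] with y hy hy0
      simpa [hy0] using hy
    rw [integral_congr_ae h2] at hint
    simp at hint
  have hlow : ∀ m, 2 + m ^ 2 / 2 * K ≤ 2 * M m := by
    intro m
    have e1 : 2 * M m = ∫ y, (J y * Real.exp (m * y) + J y * Real.exp (-m * y)) := by
      rw [integral_add (hIe m) (hIe (-m))]
      have := hsym m
      simp only [hM] at this ⊢
      rw [this]; ring
    have e2 : 2 + m ^ 2 / 2 * K = ∫ y, (2 * J y + m ^ 2 / 2 * (J y * y ^ 2)) := by
      rw [integral_add (hJi.const_mul _) (hIK.const_mul _), integral_const_mul,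
        integral_const_mul, hint, mul_one]
    rw [e1, e2]
    refine integral_mono ((hJi.const_mul _).add (hIK.const_mul _))
      ((hIe m).add (hIe (-m))) fun y => ?_
    have h := mul_le_mul_of_nonneg_left (exp_sum_lower (m * y)) (hnn y)
    have e : -m * y = -(m * y) := by ring
    simp only [e]
    linarith
  change ∃! μ : ℝ, 0 < μ ∧ c * μ = M μ + β - 1
  have huniq : ∀ a b, 0 < a → a < b → c * a = M a + β - 1 → c * b = M b + β - 1 → False := by
    intro a b ha hab h1 h2
    have hb : 0 < b := ha.trans hab
    have h := hconv.2 (mem_univ 0) (mem_univ b)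
      (show (0 : ℝ) ≤ 1 - a / b by rw [sub_nonneg, div_le_one hb]; exact hab.le)
      (show (0 : ℝ) ≤ a / b by positivity) (by ring)
    have e : a / b * b = a := by field_simp
    simp only [smul_eq_mul, mul_zero, zero_add, e, hM0] at h
    have hlt : a / b < 1 := (div_lt_one hb).2 hab
    have e3 : M b = c * b - β + 1 := by linarith
    have e4 : a / b * M b = c * a + a / b * (1 - β) := by
      rw [e3]; linear_combination c * e
    nlinarith
  obtain ⟨m, hm0, hm⟩ : ∃ m, 0 < m ∧ 0 ≤ M m + β - 1 - c * m := by
    have hp : 0 < (4 * c + 4) / K := by positivity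
    refine ⟨(4 * c + 4) / K + -β, by linarith, ?_⟩
    set m := (4 * c + 4) / K + -β with hmdef
    have h1 : 4 * c + 4 ≤ m * K := by
      rw [hmdef, add_mul, div_mul_cancel₀ _ hKpos.ne']
      nlinarith
    have h2 : -β ≤ m := by linarith
    have h3 := hlow m
    have h4 : m * (4 * c + 4) ≤ m * (m * K) := mul_le_mul_of_nonneg_left h1 (by linarith)
    nlinarith
  have hF : ContinuousOn (fun x => M x + β - 1 - c * x) (Icc 0 m) := by fun_prop
  obtain ⟨r, hr, hr0⟩ := intermediate_value_Icc hm0.le hF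
    (show (0 : ℝ) ∈ Icc _ _ from ⟨by simp only [hM0]; linarith, hm⟩)
  simp only at hr0
  have hrpos : 0 < r := by
    refine lt_of_le_of_ne hr.1 fun h => ?_
    rw [← h, hM0] at hr0
    linarith
  refine ⟨r, ⟨hrpos, by linarith⟩, ?_⟩
  rintro s ⟨hs, hs2⟩
  rcases lt_trichotomy s r with h | h | h
  · exact (huniq s r hs h hs2 (by linarith)).elim
  · exact h
  · exact (huniq r s hrpos h (by linarith) hs2).elim
end
end

section
/- Let a ∈ ℝ and let Ŵ : (a,∞) → (0,∞) be a positive C² function satisfying Ŵ''(ξ) + 2Ŵ'(ξ) + Ŵ(ξ) + 𝒥(ξ) = 0 for all ξ > a, where 𝒥 = 𝒥₁ + 𝒥₂ with 𝒥₁(ξ) = o(Ŵ(ξ)) as ξ → +∞, and there exist constants κ₁ ≥ κ₂ > 0 and ξ̄ > a such that κ₂ e^{−2ξ} ≤ 𝒥₂(ξ) ≤ κ₁ e^{−2ξ} for all ξ ≥ ξ̄. Then 𝒥₂(ξ) = o(Ŵ(ξ)) as ξ → +∞ (and consequently 𝒥(ξ) = o(Ŵ(ξ)) as ξ → +∞).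 -/
open Filter Asymptotics MeasureTheory Set

noncomputable section

/-- Antitonicity on a half line from a `HasDerivAt` bound. -/
lemma antitone_aux (f f' : ℝ → ℝ) (X : ℝ) (h : ∀ x, X ≤ x → HasDerivAt f (f' x) x)
    (h0 : ∀ x, X ≤ x → f' x ≤ 0) : AntitoneOn f (Ici X) := by
  apply antitoneOn_of_deriv_nonpos (convex_Ici X)
  · exact fun x hx => (h x hx).continuousAt.continuousWithinAt
  · intro x hx
    rw [interior_Ici] at hx
    exact (h x (le_of_lt hx)).differentiableAt.differentiableWithinAt
  · intro x hx
    rw [interior_Ici] at hx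
    rw [(h x (le_of_lt hx)).deriv]
    exact h0 x (le_of_lt hx)

/-- If a positive `C²` function `Ŵ` on `(a,∞)` solves `Ŵ'' + 2Ŵ' + Ŵ + 𝒥 = 0` with
`𝒥 = 𝒥₁ + 𝒥₂`, `𝒥₁ = o(Ŵ)` and `κ₂ e^{-2ξ} ≤ 𝒥₂(ξ) ≤ κ₁ e^{-2ξ}` for large `ξ`,
then `𝒥₂ = o(Ŵ)` (hence `𝒥 = o(Ŵ)`) as `ξ → +∞`. -/
theorem littleo_of_forcing_scalar
    (a : ℝ) (W J1 J2 : ℝ → ℝ)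
    (hW2 : ContDiffOn ℝ 2 W (Ioi a))
    (hWpos : ∀ ξ ∈ Ioi a, 0 < W ξ)
    (hJ1c : ContinuousOn J1 (Ioi a)) (hJ2c : ContinuousOn J2 (Ioi a))
    (heq : ∀ ξ ∈ Ioi a, deriv (deriv W) ξ + 2 * deriv W ξ + W ξ + (J1 ξ + J2 ξ) = 0)
    (hJ1o : Tendsto (fun ξ => J1 ξ / W ξ) atTop (nhds 0))
    (κ₁ κ₂ ξb : ℝ) (hκ₂ : 0 < κ₂) (hκ : κ₂ ≤ κ₁) (hξb : a < ξb)
    (hJ2b : ∀ ξ, ξb ≤ ξ →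
      κ₂ * Real.exp (-(2 * ξ)) ≤ J2 ξ ∧ J2 ξ ≤ κ₁ * Real.exp (-(2 * ξ))) :
    Tendsto (fun ξ => J2 ξ / W ξ) atTop (nhds 0) ∧
    Tendsto (fun ξ => (J1 ξ + J2 ξ) / W ξ) atTop (nhds 0) := by
  have hd1 : ∀ x, a < x → HasDerivAt W (deriv W x) x := fun x hx =>
    ((hW2.differentiableOn (by norm_num)).differentiableAt (Ioi_mem_nhds hx)).hasDerivAt
  have hd2 : ∀ x, a < x → HasDerivAt (deriv W) (deriv (deriv W) x) x := by
    intro x hx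
    have h : ContDiffOn ℝ 1 (deriv W) (Ioi a) :=
      hW2.deriv_of_isOpen isOpen_Ioi (by norm_num)
    exact ((h.differentiableOn (by norm_num)).differentiableAt (Ioi_mem_nhds hx)).hasDerivAt
  have hexp : ∀ c x : ℝ, HasDerivAt (fun y => Real.exp (c * y)) (c * Real.exp (c * x)) x := by
    intro c x
    have := ((hasDerivAt_id x).const_mul c).exp
    simpa [mul_comm] using this
  have hev : ∀ᶠ x in atTop, -(1 / 4 : ℝ) < J1 x / W x :=
    hJ1o.eventually (lt_mem_nhds (by norm_num))
  obtain ⟨X0, hX0⟩ := eventually_atTop.1 hev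
  obtain ⟨X, hXX0, hXb⟩ : ∃ X, X0 ≤ X ∧ ξb ≤ X := ⟨max X0 ξb, le_max_left _ _, le_max_right _ _⟩
  have haX : ∀ x, X ≤ x → a < x := fun x hx => by linarith
  have hJ : ∀ x, X ≤ x → -(1 / 4) * W x ≤ J1 x + J2 x := by
    intro x hx
    have h1 := hX0 x (hXX0.trans hx)
    have h2 := (hJ2b x (hXb.trans hx)).1
    have h3 : 0 < κ₂ * Real.exp (-(2 * x)) := by positivity
    rw [lt_div_iff₀ (hWpos x (haX x hx))] at h1
    linarith
  have hQ : AntitoneOn (fun x => Real.exp (1 / 2 * x) * (deriv W x + 3 / 2 * W x)) (Ici X) := by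
    refine antitone_aux _ _ X (fun x hx => (hexp (1 / 2) x).mul
      ((hd2 x (haX x hx)).add ((hd1 x (haX x hx)).const_mul (3 / 2)))) ?_
    intro x hx
    have h1 := hJ x hx
    have h2 := heq x (haX x hx)
    have h3 := Real.exp_pos (1 / 2 * x)
    have h4 : 1 / 2 * (deriv W x + 3 / 2 * W x) + (deriv (deriv W) x + 3 / 2 * deriv W x) ≤ 0 := by
      linarith
    have := mul_nonpos_of_nonneg_of_nonpos h3.le h4
    linarith
  have hV : ∀ x, X ≤ x → HasDerivAt (fun y => Real.exp (3 / 2 * y) * W y)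
      (Real.exp (3 / 2 * x) * (deriv W x + 3 / 2 * W x)) x := by
    intro x hx
    exact ((hexp (3 / 2) x).mul (hd1 x (haX x hx))).congr_deriv (by ring)
  have hQ0 : ∀ x, X ≤ x → 0 ≤ deriv W x + 3 / 2 * W x := by
    intro z hz
    by_contra! hneg
    obtain ⟨c, hc⟩ : ∃ c, c = -(Real.exp (3 / 2 * z) * (deriv W z + 3 / 2 * W z)) := ⟨_, rfl⟩
    have hcpos : 0 < c := by
      have := mul_neg_of_pos_of_neg (Real.exp_pos (3 / 2 * z)) hneg
      linarith
    have hanti : AntitoneOn (fun y => Real.exp (3 / 2 * y) * W y + c * y) (Ici z) := by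
      refine antitone_aux _ _ z (fun x hx => (hV x (hz.trans hx)).add
        ((hasDerivAt_id x).const_mul c)) ?_
      intro x hx
      have h1 := hQ (mem_Ici.2 hz) (mem_Ici.2 (hz.trans hx)) hx
      simp only at h1
      have e1 : Real.exp (3 / 2 * x) = Real.exp x * Real.exp (1 / 2 * x) := by
        rw [← Real.exp_add]; ring_nf
      have e2 : Real.exp (3 / 2 * z) = Real.exp z * Real.exp (1 / 2 * z) := by
        rw [← Real.exp_add]; ring_nf
      have h2 : Real.exp z ≤ Real.exp x := Real.exp_le_exp.2 hx
      have h3 := mul_le_mul_of_nonneg_left h1 (Real.exp_pos x).le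
      have h4 := mul_le_mul_of_nonpos_right h2
        (mul_neg_of_pos_of_neg (Real.exp_pos (1 / 2 * z)) hneg).le
      rw [e2] at hc
      rw [e1]
      linarith
    obtain ⟨M, hM⟩ : ∃ M, M = Real.exp (3 / 2 * z) * W z := ⟨_, rfl⟩
    have hMpos : 0 < M := by
      rw [hM]; exact mul_pos (Real.exp_pos _) (hWpos z (haX z hz))
    have hle : z ≤ z + M / c := by
      have := div_pos hMpos hcpos
      linarith
    have h1 := hanti (mem_Ici.2 le_rfl) (mem_Ici.2 hle) hle
    simp only at h1
    have h2 : c * (z + M / c) = c * z + M := by field_simp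
    have h3 := mul_pos (Real.exp_pos (3 / 2 * (z + M / c)))
      (hWpos _ (haX _ (hz.trans hle)))
    rw [h2, ← hM] at h1
    linarith
  obtain ⟨m, hm⟩ : ∃ m, m = Real.exp (3 / 2 * X) * W X := ⟨_, rfl⟩
  have hmpos : 0 < m := by
    rw [hm]; exact mul_pos (Real.exp_pos _) (hWpos X (haX X le_rfl))
  have hlow : ∀ x, X ≤ x → m ≤ Real.exp (3 / 2 * x) * W x := by
    intro x hx
    have hanti := antitone_aux _ _ X (fun x hx => (hV x hx).neg) (fun x hx => by
      have := mul_nonneg (Real.exp_pos (3 / 2 * x)).le (hQ0 x hx)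
      linarith)
    have h1 := hanti (mem_Ici.2 le_rfl) (mem_Ici.2 hx) hx
    simp only [Pi.neg_apply] at h1
    linarith
  have main : Tendsto (fun ξ => J2 ξ / W ξ) atTop (nhds 0) := by
    have hlim : Tendsto (fun x : ℝ => κ₁ / m * Real.exp (-(1 / 2 * x))) atTop (nhds 0) := by
      have h1 : Tendsto (fun x : ℝ => 1 / 2 * x) atTop atTop :=
        tendsto_id.const_mul_atTop (by norm_num)
      have h2 := (Real.tendsto_exp_neg_atTop_nhds_zero.comp h1).const_mul (κ₁ / m)
      simpa using h2
    refine squeeze_zero' ?_ ?_ hlim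
    · filter_upwards [eventually_ge_atTop X] with x hx
      have h2 := (hJ2b x (hXb.trans hx)).1
      have h3 : 0 < κ₂ * Real.exp (-(2 * x)) := by positivity
      exact div_nonneg (by linarith) (hWpos x (haX x hx)).le
    · filter_upwards [eventually_ge_atTop X] with x hx
      have h2 := (hJ2b x (hXb.trans hx)).2
      have hκ1 : 0 < κ₁ := by linarith
      rw [div_le_iff₀ (hWpos x (haX x hx))]
      refine h2.trans ?_
      have e : Real.exp (-(1 / 2 * x)) = Real.exp (-(2 * x)) * Real.exp (3 / 2 * x) := by
        rw [← Real.exp_add]; ring_nf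
      have h4 := mul_le_mul_of_nonneg_left (hlow x hx)
        (show 0 ≤ κ₁ / m * Real.exp (-(2 * x)) by positivity)
      have h5 : κ₁ / m * Real.exp (-(2 * x)) * m = κ₁ * Real.exp (-(2 * x)) := by
        field_simp
      rw [e]
      linarith
  refine ⟨main, ?_⟩
  have := hJ1o.add main
  simpa [add_div] using this
end
end

section
/- Assume c_NL*(q) = c₀*. Then the minimal nonlocal traveling wave 𝒲_q satisfies lim_{ξ→+∞} 𝒲_q'(ξ)/𝒲_q(ξ) = −λ₀. -/
open Filter Asymptotics MeasureTheory Set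

noncomputable section

lemma kernel_supp {J : ℝ → ℝ} (hJ : IsKernel J) : ∃ R > 0, ∀ y, R < |y| → J y = 0 := by
  obtain ⟨-, -, -, hs, -⟩ := hJ
  obtain ⟨R, hR⟩ := hs.isCompact.isBounded.exists_norm_le
  refine ⟨max R 1, by positivity, fun y hy => ?_⟩
  by_contra h
  have := hR y (subset_tsupport J h)
  rw [Real.norm_eq_abs] at this
  linarith [le_max_left R 1]

lemma kernel_lower {J : ℝ → ℝ} (hJ : IsKernel J) :
    ∃ a b j : ℝ, 0 < a ∧ a < b ∧ 0 < j ∧ ∀ y ∈ Icc a b, j ≤ J y := by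
  obtain ⟨hc, h0, he, hs, h1⟩ := hJ
  have hex : ∃ x, 0 < x ∧ 0 < J x := by
    by_contra hcon
    push Not at hcon
    have hz : ∀ x, 0 < x → J x = 0 := fun x hx => le_antisymm (hcon x hx) (h0 x)
    have hz' : ∀ᵐ x : ℝ, J x = 0 := by
      have : ∀ᵐ x : ℝ, x ≠ 0 := by
        simp [ae_iff]
      filter_upwards [this] with x hx
      rcases lt_or_gt_of_ne hx with h | h
      · rw [← he]; exact hz _ (by linarith)
      · exact hz _ h
    rw [integral_eq_zero_of_ae hz'] at h1
    norm_num at h1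
  obtain ⟨x, hx, hJx⟩ := hex
  have : ∀ᶠ y in nhds x, J x / 2 < J y := hc.continuousAt.eventually (lt_mem_nhds (by linarith))
  obtain ⟨ε, hε, hb⟩ := Metric.eventually_nhds_iff.1 this
  refine ⟨x, x + ε / 2, J x / 2, hx, by linarith, by linarith, fun y hy => (hb ?_).le⟩
  rw [Real.dist_eq, abs_lt]
  constructor <;> linarith [hy.1, hy.2]

lemma kernel_integrable {J : ℝ → ℝ} (hJ : IsKernel J) {g : ℝ → ℝ} (hg : Continuous g) :
    Integrable (fun y => J y * g y) :=
  (hJ.1.mul hg).integrable_of_hasCompactSupport (hJ.2.2.2.1.mul_right)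

lemma harnack {J : ℝ → ℝ} (hJ : IsKernel J) (c A κ T : ℝ) (hc : 0 < c) (hA : 0 ≤ A)
    (hκ : 0 < κ) : ∃ D B : ℝ, 1 ≤ D ∧ 0 ≤ B ∧ ∀ (τ τ' : ℝ → ℝ) (X : ℝ),
      (∀ ξ ≥ X, HasDerivAt τ (τ' ξ) ξ) → Continuous τ → (∀ ξ ≥ X - B, 0 < τ ξ) →
      (∀ ξ ≥ X, c * τ' ξ ≤ A * τ ξ - κ * ∫ y, J y * τ (ξ - y)) →
      ∀ ξ₀ ≥ X + B, ∀ s ∈ Icc (ξ₀ - T) ξ₀, τ s ≤ D * τ ξ₀ := by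
  obtain ⟨R, hR, hsupp⟩ := kernel_supp hJ
  obtain ⟨a, b, j, ha, hab, hj, hlow⟩ := kernel_lower hJ
  have hb0 : 0 < b := ha.trans hab
  obtain ⟨n, hn⟩ := exists_nat_gt (T / (a / 2))
  set h := a / 2 with hh
  have hh0 : 0 < h := by positivity
  have hnT : T < n * h := by rwa [div_lt_iff₀ hh0] at hn
  set C := (c / h + A * Real.exp (A / c * h) + 1) / (κ * (j * (b - a))) with hC
  have hba : 0 < b - a := by linarith
  have hC0 : 0 < C := by positivity
  set D₁ := max 1 (Real.exp (A / c * b) * C) with hD₁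
  have hD1 : 1 ≤ D₁ := le_max_left _ _
  refine ⟨D₁ ^ n, R + b + n * h, one_le_pow₀ hD1, by positivity, ?_⟩
  intro τ τ' X hτ hcont hpos hineq
  have hnh : 0 ≤ n * h := by positivity
  have hposR : ∀ ξ ≥ X - R, 0 < τ ξ := fun ξ hξ => hpos ξ (by linarith)
  have hnn : ∀ ξ ≥ X, ∀ y, 0 ≤ J y * τ (ξ - y) := by
    intro ξ hξ y
    rcases lt_or_ge R |y| with h | h
    · simp [hsupp y h]
    · exact mul_nonneg (hJ.2.1 y) (hposR _ (by linarith [(abs_le.1 h).2])).le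
  -- growth
  have hgrow : ∀ s t, X ≤ s → s ≤ t → τ t ≤ Real.exp (A / c * (t - s)) * τ s := by
    intro s t hs hst
    have hd : ∀ x ≥ X, HasDerivAt (fun x => Real.exp (-(A / c) * x) * τ x)
        (Real.exp (-(A / c) * x) * (τ' x - A / c * τ x)) x := by
      intro x hx
      have h1 : HasDerivAt (fun x => Real.exp (-(A / c) * x))
          (Real.exp (-(A / c) * x) * (-(A / c))) x := by
        simpa using ((hasDerivAt_id x).const_mul (-(A / c))).exp
      exact (h1.mul (hτ x hx)).congr_deriv (by ring)
    have hanti : AntitoneOn (fun x => Real.exp (-(A / c) * x) * τ x) (Ici X) := by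
      apply antitoneOn_of_deriv_nonpos (convex_Ici X)
      · fun_prop
      · intro x hx
        rw [interior_Ici] at hx
        exact (hd x hx.le).differentiableAt.differentiableWithinAt
      · intro x hx
        rw [interior_Ici] at hx
        have hx' : X ≤ x := le_of_lt hx
        rw [(hd x hx').deriv]
        have h2 := hineq x hx'
        have h3 : 0 ≤ ∫ y, J y * τ (x - y) := integral_nonneg (hnn x hx')
        have h4 : c * τ' x ≤ A * τ x := by nlinarith
        have h5 : τ' x ≤ A / c * τ x := by
          rw [div_mul_eq_mul_div, le_div_iff₀ hc]; linarith
        exact mul_nonpos_of_nonneg_of_nonpos (Real.exp_pos _).le (by linarith)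
    have := hanti (mem_Ici.2 hs) (mem_Ici.2 (hs.trans hst)) hst
    simp only at this
    have e1 : Real.exp (A / c * (t - s)) = Real.exp (A / c * t) * Real.exp (-(A / c) * s) := by
      rw [← Real.exp_add]; ring_nf
    have e2 : Real.exp (A / c * t) * Real.exp (-(A / c) * t) = 1 := by
      rw [← Real.exp_add]; simp
    calc τ t = Real.exp (A / c * t) * (Real.exp (-(A / c) * t) * τ t) := by
            rw [← mul_assoc, e2, one_mul]
      _ ≤ Real.exp (A / c * t) * (Real.exp (-(A / c) * s) * τ s) := by gcongr
      _ = _ := by rw [e1]; ring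
  -- back step
  have hback : ∀ ξ₀ ≥ X + b, ∃ ξ₁ ∈ Icc (ξ₀ - b) (ξ₀ - h), τ ξ₁ ≤ C * τ ξ₀ := by
    intro ξ₀ hξ₀
    by_contra hcon
    push Not at hcon
    have hb : 0 < b := by linarith
    have hξX : X ≤ ξ₀ := by linarith
    have hτ0 : 0 < τ ξ₀ := hposR _ (by linarith)
    obtain ⟨s, hs, hslope⟩ := exists_hasDerivAt_eq_slope τ τ' (show ξ₀ < ξ₀ + h by linarith)
      hcont.continuousOn (fun x hx => hτ x (by linarith [hx.1]))
    have hsX : X ≤ s := by linarith [hs.1]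
    have h1 := hineq s hsX
    have h2 : -(c / h) * τ ξ₀ ≤ c * τ' s := by
      rw [hslope]
      have : 0 < τ (ξ₀ + h) := hposR _ (by linarith)
      have e : c * ((τ (ξ₀ + h) - τ ξ₀) / (ξ₀ + h - ξ₀)) = c / h * τ (ξ₀ + h) - c / h * τ ξ₀ := by
        rw [add_sub_cancel_left]; ring
      rw [e]
      have : 0 < c / h * τ (ξ₀ + h) := by positivity
      linarith
    have h3 : τ s ≤ Real.exp (A / c * h) * τ ξ₀ := by
      refine (hgrow ξ₀ s hξX hs.1.le).trans ?_
      gcongr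
      linarith [hs.2]
    have h4 : (j * (b - a)) * (C * τ ξ₀) ≤ ∫ y, J y * τ (s - y) := by
      have hint : Integrable (fun y => J y * τ (s - y)) :=
        kernel_integrable hJ (by fun_prop)
      calc (j * (b - a)) * (C * τ ξ₀) = ∫ y in Icc a b, j * (C * τ ξ₀) := by
            rw [setIntegral_const]; simp [hab.le]; ring
        _ ≤ ∫ y in Icc a b, J y * τ (s - y) := by
            apply setIntegral_mono_on continuous_const.integrableOn_Icc hint.integrableOn measurableSet_Icc
            intro y hy
            have := hcon (s - y) ⟨by linarith [hy.2, hs.1], by linarith [hy.1, hs.2]⟩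
            have h0 := hlow y hy
            have hτ0' : 0 ≤ C * τ ξ₀ := by positivity
            exact mul_le_mul h0 this.le hτ0' (hJ.2.1 y)
        _ ≤ _ := setIntegral_le_integral hint (Eventually.of_forall (hnn s hsX))
    have h5 : κ * ((j * (b - a)) * (C * τ ξ₀)) =
        (c / h + A * Real.exp (A / c * h) + 1) * τ ξ₀ := by
      rw [hC]; field_simp
    have h6 := mul_le_mul_of_nonneg_left h4 hκ.le
    have h7 := mul_le_mul_of_nonneg_left h3 hA
    rw [h5] at h6
    nlinarith
  have hstep : ∀ ξ₀ ≥ X + b, ∀ s ∈ Icc (ξ₀ - h) ξ₀, τ s ≤ D₁ * τ ξ₀ := by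
    intro ξ₀ hξ₀ s hs
    obtain ⟨ξ₁, h1, h2⟩ := hback ξ₀ hξ₀
    have hτ0 : 0 < τ ξ₀ := hposR _ (by linarith)
    have h3 := hgrow ξ₁ s (by linarith [h1.1]) (by linarith [h1.2, hs.1])
    calc τ s ≤ Real.exp (A / c * (s - ξ₁)) * τ ξ₁ := h3
      _ ≤ Real.exp (A / c * (s - ξ₁)) * (C * τ ξ₀) := by gcongr
      _ ≤ Real.exp (A / c * b) * (C * τ ξ₀) := by
          gcongr
          linarith [h1.1, hs.2]
      _ = (Real.exp (A / c * b) * C) * τ ξ₀ := by ring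
      _ ≤ D₁ * τ ξ₀ := by
          gcongr
          exact le_max_right _ _
  have hiter : ∀ m : ℕ, ∀ ξ₀ ≥ X + b + m * h, ∀ s ∈ Icc (ξ₀ - m * h) ξ₀, τ s ≤ D₁ ^ m * τ ξ₀ := by
    intro m
    induction m with
    | zero =>
      intro ξ₀ _ s hs
      have : s = ξ₀ := by
        have := hs.1; have := hs.2; simp at *; linarith
      simp [this]
    | succ m ih =>
      intro ξ₀ hξ₀ s hs
      push_cast at hξ₀ hs
      have hmh : 0 ≤ m * h := by positivity
      have hτ0 : 0 < τ ξ₀ := hposR _ (by nlinarith)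
      have hD0 : 0 ≤ D₁ := by linarith
      rcases le_total (ξ₀ - m * h) s with hcase | hcase
      · refine (ih ξ₀ (by nlinarith) s ⟨hcase, hs.2⟩).trans ?_
        gcongr
        omega
      · have h1 := hstep (ξ₀ - m * h) (by nlinarith) s ⟨by nlinarith [hs.1], hcase⟩
        have h2 := ih ξ₀ (by nlinarith) (ξ₀ - m * h) ⟨le_refl _, by linarith⟩
        calc τ s ≤ D₁ * τ (ξ₀ - m * h) := h1
          _ ≤ D₁ * (D₁ ^ m * τ ξ₀) := by gcongr
          _ = _ := by ring
  intro ξ₀ hξ₀ s hs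
  exact hiter n ξ₀ (by linarith) s ⟨by linarith [hs.1], hs.2⟩

lemma concentrate {J : ℝ → ℝ} (hJ : IsKernel J) {c K R : ℝ} (hc : 0 < c) (hR : 0 < R)
    (hsupp : ∀ y, R < |y| → J y = 0) (hK : 0 < K) {W ρ ρ' e : ℝ → ℝ} (hWc : Continuous W)
    (hW0 : ∀ ξ, 0 < W ξ) (hWK : ∀ ξ y, |y| ≤ R → W (ξ - y) ≤ K * W ξ)
    (hρ : ∀ ξ, HasDerivAt ρ (ρ' ξ) ξ)
    (heq : ∀ ξ, c * ρ' ξ = (∫ y, J y * (W (ξ - y) / W ξ * (ρ ξ - ρ (ξ - y)))) + e ξ)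
    (he : Tendsto e atTop (nhds 0)) {L : ℝ}
    (hL1 : ∀ δ > 0, ∀ᶠ ξ in atTop, L - δ < ρ ξ) (hL2 : ∀ δ > 0, ∃ᶠ ξ in atTop, ρ ξ < L + δ) :
    ∀ ε > 0, ∀ X, ∃ ξ ≥ X, ∀ s ∈ Icc (ξ - R) (ξ + R), |ρ s - L| ≤ ε := by
  intro ε hε X
  have hρc : Continuous ρ := continuous_iff_continuousAt.2 fun ξ => (hρ ξ).continuousAt
  obtain ⟨D, B, hD, hB, hH⟩ := harnack hJ c (K + 1) (1 / K) (2 * R) hc (by positivity)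
    (by positivity)
  set δ := ε / (3 * D) with hδ
  have hD0 : 0 < D := by linarith
  have hδ0 : 0 < δ := by positivity
  have hδε : 3 * D * δ = ε := by rw [hδ]; field_simp
  have he' : ∀ᶠ ξ in atTop, e ξ < δ := he.eventually (gt_mem_nhds hδ0)
  obtain ⟨X₀, hX₀⟩ := eventually_atTop.1 ((hL1 δ hδ0).and he')
  set X₁ := max X X₀ + B + R with hX₁
  have hm1 := le_max_left X X₀
  have hm2 := le_max_right X X₀
  have hlow : ∀ ξ ≥ X₁ - B - R, δ < ρ ξ - L + 2 * δ := by
    intro ξ hξ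
    have := (hX₀ ξ (by linarith)).1
    linarith
  obtain ⟨ξ₀, hξ₀, hξL⟩ := frequently_atTop.1 (hL2 δ hδ0) (X₁ + B + 2 * R)
  have hmain := hH (fun ξ => ρ ξ - L + 2 * δ) ρ' X₁
    (fun ξ _ => ((hρ ξ).sub_const L).add_const (2 * δ)) (by fun_prop)
    (fun ξ hξ => hδ0.trans (hlow ξ (by linarith))) ?_ ξ₀ (by linarith)
  · refine ⟨ξ₀ - R, by linarith, fun s hs => ?_⟩
    have h1 := hmain s ⟨by linarith [hs.1], by linarith [hs.2]⟩
    have h2 := hlow s (by linarith [hs.1])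
    have h3 : D * (ρ ξ₀ - L + 2 * δ) ≤ D * (3 * δ) := by gcongr; linarith
    rw [abs_le]
    constructor <;> nlinarith
  · intro ξ hξ
    have hWξ := hW0 ξ
    have hτξ := hlow ξ (by linarith)
    have hi1 : Integrable (fun y => J y * (W (ξ - y) / W ξ * (ρ ξ - ρ (ξ - y)))) :=
      kernel_integrable hJ (by fun_prop)
    have hi2 : Integrable (fun y => J y * (K * (ρ ξ - L + 2 * δ))) :=
      kernel_integrable hJ (by fun_prop)
    have hi3 : Integrable (fun y => J y * (ρ (ξ - y) - L + 2 * δ)) :=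
      kernel_integrable hJ (by fun_prop)
    have hle : (∫ y, J y * (W (ξ - y) / W ξ * (ρ ξ - ρ (ξ - y)))) ≤
        ∫ y, (J y * (K * (ρ ξ - L + 2 * δ)) - 1 / K * (J y * (ρ (ξ - y) - L + 2 * δ))) := by
      apply integral_mono hi1 (hi2.sub (hi3.const_mul _))
      intro y
      rcases lt_or_ge R |y| with h | h
      · simp [hsupp y h]
      · have h1 : W (ξ - y) / W ξ ≤ K := by
          rw [div_le_iff₀ hWξ]; exact hWK ξ y h
        have h2 : 1 / K ≤ W (ξ - y) / W ξ := by
          rw [div_le_div_iff₀ hK hWξ]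
          have := hWK (ξ - y) (-y) (by rwa [abs_neg])
          simp only [sub_neg_eq_add, sub_add_cancel] at this
          linarith
        have h3 := hlow (ξ - y) (by linarith [(abs_le.1 h).2])
        have h4 := mul_le_mul_of_nonneg_right h1 (hδ0.trans hτξ).le
        have h5 := mul_le_mul_of_nonneg_right h2 (hδ0.trans h3).le
        have h6 : W (ξ - y) / W ξ * (ρ ξ - ρ (ξ - y)) ≤
          K * (ρ ξ - L + 2 * δ) - 1 / K * (ρ (ξ - y) - L + 2 * δ) := by linarith
        have := mul_le_mul_of_nonneg_left h6 (hJ.2.1 y)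
        show _ ≤ J y * (K * (ρ ξ - L + 2 * δ)) - 1 / K * (J y * (ρ (ξ - y) - L + 2 * δ))
        linarith
    rw [integral_sub hi2 (hi3.const_mul _), integral_const_mul, integral_mul_const, hJ.2.2.2.2]
      at hle
    rw [heq ξ]
    have := (hX₀ ξ (by linarith)).2
    linarith

lemma root_of_concentrate {J : ℝ → ℝ} (hJ : IsKernel J) {c R γ L : ℝ} (hR : 0 < R)
    (hsupp : ∀ y, R < |y| → J y = 0) {W W' G : ℝ → ℝ}
    (hW0 : ∀ ξ, 0 < W ξ) (hW : ∀ ξ, HasDerivAt W (W' ξ) ξ)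
    (heq : ∀ ξ, c * (-W' ξ / W ξ) = (∫ y, J y * (W (ξ - y) / W ξ)) - 1 + G ξ)
    (hG : Tendsto G atTop (nhds γ))
    (hcon : ∀ ε > 0, ∀ X, ∃ ξ ≥ X, ∀ s ∈ Icc (ξ - R) (ξ + R), |-W' s / W s - L| ≤ ε) :
    c * L = (∫ y, J y * Real.exp (L * y)) - 1 + γ := by
  have hWc : Continuous W := continuous_iff_continuousAt.2 fun ξ => (hW ξ).continuousAt
  choose ξ hξ hr using fun n : ℕ => hcon (1 / ((n : ℝ) + 1)) Nat.one_div_pos_of_nat (n : ℝ)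
  have hξt : Tendsto ξ atTop atTop := tendsto_atTop_mono hξ tendsto_natCast_atTop_atTop
  have hε : Tendsto (fun n : ℕ => 1 / ((n : ℝ) + 1)) atTop (nhds 0) :=
    tendsto_one_div_add_atTop_nhds_zero_nat
  have h1 : Tendsto (fun n => -W' (ξ n) / W (ξ n)) atTop (nhds L) := by
    rw [tendsto_iff_norm_sub_tendsto_zero]
    refine squeeze_zero (fun n => norm_nonneg _) (fun n => ?_) hε
    exact hr n (ξ n) ⟨by linarith, by linarith⟩
  have hb : ∀ (n : ℕ) (y : ℝ), |y| ≤ R → Real.exp (-(1 / ((n : ℝ) + 1) * R)) * Real.exp (L * y) ≤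
      W (ξ n - y) / W (ξ n) ∧ W (ξ n - y) / W (ξ n) ≤
        Real.exp (1 / ((n : ℝ) + 1) * R) * Real.exp (L * y) := by
    intro n y hy
    have hy' := abs_le.1 hy
    have hd : ∀ s ∈ Icc (ξ n - R) (ξ n + R), HasDerivWithinAt (fun s => Real.log (W s) + L * s)
        (W' s / W s + L * 1) (Icc (ξ n - R) (ξ n + R)) s := fun s _ =>
      (((hW s).log (hW0 s).ne').add ((hasDerivAt_id s).const_mul L)).hasDerivWithinAt
    have := (convex_Icc (ξ n - R) (ξ n + R)).norm_image_sub_le_of_norm_hasDerivWithin_le hd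
      (C := 1 / ((n : ℝ) + 1)) (fun s hs => by
        have := hr n s hs
        rw [← abs_neg] at this
        rw [Real.norm_eq_abs]
        convert this using 2
        ring) (x := ξ n) (y := ξ n - y) ⟨by linarith, by linarith⟩
        ⟨by linarith, by linarith⟩
    have hpos : (0:ℝ) < 1 / ((n : ℝ) + 1) := Nat.one_div_pos_of_nat
    have h2 : |Real.log (W (ξ n - y)) - Real.log (W (ξ n)) - L * y| ≤ 1 / ((n : ℝ) + 1) * R := by
      calc _ = ‖Real.log (W (ξ n - y)) + L * (ξ n - y) - (Real.log (W (ξ n)) + L * ξ n)‖ := by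
              rw [Real.norm_eq_abs]; congr 1; ring
        _ ≤ _ := this
        _ ≤ _ := by
              gcongr
              rw [Real.norm_eq_abs]
              simpa using hy
    have h3 : W (ξ n - y) / W (ξ n) =
        Real.exp (Real.log (W (ξ n - y)) - Real.log (W (ξ n))) := by
      rw [Real.exp_sub, Real.exp_log (hW0 _), Real.exp_log (hW0 _)]
    have h4 := abs_le.1 h2
    rw [h3, ← Real.exp_add, ← Real.exp_add, Real.exp_le_exp, Real.exp_le_exp]
    constructor <;> linarith
  set H := ∫ y, J y * Real.exp (L * y) with hH
  have hiH : Integrable (fun y => J y * Real.exp (L * y)) := kernel_integrable hJ (by fun_prop)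
  have hi : ∀ n, Integrable (fun y => J y * (W (ξ n - y) / W (ξ n))) := fun n =>
    kernel_integrable hJ (by fun_prop)
  have hlo : ∀ n : ℕ, Real.exp (-(1 / ((n : ℝ) + 1) * R)) * H ≤
      ∫ y, J y * (W (ξ n - y) / W (ξ n)) := by
    intro n
    rw [hH, ← integral_const_mul]
    apply integral_mono (hiH.const_mul _) (hi n)
    intro y
    rcases lt_or_ge R |y| with h | h
    · simp [hsupp y h]
    · have := mul_le_mul_of_nonneg_left (hb n y h).1 (hJ.2.1 y)
      simp only
      linarith
  have hhi : ∀ n : ℕ, (∫ y, J y * (W (ξ n - y) / W (ξ n))) ≤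
      Real.exp (1 / ((n : ℝ) + 1) * R) * H := by
    intro n
    rw [hH, ← integral_const_mul]
    apply integral_mono (hi n) (hiH.const_mul _)
    intro y
    rcases lt_or_ge R |y| with h | h
    · simp [hsupp y h]
    · have := mul_le_mul_of_nonneg_left (hb n y h).2 (hJ.2.1 y)
      simp only
      linarith
  have hI : Tendsto (fun n => ∫ y, J y * (W (ξ n - y) / W (ξ n))) atTop (nhds H) := by
    have hεR : Tendsto (fun n : ℕ => 1 / ((n : ℝ) + 1) * R) atTop (nhds 0) := by
      simpa using hε.mul_const R
    refine tendsto_of_tendsto_of_tendsto_of_le_of_le ?_ ?_ hlo hhi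
    · have := ((Real.continuous_exp.tendsto _).comp hεR.neg).mul_const H
      simpa using this
    · have := ((Real.continuous_exp.tendsto _).comp hεR).mul_const H
      simpa using this
  refine tendsto_nhds_unique (h1.const_mul c) ?_
  have := (hI.sub_const 1).add (hG.comp hξt)
  refine this.congr fun n => ?_
  simp only [Function.comp]
  exact (heq (ξ n)).symm

lemma kernel_mgf_ge_one {J : ℝ → ℝ} (hJ : IsKernel J) (l : ℝ) :
    1 ≤ ∫ x, J x * Real.exp (l * x) := by
  have hi : Integrable (fun y => J y * y) := kernel_integrable hJ continuous_id
  have hodd : ∫ y, J y * y = 0 := by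
    have h1 := integral_neg_eq_self (fun y => J y * y) volume
    simp only [hJ.2.2.1, mul_neg, integral_neg] at h1
    linarith
  have hJi : Integrable J := by simpa using kernel_integrable hJ (continuous_const (y := (1:ℝ)))
  calc (1:ℝ) = ∫ y, (J y + l * (J y * y)) := by
        rw [integral_add hJi (hi.const_mul l), integral_const_mul, hodd, hJ.2.2.2.2]; simp
    _ ≤ _ := by
        apply integral_mono (hJi.add (hi.const_mul l)) (kernel_integrable hJ (by fun_prop))
        intro y
        have := mul_le_mul_of_nonneg_left (Real.add_one_le_exp (l * y)) (hJ.2.1 y)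
        show J y + l * (J y * y) ≤ J y * Real.exp (l * y)
        linarith

lemma conv_hasDerivAt {J : ℝ → ℝ} (hJ : IsKernel J) {W W' : ℝ → ℝ}
    (hW : ∀ ξ, HasDerivAt W (W' ξ) ξ) (hW' : Continuous W') (ξ : ℝ) :
    HasDerivAt (fun ξ => ∫ y, J y * W (ξ - y)) (∫ y, J y * W' (ξ - y)) ξ := by
  obtain ⟨R, hR, hsupp⟩ := kernel_supp hJ
  have hWc : Continuous W := continuous_iff_continuousAt.2 fun ξ => (hW ξ).continuousAt
  obtain ⟨M, hM⟩ := (isCompact_Icc (a := ξ - R - 1) (b := ξ + R + 1)).exists_bound_of_continuousOn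
    hW'.continuousOn
  refine (hasDerivAt_integral_of_dominated_loc_of_deriv_le (F := fun ξ y => J y * W (ξ - y))
    (F' := fun ξ y => J y * W' (ξ - y)) (bound := fun y => J y * M)
    (Metric.ball_mem_nhds ξ one_pos) ?_ ?_ ?_ ?_ ?_ ?_).2
  · exact Eventually.of_forall fun x =>
      (kernel_integrable hJ (g := fun y => W (x - y)) (by fun_prop)).aestronglyMeasurable
  · exact kernel_integrable hJ (g := fun y => W (ξ - y)) (by fun_prop)
  · exact (kernel_integrable hJ (g := fun y => W' (ξ - y)) (by fun_prop)).aestronglyMeasurable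
  · refine Eventually.of_forall fun y x hx => ?_
    rw [Metric.mem_ball, Real.dist_eq, abs_lt] at hx
    rcases lt_or_ge R |y| with h | h
    · simp [hsupp y h]
    · rw [norm_mul, Real.norm_of_nonneg (hJ.2.1 y)]
      have := abs_le.1 h
      exact mul_le_mul_of_nonneg_left (hM _ ⟨by linarith [hx.1], by linarith [hx.2]⟩) (hJ.2.1 y)
  · exact kernel_integrable hJ continuous_const
  · refine Eventually.of_forall fun y x hx => ?_
    have h1 : HasDerivAt (fun x => W (x - y)) (W' (x - y)) x := by
      simpa using (hW (x - y)).comp_sub_const x y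
    exact h1.const_mul (J y)

lemma exists_liminf_const {ρ : ℝ → ℝ} {M : ℝ} (hM : ∀ᶠ ξ in atTop, |ρ ξ| ≤ M) :
    ∃ L : ℝ, (∀ δ > 0, ∀ᶠ ξ in atTop, L - δ < ρ ξ) ∧ (∀ δ > 0, ∃ᶠ ξ in atTop, ρ ξ < L + δ) := by
  have hb : IsBoundedUnder (· ≥ ·) atTop ρ :=
    ⟨-M, eventually_map.2 (hM.mono fun ξ h => (abs_le.1 h).1)⟩
  have ha : IsBoundedUnder (· ≤ ·) atTop ρ :=
    ⟨M, eventually_map.2 (hM.mono fun ξ h => (abs_le.1 h).2)⟩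
  refine ⟨liminf ρ atTop, fun δ hδ => ?_, fun δ hδ => ?_⟩
  · exact eventually_lt_of_lt_liminf (by linarith) hb
  · exact frequently_lt_of_liminf_lt ha.isCoboundedUnder_ge (by linarith)

/-- If the minimal nonlocal speed is linearly selected, then the logarithmic derivative of the
minimal traveling wave tends to `-λ₀` at `+∞`. -/
theorem nonlocal_log_derivative_limit
    (J : ℝ → ℝ) (hJ : IsKernel J)
    (f : ℝ → ℝ) (γ₀ : ℝ)
    -- monostable condition with f'(0) = γ₀ > 0
    (hf1 : ContDiffOn ℝ 2 f (Icc 0 1)) (hf0 : f 0 = 0) (hf1' : f 1 = 0)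
    (hγ₀ : 0 < γ₀) (hdf0 : derivWithin f (Icc 0 1) 0 = γ₀)
    (hdf1 : derivWithin f (Icc 0 1) 1 < 0)
    (hfpos : ∀ w ∈ Ioo (0:ℝ) 1, 0 < f w)
    -- λ₀ is the unique positive number with ∫ J e^{λ₀ x} dx - 1 + γ₀ = c₀* λ₀
    (lam₀ : ℝ) (hlam₀ : 0 < lam₀)
    (hroot : (∫ x, J x * Real.exp (lam₀ * x)) - 1 + γ₀ = c0star J γ₀ * lam₀)
    (huniqroot : ∀ l, 0 < l →
      (∫ x, J x * Real.exp (l * x)) - 1 + γ₀ = c0star J γ₀ * l → l = lam₀)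
    -- minimal speed c_NL* and its characterization; linear selection
    (cNL : ℝ) (hge : c0star J γ₀ ≤ cNL)
    (hmin : ∀ c, (∃ V : ℝ → ℝ, IsNLFront J f c V) ↔ cNL ≤ c)
    (hlin : cNL = c0star J γ₀)
    -- the minimal traveling wave
    (W : ℝ → ℝ) (hW : IsNLFront J f cNL W) :
    Tendsto (fun ξ => deriv W ξ / W ξ) atTop (nhds (-lam₀)) := by
  obtain ⟨hWC, hWeq, hWbot, hWtop, hWneg⟩ := hW
  obtain ⟨R, hR, hsupp⟩ := kernel_supp hJ
  rw [← hlin] at hroot huniqroot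
  have hc : 0 < cNL := by
    have h1 := kernel_mgf_ge_one hJ lam₀
    by_contra hcon
    push Not at hcon
    nlinarith
  have hWd : ∀ ξ, HasDerivAt W (deriv W ξ) ξ := fun ξ =>
    (hWC.differentiable (by norm_num) ξ).hasDerivAt
  have hWd' : Continuous (deriv W) := hWC.continuous_deriv (by norm_num)
  have hWcont : Continuous W := hWC.continuous
  have hanti : StrictAnti W := strictAnti_of_deriv_neg hWneg
  have hW0 : ∀ ξ, 0 < W ξ := fun ξ =>
    (hanti.antitone.le_of_tendsto hWtop (ξ + 1)).trans_lt (hanti (by linarith))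
  have hW1 : ∀ ξ, W ξ < 1 := fun ξ =>
    (hanti (show ξ - 1 < ξ by linarith)).trans_le (hanti.antitone.ge_of_tendsto hWbot (ξ - 1))
  set P : ℝ → ℝ := fun ξ => ∫ y, J y * W (ξ - y) with hP
  set P' : ℝ → ℝ := fun ξ => ∫ y, J y * deriv W (ξ - y) with hP'
  have hPd : ∀ ξ, HasDerivAt P (P' ξ) ξ := conv_hasDerivAt hJ hWd hWd'
  have heqn : ∀ ξ, cNL * deriv W ξ = W ξ - P ξ - f (W ξ) := by
    intro ξ
    have h1 := hWeq ξ
    have h2 : (∫ y, J (ξ - y) * W y) = P ξ := by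
      have := integral_sub_left_eq_self (fun y => J y * W (ξ - y)) volume ξ
      simp only [sub_sub_cancel] at this
      exact this
    rw [h2] at h1
    linarith
  -- Harnack for W
  obtain ⟨K, B, hK1, hB, hH⟩ := harnack hJ cNL 1 1 R hc zero_le_one one_pos
  have hWK : ∀ ξ y, |y| ≤ R → W (ξ - y) ≤ K * W ξ := by
    intro ξ y hy
    have hy' := abs_le.1 hy
    rcases le_total 0 y with h | h
    · refine hH W (deriv W) (ξ - B) (fun x _ => hWd x) hWcont (fun x _ => hW0 x) ?_ ξ
        (by linarith) (ξ - y) ⟨by linarith, by linarith⟩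
      intro x _
      have := heqn x
      have := hfpos (W x) ⟨hW0 x, hW1 x⟩
      simp only [one_mul]
      linarith
    · have h1 : W (ξ - y) ≤ W ξ := hanti.antitone (by linarith)
      nlinarith [hW0 ξ]
  have hPK : ∀ ξ, P ξ ≤ K * W ξ := by
    intro ξ
    have hi : Integrable (fun y => J y * (K * W ξ)) := kernel_integrable hJ continuous_const
    calc P ξ ≤ ∫ y, J y * (K * W ξ) := by
          apply integral_mono (kernel_integrable hJ (by fun_prop)) hi
          intro y
          rcases lt_or_ge R |y| with h | h
          · simp [hsupp y h]
          · exact mul_le_mul_of_nonneg_left (hWK ξ y h) (hJ.2.1 y)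
      _ = K * W ξ := by rw [integral_mul_const, hJ.2.2.2.2, one_mul]
  -- derivative of f
  set fd : ℝ → ℝ := derivWithin f (Icc 0 1) with hfd
  have hfdiff : DifferentiableOn ℝ f (Icc 0 1) := hf1.differentiableOn (by norm_num)
  have hfW : ∀ ξ, HasDerivAt f (fd (W ξ)) (W ξ) := fun ξ =>
    (hfdiff (W ξ) ⟨(hW0 ξ).le, (hW1 ξ).le⟩).hasDerivWithinAt.hasDerivAt
      (Icc_mem_nhds (hW0 ξ) (hW1 ξ))
  have hfdc : ContinuousOn fd (Icc 0 1) :=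
    hf1.continuousOn_derivWithin (uniqueDiffOn_Icc zero_lt_one) (by norm_num)
  have hWtop' : Tendsto W atTop (nhdsWithin 0 (Icc 0 1 \ {0})) :=
    tendsto_nhdsWithin_iff.2 ⟨hWtop, Eventually.of_forall fun ξ =>
      ⟨⟨(hW0 ξ).le, (hW1 ξ).le⟩, (hW0 ξ).ne'⟩⟩
  have hfdt : Tendsto (fun ξ => fd (W ξ)) atTop (nhds γ₀) := by
    have h1 := hfdc 0 ⟨le_rfl, zero_le_one⟩
    rw [ContinuousWithinAt, hdf0] at h1
    exact h1.comp (hWtop'.mono_right (nhdsWithin_mono _ sdiff_subset))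
  set G : ℝ → ℝ := fun ξ => f (W ξ) / W ξ with hGdef
  have hG : Tendsto G atTop (nhds γ₀) := by
    have h1 := (hfdiff 0 ⟨le_rfl, zero_le_one⟩).hasDerivWithinAt
    rw [← hfd, hdf0, hasDerivWithinAt_iff_tendsto_slope] at h1
    refine (h1.comp hWtop').congr fun ξ => ?_
    simp [slope_def_field, hf0, hGdef]
  -- logarithmic derivative
  set r : ℝ → ℝ := fun ξ => -deriv W ξ / W ξ with hr
  have hr0 : ∀ ξ, 0 < r ξ := fun ξ => div_pos (by linarith [hWneg ξ]) (hW0 ξ)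
  have hreq : ∀ ξ, cNL * r ξ = P ξ / W ξ - 1 + G ξ := by
    intro ξ
    have h1 := heqn ξ
    have h2 := (hW0 ξ).ne'
    simp only [hr, hGdef]
    field_simp
    linarith
  set r' : ℝ → ℝ := fun ξ => ((P' ξ * W ξ - P ξ * deriv W ξ) / W ξ ^ 2 +
    (fd (W ξ) * deriv W ξ * W ξ - f (W ξ) * deriv W ξ) / W ξ ^ 2) / cNL with hr'
  have hrd : ∀ ξ, HasDerivAt r (r' ξ) ξ := by
    intro ξ
    have hfun : r = fun ξ => (P ξ / W ξ - 1 + f (W ξ) / W ξ) / cNL := by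
      funext ξ
      rw [eq_div_iff hc.ne', mul_comm]
      exact hreq ξ
    rw [hfun]
    have h1 := (hPd ξ).div (hWd ξ) (hW0 ξ).ne'
    have h2 := ((hfW ξ).comp ξ (hWd ξ)).div (hWd ξ) (hW0 ξ).ne'
    exact ((h1.sub_const 1).add h2).div_const cNL
  set e : ℝ → ℝ := fun ξ => (G ξ - fd (W ξ)) * r ξ with he
  have hre : ∀ ξ, cNL * r' ξ = (∫ y, J y * (W (ξ - y) / W ξ * (r ξ - r (ξ - y)))) + e ξ := by
    intro ξ
    have h2 := (hW0 ξ).ne'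
    have h3 : (∫ y, J y * (W (ξ - y) / W ξ * (r ξ - r (ξ - y)))) =
        r ξ / W ξ * P ξ + 1 / W ξ * P' ξ := by
      rw [hP, hP', ← integral_const_mul, ← integral_const_mul, ← integral_add]
      · congr 1
        funext y
        have h4 := (hW0 (ξ - y)).ne'
        simp only [hr]
        field_simp
        ring
      · exact (kernel_integrable hJ (by fun_prop)).const_mul _
      · exact (kernel_integrable hJ (by fun_prop)).const_mul _
    rw [h3]
    simp only [hr', he, hr, hGdef]
    field_simp
    ring
  obtain ⟨M, hM⟩ : ∃ M, ∀ᶠ ξ in atTop, |r ξ| ≤ M := by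
    refine ⟨(K + (γ₀ + 1)) / cNL, ?_⟩
    have h1 : ∀ᶠ ξ in atTop, G ξ < γ₀ + 1 := hG.eventually (gt_mem_nhds (by linarith))
    filter_upwards [h1] with ξ hξ
    rw [abs_of_pos (hr0 ξ), le_div_iff₀ hc, mul_comm, hreq]
    have : P ξ / W ξ ≤ K := by rw [div_le_iff₀ (hW0 ξ)]; exact hPK ξ
    linarith
  have het : Tendsto e atTop (nhds 0) := by
    have h1 : Tendsto (fun ξ => |G ξ - fd (W ξ)| * M) atTop (nhds 0) := by
      have := ((hG.sub hfdt).abs).mul_const M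
      simpa using this
    refine squeeze_zero_norm' ?_ h1
    filter_upwards [hM] with ξ hξ
    rw [Real.norm_eq_abs, he, abs_mul]
    gcongr
  have hconcl : ∀ L, (∀ ε > 0, ∀ X, ∃ ξ ≥ X, ∀ s ∈ Icc (ξ - R) (ξ + R), |r s - L| ≤ ε) →
      L = lam₀ := by
    intro L hL
    have h1 := root_of_concentrate hJ (c := cNL) (γ := γ₀) hR hsupp hW0 hWd (G := G) (fun ξ => by
      have h2 := hreq ξ
      have h3 : (∫ y, J y * (W (ξ - y) / W ξ)) = P ξ / W ξ := by
        simp only [hP, ← mul_div_assoc, integral_div]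
      rw [h3]; exact h2) hG hL
    have hL0 : 0 ≤ L := by
      by_contra hcon
      push Not at hcon
      obtain ⟨ξ, -, hξ⟩ := hL (-L / 2) (by linarith) 0
      have h2 := abs_le.1 (hξ ξ ⟨by linarith, by linarith⟩)
      linarith [hr0 ξ, h2.2]
    rcases hL0.eq_or_lt with h | h
    · rw [← h] at h1
      simp [hJ.2.2.2.2] at h1
      linarith
    · exact huniqroot L h h1.symm
  have hK0 : 0 < K := by linarith
  obtain ⟨L₁, hL₁, hL₁'⟩ := exists_liminf_const hM
  obtain ⟨L₂, hL₂, hL₂'⟩ := exists_liminf_const (ρ := fun ξ => -r ξ) (M := M)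
    (hM.mono fun ξ h => by rwa [abs_neg])
  have e1 : L₁ = lam₀ := hconcl L₁
    (concentrate hJ hc hR hsupp hK0 hWcont hW0 hWK hrd hre het hL₁ hL₁')
  have e2 : -L₂ = lam₀ := by
    apply hconcl
    have := concentrate hJ hc hR hsupp hK0 hWcont hW0 hWK (ρ := fun ξ => -r ξ)
      (ρ' := fun ξ => -r' ξ) (e := fun ξ => -e ξ) (fun ξ => (hrd ξ).neg) (fun ξ => by
        have h1 := hre ξ
        have h2 : (∫ y, J y * (W (ξ - y) / W ξ * (-r ξ - -r (ξ - y)))) =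
            -∫ y, J y * (W (ξ - y) / W ξ * (r ξ - r (ξ - y))) := by
          rw [← integral_neg]
          congr 1
          funext y
          ring
        rw [h2]
        linarith) (by simpa using het.neg) hL₂ hL₂'
    intro ε hε X
    obtain ⟨ξ, hξ, h⟩ := this ε hε X
    refine ⟨ξ, hξ, fun s hs => ?_⟩
    have := h s hs
    rw [← abs_neg] at this
    convert this using 2
    ring
  rw [tendsto_order]
  constructor
  · intro a ha
    filter_upwards [hL₂ (L₂ - a) (by linarith)] with ξ hξ
    have : deriv W ξ / W ξ = -r ξ := by simp only [hr]; ring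
    rw [this]; linarith
  · intro a ha
    filter_upwards [hL₁ (L₁ + a) (by linarith)] with ξ hξ
    have : deriv W ξ / W ξ = -r ξ := by simp only [hr]; ring
    rw [this]; linarith
end
end

section
/- Assume (A1)–(A3). Then the minimal traveling wave speed is nondecreasing in the parameter: if ŝ ≥ s ≥ 0 then c*(ŝ) ≥ c*(s). -/
open Filter Asymptotics MeasureTheory Set

noncomputable section

/-- A traveling wave front with speed `c` for the nonlinearity `g`. -/
def IsFront (g : ℝ → ℝ) (c : ℝ) (W : ℝ → ℝ) : Prop :=
  ContDiff ℝ 2 W ∧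
  (∀ ξ, deriv (deriv W) ξ + c * deriv W ξ + g (W ξ) = 0) ∧
  Tendsto W atBot (nhds 1) ∧ Tendsto W atTop (nhds 0) ∧
  (∀ ξ, deriv W ξ < 0)

lemma inv_deriv {s t : Set ℝ} (hs : IsOpen s) (ht : IsOpen t) {g g' h : ℝ → ℝ}
    (hg : ∀ x ∈ s, ∀ y ∈ s, x < y → g y < g x) (hh : ∀ y ∈ t, h y ∈ s)
    (hgh : ∀ y ∈ t, g (h y) = y) (hgt : ∀ x ∈ s, g x ∈ t)
    (hd : ∀ x ∈ s, HasDerivAt g (g' x) x) (hne : ∀ x ∈ s, g' x ≠ 0) :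
    ∀ y ∈ t, HasDerivAt h (g' (h y))⁻¹ y := by
  intro y hy
  have hhg : ∀ x ∈ s, h (g x) = x := by
    intro x hx
    have h1 := hgh _ (hgt x hx)
    rcases lt_trichotomy (h (g x)) x with h2 | h2 | h2
    · have := hg _ (hh _ (hgt x hx)) _ hx h2
      linarith
    · exact h2
    · have := hg _ hx _ (hh _ (hgt x hx)) h2
      linarith
  have hmono : MonotoneOn (fun y => - h y) t := by
    intro a ha b hb hab
    by_contra hc
    push Not at hc
    have := hg _ (hh a ha) _ (hh b hb) (by simpa using hc)
    rw [hgh a ha, hgh b hb] at this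
    linarith
  have hcont : ContinuousAt (fun y => - h y) y := by
    apply continuousAt_of_monotoneOn_of_image_mem_nhds hmono (ht.mem_nhds hy)
    have h1 : (fun y => - h y) '' t = (fun x => -x) ⁻¹' s := by
      ext z
      constructor
      · rintro ⟨w, hw, rfl⟩
        simpa using hh w hw
      · intro hz
        exact ⟨g (-z), hgt _ hz, by simp [hhg _ hz]⟩
    rw [h1]
    exact (hs.preimage continuous_neg).mem_nhds (by simpa using hh y hy)
  have hcont' : ContinuousAt h y := by
    have h2 := hcont.neg
    have h3 : (-fun y => -h y) = h := by ext z; simp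
    rwa [h3] at h2
  apply HasDerivAt.of_local_left_inverse hcont' (hd _ (hh y hy)) (hne _ (hh y hy))
  filter_upwards [ht.mem_nhds hy] with z hz using hgh z hz

lemma front_phase {g : ℝ → ℝ} {c : ℝ} {W : ℝ → ℝ} (hW : IsFront g c W) :
    ∃ X P : ℝ → ℝ, (∀ w ∈ Ioo (0:ℝ) 1, 0 < P w ∧ HasDerivAt P (c - g w / P w) w ∧
      HasDerivAt X (-(1 / P w)) w) ∧ ∀ ξ, ∃ w ∈ Ioo (0:ℝ) 1, X w = ξ := by
  obtain ⟨hC, hode, hbot, htop, hneg⟩ := hW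
  have hd : ∀ x, HasDerivAt W (deriv W x) x := fun x =>
    (hC.differentiable (by norm_num) x).hasDerivAt
  have hC1 : ContDiff ℝ 1 (deriv W) := by
    have : ContDiff ℝ (1 + 1) W := by simpa [one_add_one_eq_two] using hC
    exact (contDiff_succ_iff_deriv.1 this).2.2
  have hd2 : ∀ x, HasDerivAt (deriv W) (deriv (deriv W) x) x := fun x =>
    (hC1.differentiable (by norm_num) x).hasDerivAt
  have hanti : StrictAnti W := strictAnti_of_deriv_neg hneg
  have hpos : ∀ x, 0 < W x := by
    intro x
    have : 0 ≤ W (x+1) := hanti.antitone.le_of_tendsto htop _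
    have := hanti (show x < x+1 by linarith)
    linarith
  have hlt : ∀ x, W x < 1 := by
    intro x
    have : W (x-1) ≤ 1 := hanti.antitone.ge_of_tendsto hbot _
    have := hanti (show x - 1 < x by linarith)
    linarith
  have hex : ∀ w ∈ Ioo (0:ℝ) 1, ∃ x, W x = w := by
    intro w hw
    obtain ⟨a, ha⟩ := (hbot.eventually (lt_mem_nhds hw.2)).exists
    obtain ⟨b, hb⟩ := (htop.eventually (gt_mem_nhds hw.1)).exists
    exact mem_range_of_exists_le_of_exists_ge hC.continuous ⟨b, hb.le⟩ ⟨a, ha.le⟩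
  choose! X hX using hex
  have hXd := inv_deriv (s := univ) (t := Ioo (0:ℝ) 1) isOpen_univ isOpen_Ioo (g := W) (h := X)
    (fun x _ y _ hxy => hanti hxy) (fun _ _ => mem_univ _) hX (fun x _ => ⟨hpos x, hlt x⟩)
    (fun x _ => hd x) (fun x _ => (hneg x).ne)
  refine ⟨X, fun w => - deriv W (X w), ?_, ?_⟩
  · intro w hw
    have hn := hneg (X w)
    refine ⟨by linarith, ?_, ?_⟩
    · have h1 := ((hd2 (X w)).comp w (hXd w hw)).neg
      convert! h1 using 1
      have h2 := hode (X w)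
      rw [hX w hw] at h2
      have h3 : deriv (deriv W) (X w) = - c * deriv W (X w) - g w := by linarith
      rw [h3]
      have := hn.ne
      field_simp
      ring
    · convert! hXd w hw using 1
      have := hn.ne
      field_simp
  · intro ξ
    refine ⟨W ξ, ⟨hpos ξ, hlt ξ⟩, ?_⟩
    exact hanti.injective (hX _ ⟨hpos ξ, hlt ξ⟩)

lemma phase_order {f fh P Q X : ℝ → ℝ} {c c1 : ℝ} (hc : c < c1)
    (hf : ∀ w ∈ Ioo (0:ℝ) 1, 0 < f w) (hfh : ∀ w ∈ Ioo (0:ℝ) 1, f w < fh w)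
    (hP : ∀ w ∈ Ioo (0:ℝ) 1, 0 < P w ∧ HasDerivAt P (c - fh w / P w) w)
    (hQ : ∀ w ∈ Ioo (0:ℝ) 1, 0 < Q w ∧ HasDerivAt Q (c1 - f w / Q w) w ∧
      HasDerivAt X (-(1 / Q w)) w) (hX : ∀ ξ, ∃ w ∈ Ioo (0:ℝ) 1, X w = ξ) :
    ∀ w ∈ Ioo (0:ℝ) 1, Q w ≤ P w := by
  intro w0 hw0
  by_contra hcon
  push Not at hcon
  have key : ∀ w ∈ Ioo (0:ℝ) 1, P w ≤ Q w → c - fh w / P w < c1 - f w / Q w := by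
    intro w hw h
    have h1 : f w / Q w ≤ f w / P w :=
      div_le_div_of_nonneg_left (hf w hw).le (hP w hw).1 h
    have h2 : f w / P w < fh w / P w := div_lt_div_of_pos_right (hfh w hw) (hP w hw).1
    linarith
  have hle : ∀ w, w0 ≤ w → w < 1 → P w ≤ Q w := by
    intro w h1 h2
    have hm : ∀ x ∈ Icc w0 w, x ∈ Ioo (0:ℝ) 1 := fun x hx =>
      ⟨hw0.1.trans_le hx.1, hx.2.trans_lt h2⟩
    apply image_le_of_deriv_right_lt_deriv_boundary' (a := w0) (b := w)
      (f' := fun w => c - fh w / P w) (B' := fun w => c1 - f w / Q w)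
      (fun x hx => (hP x (hm x hx)).2.continuousAt.continuousWithinAt)
      (fun x hx => (hP x (hm x (Ico_subset_Icc_self hx))).2.hasDerivWithinAt) hcon.le
      (fun x hx => (hQ x (hm x hx)).2.1.continuousAt.continuousWithinAt)
      (fun x hx => (hQ x (hm x (Ico_subset_Icc_self hx))).2.1.hasDerivWithinAt)
      (fun x hx he => key x (hm x (Ico_subset_Icc_self hx)) he.le) ⟨h1, le_rfl⟩
  have hm : ∀ x ∈ Ico w0 1, x ∈ Ioo (0:ℝ) 1 := fun x hx => ⟨hw0.1.trans_le hx.1, hx.2⟩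
  have hmono : MonotoneOn (fun w => Q w - P w) (Ico w0 1) := by
    apply monotoneOn_of_deriv_nonneg (convex_Ico _ _)
    · intro x hx
      exact ((hQ x (hm x hx)).2.1.sub (hP x (hm x hx)).2).continuousAt.continuousWithinAt
    · intro x hx
      have hx := interior_subset hx
      exact ((hQ x (hm x hx)).2.1.sub (hP x (hm x hx)).2).differentiableAt.differentiableWithinAt
    · intro x hx
      have hx := interior_subset hx
      have h1 := ((hQ x (hm x hx)).2.1.sub (hP x (hm x hx)).2).deriv
      have h2 := key x (hm x hx) (hle x hx.1 hx.2)
      change 0 ≤ deriv (Q - P) x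
      rw [h1]
      linarith
  set δ := Q w0 - P w0 with hδ
  have hδ0 : 0 < δ := by linarith
  have hQδ : ∀ x ∈ Ico w0 1, δ ≤ Q x := by
    intro x hx
    have := hmono ⟨le_rfl, hw0.2⟩ hx hx.1
    have := (hP x (hm x hx)).1
    simp only at *
    linarith
  -- X + w/δ monotone on [w0,1)
  have hXm : MonotoneOn (fun w => X w + w / δ) (Ico w0 1) := by
    have hd : ∀ x ∈ Ico w0 1, HasDerivAt (fun w => X w + w / δ) (-(1 / Q x) + 1 / δ) x :=
      fun x hx => (hQ x (hm x hx)).2.2.add ((hasDerivAt_id x).div_const δ)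
    apply monotoneOn_of_deriv_nonneg (convex_Ico _ _)
    · intro x hx
      exact (hd x hx).continuousAt.continuousWithinAt
    · intro x hx
      exact (hd x (interior_subset hx)).differentiableAt.differentiableWithinAt
    · intro x hx
      have hx := interior_subset hx
      rw [(hd x hx).deriv]
      have := one_div_le_one_div_of_le hδ0 (hQδ x hx)
      linarith
  have hXa : AntitoneOn X (Ioo 0 1) := by
    apply antitoneOn_of_deriv_nonpos (convex_Ioo _ _)
    · intro x hx
      exact (hQ x hx).2.2.continuousAt.continuousWithinAt
    · intro x hx
      exact (hQ x (interior_subset hx)).2.2.differentiableAt.differentiableWithinAt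
    · intro x hx
      have hx := interior_subset hx
      rw [(hQ x hx).2.2.deriv]
      have := one_div_pos.2 (hQ x hx).1
      linarith
  obtain ⟨w, hw, he⟩ := hX (X w0 - 1 / δ - 1)
  have hp : 0 < 1 / δ := by positivity
  rcases le_total w w0 with h | h
  · have := hXa hw hw0 h
    linarith
  · have := hXm ⟨le_rfl, hw0.2⟩ ⟨h, hw.2⟩ h
    simp only at this
    have h1 : w / δ ≤ 1 / δ := div_le_div_of_nonneg_right hw.2.le hδ0.le
    have h2 : 0 ≤ w0 / δ := div_nonneg hw0.1.le hδ0.le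
    linarith

lemma left_compare {a b : ℝ} {u v u' v' : ℝ → ℝ}
    (hu : ∀ x ∈ Icc a b, HasDerivWithinAt u (u' x) (Icc a b) x)
    (hv : ∀ x ∈ Icc a b, HasDerivWithinAt v (v' x) (Icc a b) x)
    (hb : u b ≤ v b) (h : ∀ x ∈ Icc a b, u x = v x → v' x < u' x) :
    ∀ x ∈ Icc a b, u x ≤ v x := by
  intro x hx
  have aux : ∀ {z z' : ℝ → ℝ}, (∀ x ∈ Icc a b, HasDerivWithinAt z (z' x) (Icc a b) x) →
      ContinuousOn (fun t => z (-t)) (Icc (-b) (-a)) ∧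
      ∀ t ∈ Ico (-b) (-a), HasDerivWithinAt (fun t => z (-t)) (-z' (-t)) (Ici t) t := by
    intro z z' hz
    have h1 : ∀ t ∈ Icc (-b) (-a), HasDerivWithinAt (fun t => z (-t)) (-z' (-t)) (Icc (-b) (-a)) t := by
      intro t ht
      have h2 := hz (-t) ⟨by linarith [ht.2], by linarith [ht.1]⟩
      have h3 := HasDerivWithinAt.comp t h2 (hasDerivAt_neg t).hasDerivWithinAt
        (s := Icc (-b) (-a)) (fun y hy => ⟨by linarith [hy.2], by linarith [hy.1]⟩)
      convert! h3 using 1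
      ring
    refine ⟨fun t ht => (h1 t ht).continuousWithinAt, fun t ht => ?_⟩
    apply (h1 t (Ico_subset_Icc_self ht)).mono_of_mem_nhdsWithin
    exact mem_of_superset (Icc_mem_nhdsGE ht.2) (Icc_subset_Icc_left ht.1)
  obtain ⟨u1, u2⟩ := aux hu
  obtain ⟨v1, v2⟩ := aux hv
  have := image_le_of_deriv_right_lt_deriv_boundary' (a := -b) (b := -a) u1 u2 (by simpa using hb)
    v1 v2 (fun t ht he => by
      have := h (-t) ⟨by linarith [ht.2], by linarith [ht.1]⟩ he
      simpa using this) (x := -x) ⟨by linarith [hx.2], by linarith [hx.1]⟩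
  simpa using this

lemma exists_Icc {f fh P Q : ℝ → ℝ} {a b c c0 c1 : ℝ} (ha : 0 < a) (hab : a ≤ b) (hb : b < 1)
    (hfc : ContinuousOn f (Ioo 0 1)) (hc : c < c0) (hc1 : c0 < c1)
    (hf : ∀ w ∈ Ioo (0:ℝ) 1, 0 < f w) (hfh : ∀ w ∈ Ioo (0:ℝ) 1, f w < fh w)
    (hP : ∀ w ∈ Ioo (0:ℝ) 1, 0 < P w ∧ HasDerivAt P (c - fh w / P w) w)
    (hQ : ∀ w ∈ Ioo (0:ℝ) 1, 0 < Q w ∧ HasDerivAt Q (c1 - f w / Q w) w)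
    (hQP : ∀ w ∈ Ioo (0:ℝ) 1, Q w ≤ P w) :
    ∃ p : ℝ → ℝ, p b = Q b ∧ ∀ x ∈ Icc a b, Q x ≤ p x ∧ p x ≤ P x ∧
      HasDerivWithinAt p (c0 - f x / p x) (Icc a b) x := by
  have hsub : Icc a b ⊆ Ioo 0 1 := fun x hx => ⟨ha.trans_le hx.1, hx.2.trans_lt hb⟩
  have hQc : ContinuousOn Q (Icc a b) :=
    fun x hx => (hQ x (hsub hx)).2.continuousAt.continuousWithinAt
  obtain ⟨x0, hx0, hmin⟩ := isCompact_Icc.exists_isMinOn (nonempty_Icc.2 hab) hQc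
  obtain ⟨x1, hx1, hmax⟩ := isCompact_Icc.exists_isMaxOn (nonempty_Icc.2 hab) (hfc.mono hsub)
  set m := Q x0 with hm
  set M := f x1 with hM
  have hm0 : 0 < m := (hQ x0 (hsub hx0)).1
  have hM0 : 0 < M := hf x1 (hsub hx1)
  have hmQ : ∀ x ∈ Icc a b, m ≤ Q x := fun x hx => hmin hx
  have hMf : ∀ x ∈ Icc a b, f x ≤ M := fun x hx => hmax hx
  let v : ℝ → ℝ → ℝ := fun t y => c0 - f t / max m y
  let L : NNReal := ⟨|c0| + M / m, by positivity⟩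
  let K : NNReal := ⟨M / (m * m), by positivity⟩
  let A : NNReal := ⟨(|c0| + M / m) * (b - a), mul_nonneg (by positivity) (by linarith)⟩
  have hPL : IsPicardLindelof v (tmin := a) (tmax := b) ⟨b, hab, le_rfl⟩ (Q b) A 0 L K := by
    constructor
    · intro t ht
      apply LipschitzWith.lipschitzOnWith
      apply LipschitzWith.of_dist_le_mul
      intro y z
      simp only [Real.dist_eq, v]
      have hy : 0 < max m y := lt_max_of_lt_left hm0
      have hz : 0 < max m z := lt_max_of_lt_left hm0
      have e : c0 - f t / max m y - (c0 - f t / max m z)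
          = f t / (max m y * max m z) * (max m y - max m z) := by
        field_simp
        ring
      rw [e, abs_mul]
      have h1 : |max m y - max m z| ≤ |y - z| := by
        have := abs_max_sub_max_le_abs y z m
        simpa [max_comm] using this
      have h2 : |f t / (max m y * max m z)| ≤ M / (m * m) := by
        rw [abs_of_pos (div_pos (hf t (hsub ht)) (by positivity))]
        apply div_le_div₀ hM0.le (hMf t ht) (by positivity)
        exact mul_le_mul (le_max_left _ _) (le_max_left _ _) hm0.le hy.le
      exact mul_le_mul h2 h1 (abs_nonneg _) (by positivity)
    · intro x _
      exact continuousOn_const.sub ((hfc.mono hsub).div_const _)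
    · intro t ht x _
      have h1 : f t / max m x ≤ M / m :=
        div_le_div₀ hM0.le (hMf t ht) hm0 (le_max_left _ _)
      have h2 : 0 < f t / max m x :=
        div_pos (hf t (hsub ht)) (lt_max_of_lt_left hm0)
      change |c0 - f t / max m x| ≤ |c0| + M / m
      calc |c0 - f t / max m x| ≤ |c0| + |f t / max m x| := abs_sub _ _
        _ ≤ _ := by rw [abs_of_pos h2]; linarith
    · change (|c0| + M / m) * max (b - b) (b - a) ≤ (|c0| + M / m) * (b - a) - 0
      rw [sub_self, max_eq_right (by linarith), sub_zero]
  obtain ⟨p, hpb, hpd⟩ := hPL.exists_eq_forall_mem_Icc_hasDerivWithinAt₀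
  simp only at hpb
  have hbm : b ∈ Icc a b := ⟨hab, le_rfl⟩
  have hQp : ∀ x ∈ Icc a b, Q x ≤ p x := by
    apply left_compare (fun x hx => (hQ x (hsub hx)).2.hasDerivWithinAt) hpd hpb.ge
    intro x hx he
    simp only [v]
    rw [← he, max_eq_right (hmQ x hx)]
    linarith
  have hpP : ∀ x ∈ Icc a b, p x ≤ P x := by
    apply left_compare hpd (fun x hx => (hP x (hsub hx)).2.hasDerivWithinAt)
      (hpb.le.trans (hQP b (hsub hbm)))
    intro x hx he
    simp only [v]
    rw [he, max_eq_right ((hmQ x hx).trans (hQP x (hsub hx)))]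
    have := div_lt_div_of_pos_right (hfh x (hsub hx)) (hP x (hsub hx)).1
    linarith
  refine ⟨p, hpb, fun x hx => ⟨hQp x hx, hpP x hx, ?_⟩⟩
  have := hpd x hx
  simp only [v] at this
  rwa [max_eq_right ((hmQ x hx).trans (hQp x hx))] at this

lemma exists_phase {f fh P Q : ℝ → ℝ} {c c1 : ℝ}
    (hfc : ContinuousOn f (Ioo 0 1)) (hc : c < c1)
    (hf : ∀ w ∈ Ioo (0:ℝ) 1, 0 < f w) (hfh : ∀ w ∈ Ioo (0:ℝ) 1, f w < fh w)
    (hP : ∀ w ∈ Ioo (0:ℝ) 1, 0 < P w ∧ HasDerivAt P (c - fh w / P w) w)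
    (hQ : ∀ w ∈ Ioo (0:ℝ) 1, 0 < Q w ∧ HasDerivAt Q (c1 - f w / Q w) w)
    (hQP : ∀ w ∈ Ioo (0:ℝ) 1, Q w ≤ P w) :
    ∃ p : ℝ → ℝ, ∀ w ∈ Ioo (0:ℝ) 1, 0 < p w ∧ HasDerivAt p (c - f w / p w) w ∧ p w ≤ P w := by
  let a : ℕ → ℝ := fun n => 1 / ((n : ℝ) + 3)
  let C : ℕ → ℝ := fun n => c + (c1 - c) / ((n : ℝ) + 2)
  have ha0 : ∀ n, 0 < a n := fun n => by positivity
  have ha3 : ∀ n, a n ≤ 1 / 3 := fun n => by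
    apply one_div_le_one_div_of_le (by norm_num)
    have : (0:ℝ) ≤ n := n.cast_nonneg
    linarith
  have haa : ∀ n, a (n+1) ≤ a n := fun n => by
    apply one_div_le_one_div_of_le (by positivity)
    push_cast
    linarith
  have hC0 : ∀ n, c < C n := fun n => by
    have : 0 < (c1 - c) / ((n : ℝ) + 2) := div_pos (by linarith) (by positivity)
    simp only [C]; linarith
  have hC1 : ∀ n, C n < c1 := fun n => by
    have : (c1 - c) / ((n : ℝ) + 2) < c1 - c := by
      apply div_lt_self (by linarith)
      have : (0:ℝ) ≤ n := n.cast_nonneg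
      linarith
    simp only [C]; linarith
  have hCC : ∀ n, C (n+1) < C n := fun n => by
    have : (c1 - c) / (((n+1 : ℕ) : ℝ) + 2) < (c1 - c) / ((n : ℝ) + 2) := by
      apply div_lt_div_of_pos_left (by linarith) (by positivity)
      push_cast
      linarith
    simp only [C]; linarith
  have hat : Tendsto a atTop (nhds 0) :=
    tendsto_const_nhds.div_atTop (tendsto_natCast_atTop_atTop.atTop_add tendsto_const_nhds)
  have hCt : Tendsto C atTop (nhds c) := by
    have : Tendsto (fun n : ℕ => (c1 - c) / ((n : ℝ) + 2)) atTop (nhds 0) :=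
      tendsto_const_nhds.div_atTop (tendsto_natCast_atTop_atTop.atTop_add tendsto_const_nhds)
    simpa using tendsto_const_nhds.add this
  have hex := fun n => exists_Icc (ha0 n) (by linarith [ha3 n] : a n ≤ 1 - a n)
    (by linarith [ha0 n]) hfc (hC0 n) (hC1 n) hf hfh hP hQ hQP
  choose p hpb hp using hex
  have hsub : ∀ n, Icc (a n) (1 - a n) ⊆ Ioo 0 1 := fun n x hx =>
    ⟨(ha0 n).trans_le hx.1, by linarith [hx.2, ha0 n]⟩
  have hsub1 : ∀ n, Icc (a n) (1 - a n) ⊆ Icc (a (n+1)) (1 - a (n+1)) := fun n =>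
    Icc_subset_Icc (haa n) (by linarith [haa n])
  classical
  let q : ℕ → ℝ → ℝ := fun n x => if x ∈ Icc (a n) (1 - a n) then p n x else Q x
  have hqp : ∀ n, ∀ x ∈ Icc (a n) (1 - a n), q n x = p n x := fun n x hx => if_pos hx
  have hQq : ∀ n, ∀ x ∈ Ioo (0:ℝ) 1, Q x ≤ q n x := by
    intro n x hx
    by_cases h : x ∈ Icc (a n) (1 - a n)
    · rw [hqp n x h]; exact (hp n x h).1
    · exact (if_neg h : q n x = Q x).ge
  have hqP : ∀ n, ∀ x ∈ Ioo (0:ℝ) 1, q n x ≤ P x := by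
    intro n x hx
    by_cases h : x ∈ Icc (a n) (1 - a n)
    · rw [hqp n x h]; exact (hp n x h).2.1
    · exact (if_neg h : q n x = Q x).le.trans (hQP x hx)
  have hqm : ∀ x ∈ Ioo (0:ℝ) 1, Monotone (fun n => q n x) := by
    intro x hx
    apply monotone_nat_of_le_succ
    intro n
    by_cases h : x ∈ Icc (a n) (1 - a n)
    · rw [hqp n x h, hqp (n+1) x (hsub1 n h)]
      have hbm : 1 - a n ∈ Icc (a n) (1 - a n) := ⟨by linarith [ha3 n], le_rfl⟩
      refine left_compare (fun y hy => (hp n y hy).2.2)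
        (fun y hy => (hp (n+1) y (hsub1 n hy)).2.2.mono (hsub1 n)) ?_ ?_ x h
      · rw [hpb n]
        exact (hp (n+1) _ (hsub1 n hbm)).1
      · intro y hy he
        rw [he]
        linarith [hCC n]
    · exact (if_neg h : q n x = Q x).le.trans (hQq (n+1) x hx)
  let r : ℝ → ℝ := fun x => ⨆ n, q n x
  have hrt : ∀ x ∈ Ioo (0:ℝ) 1, Tendsto (fun n => q n x) atTop (nhds (r x)) := by
    intro x hx
    exact tendsto_atTop_ciSup (hqm x hx) ⟨P x, by rintro _ ⟨n, rfl⟩; exact hqP n x hx⟩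
  have hQr : ∀ x ∈ Ioo (0:ℝ) 1, Q x ≤ r x := fun x hx =>
    ge_of_tendsto' (hrt x hx) (fun n => hQq n x hx)
  have hrP : ∀ x ∈ Ioo (0:ℝ) 1, r x ≤ P x := fun x hx =>
    le_of_tendsto' (hrt x hx) (fun n => hqP n x hx)
  refine ⟨r, fun w hw => ⟨(hQ w hw).1.trans_le (hQr w hw), ?_, hrP w hw⟩⟩
  -- a compact interval around `w`
  obtain ⟨α, hα0, hαw⟩ := exists_between hw.1
  obtain ⟨β, hwβ, hβ1⟩ := exists_between hw.2
  have hS : Icc α β ⊆ Ioo 0 1 := fun x hx => ⟨hα0.trans_le hx.1, hx.2.trans_lt hβ1⟩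
  have hαβ : α ≤ β := (hαw.trans hwβ).le
  have hQc : ContinuousOn Q (Icc α β) :=
    fun x hx => (hQ x (hS hx)).2.continuousAt.continuousWithinAt
  obtain ⟨x0, hx0, hmin⟩ := isCompact_Icc.exists_isMinOn (nonempty_Icc.2 hαβ) hQc
  obtain ⟨x1, hx1, hmax⟩ := isCompact_Icc.exists_isMaxOn (nonempty_Icc.2 hαβ) (hfc.mono hS)
  set m := Q x0 with hm
  set M := f x1 with hM
  have hm0 : 0 < m := (hQ x0 (hS hx0)).1
  have hM0 : 0 < M := hf x1 (hS hx1)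
  have hmQ : ∀ x ∈ Icc α β, m ≤ Q x := fun x hx => hmin hx
  have hMf : ∀ x ∈ Icc α β, f x ≤ M := fun x hx => hmax hx
  have hB : ∀ n, ∀ x ∈ Icc α β, ‖C n - f x / q n x‖ ≤ |c| + |c1| + M / m := by
    intro n x hx
    have h0 : m ≤ q n x := (hmQ x hx).trans (hQq n x (hS hx))
    have h1 : f x / q n x ≤ M / m := div_le_div₀ hM0.le (hMf x hx) hm0 h0
    have h2 : 0 < f x / q n x := div_pos (hf x (hS hx)) (hm0.trans_le h0)
    rw [Real.norm_eq_abs, abs_le]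
    have := hC0 n
    have := hC1 n
    have := neg_abs_le c
    have := le_abs_self c1
    have := abs_nonneg c
    have := abs_nonneg c1
    have : 0 < M / m := by positivity
    constructor <;> linarith
  have hqd : ∀ᶠ n in atTop, ∀ x ∈ Icc α β, HasDerivAt (q n) (C n - f x / q n x) x := by
    filter_upwards [hat.eventually (gt_mem_nhds hα0),
      hat.eventually (gt_mem_nhds (by linarith : 0 < 1 - β))] with n h1 h2
    intro x hx
    have hn : Icc (a n) (1 - a n) ∈ nhds x :=
      Icc_mem_nhds (by linarith [hx.1]) (by linarith [hx.2])
    have hxm := mem_of_mem_nhds hn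
    have h3 := (hp n x hxm).2.2.hasDerivAt hn
    rw [hqp n x hxm]
    apply h3.congr_of_eventuallyEq
    filter_upwards [hn] with y hy using hqp n y hy
  have hlip : ∀ x ∈ Icc α β, ∀ y ∈ Icc α β, ‖r y - r x‖ ≤ (|c| + |c1| + M / m) * ‖y - x‖ := by
    intro x hx y hy
    refine le_of_tendsto ((hrt y (hS hy)).sub (hrt x (hS hx))).norm ?_
    filter_upwards [hqd] with n hn
    exact (convex_Icc α β).norm_image_sub_le_of_norm_hasDerivWithin_le
      (fun z hz => (hn z hz).hasDerivWithinAt) (hB n) hx hy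
  have hrc : ContinuousOn r (Icc α β) := by
    have : LipschitzOnWith (⟨|c| + |c1| + M / m, by positivity⟩ : NNReal) r (Icc α β) := by
      apply LipschitzOnWith.of_dist_le_mul
      intro y hy x hx
      rw [Real.dist_eq, Real.dist_eq]
      exact hlip x hx y hy
    exact this.continuousOn
  have hgc : ContinuousOn (fun x => c - f x / r x) (Icc α β) :=
    continuousOn_const.sub ((hfc.mono hS).div hrc
      (fun x hx => ((hQ x (hS hx)).1.trans_le (hQr x (hS hx))).ne'))
  have hrint : ∀ x ∈ Icc α β, r x = r α + ∫ t in α..x, (c - f t / r t) := by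
    intro x hx
    have hsx : uIcc α x ⊆ Icc α β := by
      rw [uIcc_of_le hx.1]
      exact Icc_subset_Icc_right hx.2
    have hcn : ∀ᶠ n in atTop, ContinuousOn (fun t => C n - f t / q n t) (uIcc α x) := by
      filter_upwards [hqd] with n hn
      refine continuousOn_const.sub ((hfc.mono (hsx.trans hS)).div
        (fun t ht => (hn t (hsx ht)).continuousAt.continuousWithinAt) ?_)
      intro t ht
      exact ((hQ t (hS (hsx ht))).1.trans_le (hQq n t (hS (hsx ht)))).ne'
    have h1 : Tendsto (fun n => ∫ t in α..x, (C n - f t / q n t)) atTop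
        (nhds (∫ t in α..x, (c - f t / r t))) := by
      apply intervalIntegral.tendsto_integral_filter_of_dominated_convergence
        (fun _ => |c| + |c1| + M / m)
      · filter_upwards [hcn] with n hn
        exact (hn.mono uIoc_subset_uIcc).aestronglyMeasurable measurableSet_uIoc
      · exact Eventually.of_forall fun n => Eventually.of_forall fun t ht =>
          hB n t (hsx (uIoc_subset_uIcc ht))
      · exact intervalIntegrable_const
      · refine Eventually.of_forall fun t ht => ?_
        have ht' := hS (hsx (uIoc_subset_uIcc ht))
        exact hCt.sub (tendsto_const_nhds.div (hrt t ht')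
          ((hQ t ht').1.trans_le (hQr t ht')).ne')
    have h2 : Tendsto (fun n => ∫ t in α..x, (C n - f t / q n t)) atTop (nhds (r x - r α)) := by
      refine ((hrt x (hS hx)).sub (hrt α (hS ⟨le_rfl, hαβ⟩))).congr' ?_
      filter_upwards [hqd, hcn] with n hn hn2
      exact (intervalIntegral.integral_eq_sub_of_hasDerivAt (fun t ht => hn t (hsx ht))
        hn2.intervalIntegrable).symm
    have := tendsto_nhds_unique h1 h2
    linarith
  have hD : HasDerivAt (fun u => r α + ∫ t in α..u, (c - f t / r t)) (c - f w / r w) w := by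
    apply HasDerivAt.const_add
    apply intervalIntegral.integral_hasDerivAt_right
    · apply ContinuousOn.intervalIntegrable
      apply hgc.mono
      rw [uIcc_of_le hαw.le]
      exact Icc_subset_Icc_right hwβ.le
    · exact (hgc.mono Ioo_subset_Icc_self).stronglyMeasurableAtFilter isOpen_Ioo w ⟨hαw, hwβ⟩
    · exact hgc.continuousAt (Icc_mem_nhds hαw hwβ)
  apply hD.congr_of_eventuallyEq
  filter_upwards [Icc_mem_nhds hαw hwβ] with x hx using hrint x hx

lemma phase_front {f p P X : ℝ → ℝ} {c : ℝ} (hfc : ContinuousOn f (Ioo 0 1))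
    (hp : ∀ w ∈ Ioo (0:ℝ) 1, 0 < p w ∧ HasDerivAt p (c - f w / p w) w ∧ p w ≤ P w)
    (hPX : ∀ w ∈ Ioo (0:ℝ) 1, HasDerivAt X (-(1 / P w)) w)
    (hX : ∀ ξ, ∃ w ∈ Ioo (0:ℝ) 1, X w = ξ) : ∃ W, IsFront f c W := by
  have hpc : ContinuousOn p (Ioo 0 1) := fun w hw => (hp w hw).2.1.continuousAt.continuousWithinAt
  have hqc : ContinuousOn (fun w => -(1 / p w)) (Ioo 0 1) :=
    (continuousOn_const.div hpc (fun w hw => (hp w hw).1.ne')).neg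
  have h2 : (1/2 : ℝ) ∈ Ioo (0:ℝ) 1 := by norm_num
  set Y : ℝ → ℝ := fun w => ∫ x in (1/2 : ℝ)..w, -(1 / p x) with hY
  have hYd : ∀ w ∈ Ioo (0:ℝ) 1, HasDerivAt Y (-(1 / p w)) w := by
    intro w hw
    apply intervalIntegral.integral_hasDerivAt_right
    · apply ContinuousOn.intervalIntegrable
      exact hqc.mono (ordConnected_Ioo.uIcc_subset h2 hw)
    · exact hqc.stronglyMeasurableAtFilter isOpen_Ioo w hw
    · exact hqc.continuousAt (isOpen_Ioo.mem_nhds hw)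
  have hYs : StrictAntiOn Y (Ioo 0 1) := by
    apply strictAntiOn_of_deriv_neg (convex_Ioo _ _)
    · exact fun x hx => (hYd x hx).continuousAt.continuousWithinAt
    · intro x hx
      have hx := interior_subset hx
      rw [(hYd x hx).deriv]
      have := one_div_pos.2 (hp x hx).1
      linarith
  have hDa : AntitoneOn (fun w => Y w - X w) (Ioo 0 1) := by
    have hd : ∀ x ∈ Ioo (0:ℝ) 1, HasDerivAt (fun w => Y w - X w) (-(1 / p x) - -(1 / P x)) x :=
      fun x hx => (hYd x hx).sub (hPX x hx)
    apply antitoneOn_of_deriv_nonpos (convex_Ioo _ _)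
    · exact fun x hx => (hd x hx).continuousAt.continuousWithinAt
    · exact fun x hx => (hd x (interior_subset hx)).differentiableAt.differentiableWithinAt
    · intro x hx
      have hx := interior_subset hx
      rw [(hd x hx).deriv]
      have := one_div_le_one_div_of_le (hp x hx).1 (hp x hx).2.2
      linarith
  have hXa : AntitoneOn X (Ioo 0 1) := by
    apply antitoneOn_of_deriv_nonpos (convex_Ioo _ _)
    · exact fun x hx => (hPX x hx).continuousAt.continuousWithinAt
    · exact fun x hx => (hPX x (interior_subset hx)).differentiableAt.differentiableWithinAt
    · intro x hx
      have hx := interior_subset hx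
      rw [(hPX x hx).deriv]
      have := one_div_pos.2 ((hp x hx).1.trans_le (hp x hx).2.2)
      linarith
  have hYex : ∀ ξ, ∃ w ∈ Ioo (0:ℝ) 1, Y w = ξ := by
    intro ξ
    obtain ⟨u, hu, hu'⟩ := hX (max ξ (Y (1/2)) - Y (1/2) + X (1/2) + 1)
    obtain ⟨v, hv, hv'⟩ := hX (min ξ (Y (1/2)) - Y (1/2) + X (1/2) - 1)
    have hu2 : u ≤ 1/2 := by
      by_contra hc
      push Not at hc
      have := hXa h2 hu hc.le
      linarith [le_max_right ξ (Y (1/2))]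
    have hv2 : 1/2 ≤ v := by
      by_contra hc
      push Not at hc
      have := hXa hv h2 hc.le
      linarith [min_le_right ξ (Y (1/2))]
    have h3 : ξ ≤ Y u := by
      have := hDa hu h2 hu2
      simp only at this
      linarith [le_max_left ξ (Y (1/2))]
    have h4 : Y v ≤ ξ := by
      have := hDa h2 hv hv2
      simp only at this
      linarith [min_le_left ξ (Y (1/2))]
    have hsub : Icc u v ⊆ Ioo 0 1 := fun x hx => ⟨hu.1.trans_le hx.1, hx.2.trans_lt hv.2⟩
    have := intermediate_value_Icc' (hu2.trans hv2)
      (fun x hx => (hYd x (hsub hx)).continuousAt.continuousWithinAt : ContinuousOn Y (Icc u v))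
    obtain ⟨w, hw, he⟩ := this ⟨h4, h3⟩
    exact ⟨w, hsub hw, he⟩
  choose W hW1 hW2 using hYex
  have hWd : ∀ ξ, HasDerivAt W (- p (W ξ)) ξ := by
    intro ξ
    have := inv_deriv (s := Ioo (0:ℝ) 1) (t := univ) isOpen_Ioo isOpen_univ (g := Y) (h := W)
      (fun x hx y hy hxy => hYs hx hy hxy) (fun y _ => hW1 y) (fun y _ => hW2 y)
      (fun _ _ => mem_univ _) hYd (fun x hx => by
        have := one_div_pos.2 (hp x hx).1
        linarith) ξ (mem_univ _)
    convert! this using 1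
    simp
  have hWder : deriv W = fun ξ => - p (W ξ) := funext fun ξ => (hWd ξ).deriv
  have hWc : Continuous W := continuous_iff_continuousAt.2 fun ξ => (hWd ξ).continuousAt
  have hWdd : ∀ ξ, HasDerivAt (fun ξ => - p (W ξ)) (c * p (W ξ) - f (W ξ)) ξ := by
    intro ξ
    have h1 := (((hp _ (hW1 ξ)).2.1).comp ξ (hWd ξ)).neg
    convert! h1 using 1
    have := (hp _ (hW1 ξ)).1.ne'
    field_simp
  have hneg : ∀ ξ, deriv W ξ < 0 := by
    intro ξ
    rw [hWder]
    have := (hp _ (hW1 ξ)).1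
    simpa using this
  have hWs : StrictAnti W := strictAnti_of_deriv_neg hneg
  have hWY : ∀ w ∈ Ioo (0:ℝ) 1, W (Y w) = w := fun w hw =>
    hYs.injOn (hW1 _) hw (hW2 _)
  refine ⟨W, ?_, ?_, ?_, ?_, hneg⟩
  · have : ContDiff ℝ (1 + 1) W := by
      rw [contDiff_succ_iff_deriv]
      refine ⟨fun ξ => (hWd ξ).differentiableAt, by simp, ?_⟩
      rw [contDiff_one_iff_deriv, hWder]
      refine ⟨fun ξ => (hWdd ξ).differentiableAt, ?_⟩
      rw [show deriv (fun ξ => - p (W ξ)) = fun ξ => c * p (W ξ) - f (W ξ) from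
        funext fun ξ => (hWdd ξ).deriv]
      exact (continuous_const.mul (hpc.comp_continuous hWc hW1)).sub (hfc.comp_continuous hWc hW1)
    simpa [one_add_one_eq_two] using this
  · intro ξ
    rw [hWder, (hWdd ξ).deriv]
    ring
  · apply tendsto_order.2 ⟨fun a ha => ?_, fun a ha => ?_⟩
    · have hm : max a (1/2) ∈ Ioo (0:ℝ) 1 := ⟨lt_max_of_lt_right h2.1, max_lt ha h2.2⟩
      filter_upwards [Iio_mem_atBot (Y (max a (1/2)))] with ξ hξ
      have := hWs hξ
      rw [hWY _ hm] at this
      exact (le_max_left _ _).trans_lt this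
    · exact Eventually.of_forall fun ξ => (hW1 ξ).2.trans ha
  · apply tendsto_order.2 ⟨fun a ha => ?_, fun a ha => ?_⟩
    · exact Eventually.of_forall fun ξ => ha.trans (hW1 ξ).1
    · have hm : min a (1/2) ∈ Ioo (0:ℝ) 1 := ⟨lt_min ha h2.1, min_lt_of_right_lt h2.2⟩
      filter_upwards [Ioi_mem_atTop (Y (min a (1/2)))] with ξ hξ
      have := hWs hξ
      rw [hWY _ hm] at this
      exact this.trans_le (min_le_left _ _)

/-- Under (A1)-(A3), the minimal traveling wave speed is nondecreasing in the parameter. -/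
theorem cstar_monotone
    (f : ℝ → ℝ → ℝ) (cstar : ℝ → ℝ)
    -- (A1)
    (hA1 : ∀ s, 0 ≤ s →
      ContDiffOn ℝ 2 (fun w => f w s) (Icc 0 1) ∧
      f 0 s = 0 ∧ f 1 s = 0 ∧
      derivWithin (fun w => f w s) (Icc 0 1) 0 = 1 ∧
      derivWithin (fun w => f w s) (Icc 0 1) 1 < 0 ∧
      (∀ w ∈ Ioo (0:ℝ) 1, 0 < f w s))
    -- (A2)
    (hA2 : ∃ L₀ > (0:ℝ), ∀ n : ℕ, n ≤ 2 → ∀ w ∈ Icc (0:ℝ) 1, ∀ sa sb : ℝ, 0 ≤ sa → 0 ≤ sb →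
      |iteratedDerivWithin n (fun w => f w sa) (Icc 0 1) w -
        iteratedDerivWithin n (fun w => f w sb) (Icc 0 1) w| ≤ L₀ * |sa - sb|)
    -- (A3)
    (hA3 : ∀ s sh : ℝ, 0 ≤ s → s < sh →
      (∀ w ∈ Ioo (0:ℝ) 1, f w s < f w sh) ∧
      iteratedDerivWithin 2 (fun w => f w s) (Icc 0 1) 0 <
        iteratedDerivWithin 2 (fun w => f w sh) (Icc 0 1) 0)
    -- minimal-speed characterization
    (hmin : ∀ s, 0 ≤ s → 2 ≤ cstar s ∧
      ∀ c, (∃ W : ℝ → ℝ, IsFront (fun w => f w s) c W) ↔ cstar s ≤ c) :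
    ∀ s sh : ℝ, 0 ≤ s → s ≤ sh → cstar s ≤ cstar sh := by
  intro s sh hs hle
  rcases hle.eq_or_lt with rfl | hlt
  · exact le_rfl
  have hsh : 0 ≤ sh := hs.trans hle
  by_contra hcon
  push Not at hcon
  obtain ⟨Wh, hWh⟩ := ((hmin sh hsh).2 _).2 le_rfl
  obtain ⟨W, hW⟩ := ((hmin s hs).2 _).2 le_rfl
  obtain ⟨XP, P, hP, hXP⟩ := front_phase hWh
  obtain ⟨XQ, Q, hQ, hXQ⟩ := front_phase hW
  obtain ⟨hfc, -, -, -, -, hf⟩ := hA1 s hs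
  have hfh := (hA3 s sh hs hlt).1
  have hfc' : ContinuousOn (fun w => f w s) (Ioo 0 1) :=
    hfc.continuousOn.mono Ioo_subset_Icc_self
  have hP' := fun w hw => (⟨(hP w hw).1, (hP w hw).2.1⟩ : 0 < P w ∧ _)
  have hQP := phase_order hcon hf hfh hP' hQ hXQ
  obtain ⟨p, hp⟩ := exists_phase hfc' hcon hf hfh hP'
    (fun w hw => ⟨(hQ w hw).1, (hQ w hw).2.1⟩) hQP
  obtain ⟨V, hV⟩ := phase_front hfc' hp (fun w hw => (hP w hw).2.2) hXP
  have := ((hmin s hs).2 _).1 ⟨V, hV⟩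
  linarith
end
end

section
/- Assume (A1)–(A2). Then the map s ↦ c*(s) is continuous on [0,∞). -/
open Filter Asymptotics MeasureTheory Set

noncomputable section

/-- If `d a < 0` and `d' ≤ 0` whenever `d < 0`, then `d` stays below `d a / 2`. -/
lemma stay_neg {d d' : ℝ → ℝ} {a b : ℝ} (hab : a ≤ b) (hd : ContinuousOn d (Icc a b))
    (hd' : ∀ x ∈ Ico a b, HasDerivWithinAt d (d' x) (Ici x) x)
    (ha : d a < 0) (hneg : ∀ x ∈ Ico a b, d x < 0 → d' x ≤ 0) : d b ≤ d a / 2 := by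
  rcases hab.eq_or_lt with rfl | hlt
  · linarith
  have hpos : 0 < b - a := by linarith
  set ε : ℝ := -d a / (2 * (b - a)) with hε
  have hεpos : 0 < ε := by apply div_pos <;> linarith
  have hεb : ε * (b - a) = - d a / 2 := by rw [hε]; field_simp
  have key := image_le_of_deriv_right_lt_deriv_boundary (B := fun x => d a + ε * (x - a))
    (B' := fun _ => ε) hd hd' (by simp)
    (fun x => by
      have := (((hasDerivAt_id x).sub_const a).const_mul ε).const_add (d a)
      simpa using this)
    (fun x hx hxe => by
      have h1 : ε * (x - a) ≤ ε * (b - a) :=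
        mul_le_mul_of_nonneg_left (by linarith [hx.2]) hεpos.le
      have := hneg x hx (by linarith)
      linarith) (right_mem_Icc.2 hab)
  linarith

/-- regularised square root -/
def hreg (e y : ℝ) : ℝ := √(max y 0 + e ^ 2)

lemma hreg_mono (e : ℝ) {x y : ℝ} (h : x ≤ y) : hreg e x ≤ hreg e y := by
  unfold hreg
  apply Real.sqrt_le_sqrt
  gcongr

lemma hreg_mono_e {e e' : ℝ} (he : 0 ≤ e) (hee : e ≤ e') (x : ℝ) : hreg e x ≤ hreg e' x := by
  unfold hreg
  apply Real.sqrt_le_sqrt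
  gcongr

lemma sqrt_le_hreg (e x : ℝ) : √x ≤ hreg e x := by
  unfold hreg
  apply Real.sqrt_le_sqrt
  have := le_max_left x 0
  nlinarith [sq_nonneg e]

lemma hreg_le {e : ℝ} (he : 0 ≤ e) (x : ℝ) : hreg e x ≤ √x + e := by
  unfold hreg
  apply Real.sqrt_le_iff.2
  have h0 := Real.sqrt_nonneg x
  refine ⟨by positivity, ?_⟩
  have : max x 0 = √x ^ 2 := by
    rcases le_total 0 x with h | h
    · rw [Real.sq_sqrt h, max_eq_left h]
    · rw [Real.sqrt_eq_zero_of_nonpos h, max_eq_right h]; simp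
  rw [this]
  nlinarith [mul_nonneg h0 he]

lemma le_hreg {e : ℝ} (he : 0 ≤ e) (x : ℝ) : e ≤ hreg e x := by
  unfold hreg
  apply Real.le_sqrt_of_sq_le
  have := le_max_right x 0
  linarith

lemma hreg_sq (e x : ℝ) : hreg e x ^ 2 = max x 0 + e ^ 2 := by
  unfold hreg
  rw [Real.sq_sqrt]
  have := le_max_right x 0
  positivity

lemma hreg_lip {e : ℝ} (he : 0 < e) (x y : ℝ) : |hreg e x - hreg e y| ≤ e⁻¹ * |x - y| := by
  have h1 := hreg_sq e x
  have h2 := hreg_sq e y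
  have h3 := le_hreg he.le x
  have h4 := le_hreg he.le y
  have h5 : |max x 0 - max y 0| ≤ |x - y| := abs_max_sub_max_le_abs x y 0
  have h6 : (hreg e x - hreg e y) * (hreg e x + hreg e y) = max x 0 - max y 0 := by
    linear_combination h1 - h2
  rw [inv_mul_eq_div, le_div_iff₀ he]
  have h7 : |hreg e x - hreg e y| * (hreg e x + hreg e y) = |max x 0 - max y 0| := by
    rw [← h6, abs_mul, abs_of_pos (by linarith : 0 < hreg e x + hreg e y)]
  nlinarith [abs_nonneg (hreg e x - hreg e y)]

lemma exists_yreg (g : ℝ → ℝ) (hg : ContinuousOn g (Icc 0 1)) (c : ℝ) (hc : 0 ≤ c)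
    (e : ℝ) (he : 0 < e) (he1 : e ≤ 1) :
    ∃ y : ℝ → ℝ, y 1 = 0 ∧ ∀ w ∈ Icc (0:ℝ) 1,
      HasDerivWithinAt y (2 * c * hreg e (y w) - 2 * g w) (Icc 0 1) w := by
  obtain ⟨G, hG⟩ := isCompact_Icc.exists_bound_of_continuousOn hg
  have hG0 : 0 ≤ G := (norm_nonneg _).trans (hG 0 (by simp))
  set A : ℝ := 2 * c + 2 + 2 * G with hA
  have hA0 : 0 ≤ A := by positivity
  have hp : IsPicardLindelof (fun w y => 2 * c * hreg e y - 2 * g w)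
      (⟨1, by simp⟩ : Icc (0:ℝ) 1) (0:ℝ) (Real.toNNReal (A ^ 2)) 0 (Real.toNNReal (A ^ 2))
      (Real.toNNReal (2 * c * e⁻¹)) := by
    refine ⟨?_, ?_, ?_, ?_⟩
    · intro t ht
      apply LipschitzOnWith.of_dist_le_mul
      intro x _ y _
      rw [Real.coe_toNNReal _ (by positivity), Real.dist_eq, Real.dist_eq]
      have := hreg_lip he x y
      have e1 : 2 * c * hreg e x - 2 * g t - (2 * c * hreg e y - 2 * g t)
        = 2 * c * (hreg e x - hreg e y) := by ring
      rw [e1, abs_mul, abs_of_nonneg (by positivity : 0 ≤ 2 * c), mul_assoc (2 * c)]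
      exact mul_le_mul_of_nonneg_left this (by positivity)
    · intro x _
      exact continuousOn_const.sub (continuousOn_const.mul hg)
    · intro t ht x hx
      rw [Real.coe_toNNReal _ (by positivity)] at *
      have hx' : |x| ≤ A ^ 2 := by simpa using hx
      have h1 := hG t ht
      rw [Real.norm_eq_abs] at *
      have h2 : hreg e x ≤ A + 1 := by
        refine (hreg_le he.le x).trans ?_
        have : √x ≤ A := by
          rw [Real.sqrt_le_left hA0]
          exact (le_abs_self x).trans hx'
        linarith
      have h3 := le_hreg he.le x
      have h4 : 2 * c * hreg e x ≤ 2 * c * (A + 1) := by gcongr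
      have h5 : 0 ≤ 2 * c * hreg e x := by
        have : 0 ≤ hreg e x := by linarith
        positivity
      rw [abs_le] at *
      constructor <;> nlinarith [mul_nonneg hc hG0, mul_nonneg hG0 hG0, mul_nonneg hc hc]
    · simp
  obtain ⟨y, hy0, hy⟩ := hp.exists_eq_forall_mem_Icc_hasDerivWithinAt₀
  exact ⟨y, hy0, hy⟩

lemma Icc_to_Ici {y : ℝ → ℝ} {y' w : ℝ} (hw : w ∈ Ico (0:ℝ) 1)
    (h : HasDerivWithinAt y y' (Icc 0 1) w) : HasDerivWithinAt y y' (Ici w) w := by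
  apply h.mono_of_mem_nhdsWithin
  filter_upwards [Icc_mem_nhdsGE hw.2] with x hx
  exact ⟨hw.1.trans hx.1, hx.2⟩

lemma yreg_mono {g : ℝ → ℝ} {c : ℝ} (hc : 0 ≤ c) {e e' : ℝ} (he : 0 < e) (hee : e ≤ e')
    {y y' : ℝ → ℝ} (h1 : y 1 = 0) (h1' : y' 1 = 0)
    (hy : ∀ w ∈ Icc (0:ℝ) 1,
      HasDerivWithinAt y (2 * c * hreg e (y w) - 2 * g w) (Icc 0 1) w)
    (hy' : ∀ w ∈ Icc (0:ℝ) 1,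
      HasDerivWithinAt y' (2 * c * hreg e' (y' w) - 2 * g w) (Icc 0 1) w) :
    ∀ w ∈ Icc (0:ℝ) 1, y' w ≤ y w := by
  intro w hw
  by_contra! hlt
  have := stay_neg (d := fun x => y x - y' x) (a := w) (b := 1)
    (d' := fun x => (2 * c * hreg e (y x) - 2 * g x) - (2 * c * hreg e' (y' x) - 2 * g x))
    hw.2 (fun x hx => by
      have hx' : x ∈ Icc (0:ℝ) 1 := ⟨hw.1.trans hx.1, hx.2⟩
      exact (((hy x hx').continuousWithinAt).sub ((hy' x hx').continuousWithinAt)).mono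
        (Icc_subset_Icc_left hw.1))
    (fun x hx => by
      have hx' : x ∈ Ico (0:ℝ) 1 := ⟨hw.1.trans hx.1, hx.2⟩
      exact (Icc_to_Ici hx' (hy x (Ico_subset_Icc_self hx'))).sub
        (Icc_to_Ici hx' (hy' x (Ico_subset_Icc_self hx'))))
    (by simpa using hlt)
    (fun x hx hxn => by
      have h2 : hreg e (y x) ≤ hreg e' (y' x) :=
        (hreg_mono_e he.le hee _).trans (hreg_mono e' (by linarith))
      have := mul_le_mul_of_nonneg_left h2 (by positivity : 0 ≤ 2 * c)
      linarith)
  simp only [h1, h1'] at this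
  linarith

lemma yreg_close {g : ℝ → ℝ} {c : ℝ} (hc : 0 ≤ c) {e e' : ℝ} (he : 0 < e) (hee : e ≤ e')
    {y y' : ℝ → ℝ} (h1 : y 1 = 0) (h1' : y' 1 = 0)
    (hy : ∀ w ∈ Icc (0:ℝ) 1,
      HasDerivWithinAt y (2 * c * hreg e (y w) - 2 * g w) (Icc 0 1) w)
    (hy' : ∀ w ∈ Icc (0:ℝ) 1,
      HasDerivWithinAt y' (2 * c * hreg e' (y' w) - 2 * g w) (Icc 0 1) w) :
    ∀ w ∈ Icc (0:ℝ) 1, |y w - y' w| ≤ 2 * c * e' := by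
  have hm := yreg_mono hc he hee h1 h1' hy hy'
  have hD : ∀ w ∈ Icc (0:ℝ) 1, HasDerivWithinAt (fun x => y x - y' x + 2 * c * e' * x)
      ((2 * c * hreg e (y w) - 2 * g w) - (2 * c * hreg e' (y' w) - 2 * g w) + 2 * c * e')
      (Icc 0 1) w := fun w hw => by
    have := ((hy w hw).sub (hy' w hw)).add
      (((hasDerivAt_id w).const_mul (2 * c * e')).hasDerivWithinAt)
    exact this.congr_deriv (by ring)
  have mono : MonotoneOn (fun x => y x - y' x + 2 * c * e' * x) (Icc 0 1) := by
    apply monotoneOn_of_hasDerivWithinAt_nonneg (convex_Icc 0 1)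
      (fun w hw => (hD w hw).continuousWithinAt)
      (fun w hw => (hD w (interior_subset hw)).mono interior_subset)
    intro w hw
    have hw' := interior_subset hw
    have h2 : hreg e' (y' w) ≤ hreg e (y w) + e' :=
      (hreg_le (he.le.trans hee) _).trans (by
        have := (Real.sqrt_le_sqrt (hm w hw')).trans (sqrt_le_hreg e (y w))
        linarith)
    have := mul_le_mul_of_nonneg_left h2 (by positivity : 0 ≤ 2 * c)
    linarith
  intro w hw
  have h3 := mono hw (right_mem_Icc.2 zero_le_one) hw.2
  simp only [h1, h1'] at h3
  have h4 : 0 ≤ 2 * c * e' := by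
    have : 0 ≤ e' := he.le.trans hee
    positivity
  have h5 := mul_nonneg h4 hw.1
  rw [abs_le]
  constructor
  · linarith [hm w hw]
  · linarith

lemma abs_sqrt_sub (x y : ℝ) : |√x - √y| ≤ √|x - y| := by
  wlog h : y ≤ x generalizing x y
  · rw [abs_sub_comm, abs_sub_comm x y]; exact this y x (by linarith)
  rw [abs_of_nonneg (by linarith [Real.sqrt_le_sqrt h]), abs_of_nonneg (by linarith)]
  rw [sub_le_iff_le_add]
  apply Real.sqrt_le_iff.2
  have h0 := Real.sqrt_nonneg y
  have h1 := Real.sqrt_nonneg (x - y)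
  have h2 := Real.sq_sqrt (by linarith : 0 ≤ x - y)
  refine ⟨by positivity, ?_⟩
  rcases le_total 0 y with hy | hy
  · have h3 := Real.sq_sqrt hy
    nlinarith [mul_nonneg h0 h1]
  · rw [Real.sqrt_eq_zero_of_nonpos hy]
    nlinarith

lemma exists_y (g : ℝ → ℝ) (hg : ContinuousOn g (Icc 0 1)) (c : ℝ) (hc : 0 ≤ c) :
    ∃ y : ℝ → ℝ, ContinuousOn y (Icc 0 1) ∧ y 1 = 0 ∧
      ∀ w ∈ Ioo (0:ℝ) 1, HasDerivAt y (2 * c * √(y w) - 2 * g w) w := by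
  set e : ℕ → ℝ := fun n => 1 / ((n:ℝ) + 1) with he
  have he0 : ∀ n, 0 < e n := fun n => by positivity
  have he1 : ∀ n, e n ≤ 1 := fun n => by
    simp only [he]
    rw [div_le_one (by positivity)]
    have : (0:ℝ) ≤ n := by positivity
    linarith
  have hea : ∀ m n, m ≤ n → e n ≤ e m := fun m n h => Nat.one_div_le_one_div h
  have het : Tendsto e atTop (nhds 0) := tendsto_one_div_add_atTop_nhds_zero_nat
  choose Y hY1 hY using fun n => exists_yreg g hg c hc (e n) (he0 n) (he1 n)
  have hcl : ∀ m n, m ≤ n → ∀ w ∈ Icc (0:ℝ) 1, |Y n w - Y m w| ≤ 2 * c * e m :=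
    fun m n h => yreg_close hc (he0 n) (hea m n h) (hY1 n) (hY1 m) (hY n) (hY m)
  have hect : Tendsto (fun n => 2 * c * e n) atTop (nhds 0) := by
    simpa using het.const_mul (2 * c)
  have hlim : ∀ w, ∃ l, w ∈ Icc (0:ℝ) 1 → Tendsto (fun n => Y n w) atTop (nhds l) := by
    intro w
    by_cases hw : w ∈ Icc (0:ℝ) 1
    · have : CauchySeq (fun n => Y n w) := by
        refine cauchySeq_of_le_tendsto_0' (fun n => 2 * c * e n) ?_ hect
        intro n m h
        rw [dist_comm, Real.dist_eq]
        exact hcl n m h w hw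
      obtain ⟨l, hl⟩ := cauchySeq_tendsto_of_complete this
      exact ⟨l, fun _ => hl⟩
    · exact ⟨0, fun h => absurd h hw⟩
  choose y hy using hlim
  have hyc : ∀ n, ∀ w ∈ Icc (0:ℝ) 1, |y w - Y n w| ≤ 2 * c * e n := by
    intro n w hw
    refine le_of_tendsto (((hy w hw).sub_const (Y n w)).abs) ?_
    filter_upwards [eventually_ge_atTop n] with m hm
    exact hcl n m hm w hw
  have hu : TendstoUniformlyOn Y y atTop (Icc 0 1) := by
    rw [Metric.tendstoUniformlyOn_iff]
    intro ε hε
    filter_upwards [hect.eventually (gt_mem_nhds hε)] with n hn w hw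
    rw [Real.dist_eq]
    exact (hyc n w hw).trans_lt hn
  refine ⟨y, hu.continuousOn (Frequently.of_forall fun n w hw => (hY n w hw).continuousWithinAt),
    ?_, ?_⟩
  · have h := hy 1 (by simp)
    simp only [hY1] at h
    exact tendsto_nhds_unique h tendsto_const_nhds
  · intro w hw
    refine hasDerivAt_of_tendstoUniformlyOn (l := atTop) isOpen_Ioo
      (f := Y) (f' := fun n w => 2 * c * hreg (e n) (Y n w) - 2 * g w) 
      (g' := fun w => 2 * c * √(y w) - 2 * g w) ?_ ?_ ?_ hw
    · rw [Metric.tendstoUniformlyOn_iff]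
      intro ε hε
      have ht : Tendsto (fun n => 2 * c * (e n + √(2 * c * e n))) atTop (nhds 0) := by
        have := (het.add hect.sqrt).const_mul (2 * c)
        simpa using this
      filter_upwards [ht.eventually (gt_mem_nhds hε)] with n hn x hx
      refine lt_of_le_of_lt ?_ hn
      have h1 := (abs_sqrt_sub (y x) (Y n x)).trans
        (Real.sqrt_le_sqrt (hyc n x (Ioo_subset_Icc_self hx)))
      have h2 := hreg_le (he0 n).le (Y n x)
      have h3 := sqrt_le_hreg (e n) (Y n x)
      rw [Real.dist_eq]
      have e1 : 2 * c * √(y x) - 2 * g x - (2 * c * hreg (e n) (Y n x) - 2 * g x)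
        = 2 * c * (√(y x) - hreg (e n) (Y n x)) := by ring
      rw [e1, abs_mul, abs_of_nonneg (by positivity : 0 ≤ 2 * c)]
      refine mul_le_mul_of_nonneg_left ?_ (by positivity)
      rw [abs_le] at *
      constructor <;> linarith [(he0 n)]
    · filter_upwards with n x hx
      exact (hY n x (Ioo_subset_Icc_self hx)).hasDerivAt (Icc_mem_nhds hx.1 hx.2)
    · intro x hx
      exact hy x (Ioo_subset_Icc_self hx)

lemma y_pos {g y : ℝ → ℝ} {c : ℝ} (hgpos : ∀ w ∈ Ioo (0:ℝ) 1, 0 < g w)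
    (hyc : ContinuousOn y (Icc 0 1)) (hy1 : y 1 = 0)
    (hy : ∀ w ∈ Ioo (0:ℝ) 1, HasDerivAt y (2 * c * √(y w) - 2 * g w) w) :
    ∀ w ∈ Ioo (0:ℝ) 1, 0 < y w := by
  have key : ∀ w ∈ Ioo (0:ℝ) 1, ¬ y w < 0 := by
    intro w hw hneg
    have := stay_neg (d := y) (d' := fun w => 2 * c * √(y w) - 2 * g w) hw.2.le
      (hyc.mono (Icc_subset_Icc_left hw.1.le))
      (fun x hx => (hy x ⟨hw.1.trans_le hx.1, hx.2⟩).hasDerivWithinAt) hneg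
      (fun x hx hxn => by
        have h1 := hgpos x ⟨hw.1.trans_le hx.1, hx.2⟩
        simp only [Real.sqrt_eq_zero_of_nonpos hxn.le]
        linarith)
    linarith
  intro w hw
  by_contra! hle
  have h0 : y w = 0 := le_antisymm hle (not_lt.1 (key w hw))
  have hd := hy w hw
  have hg := hgpos w hw
  rw [h0] at hd
  have hd' : 2 * c * √0 - 2 * g w < 0 := by simp [hg]
  have hs := hd.hasDerivWithinAt (s := Ici w)
  have hs2 := hd.tendsto_slope.mono_left (nhdsGT_le_nhdsNE w)
  have h3 := hs2.eventually (gt_mem_nhds hd')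
  obtain ⟨x, hx, hx1, hx2⟩ := (h3.and (Ioo_mem_nhdsGT hw.2)).exists
  rw [slope_def_field, h0, sub_zero] at hx
  refine key x ⟨hw.1.trans hx1, hx2⟩ ?_
  by_contra! hcon
  have := div_nonneg hcon (by linarith : 0 ≤ x - w)
  linarith

lemma front_mem {g V : ℝ → ℝ} {c : ℝ} (hV : IsFront g c V) (ξ : ℝ) : V ξ ∈ Ioo (0:ℝ) 1 := by
  obtain ⟨h1, h2, h3, h4, h5⟩ := hV
  have anti : StrictAnti V := strictAnti_of_deriv_neg h5
  constructor
  · have := anti.antitone.le_of_tendsto h4 (ξ + 1)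
    have h := anti (lt_add_one ξ)
    linarith
  · have := anti.antitone.ge_of_tendsto h3 (ξ - 1)
    have h := anti (sub_one_lt ξ)
    linarith

lemma y_le {g g₂ y V : ℝ → ℝ} {c : ℝ} (hc : 0 ≤ c)
    (hle : ∀ w ∈ Ioo (0:ℝ) 1, g w ≤ g₂ w)
    (hyc : ContinuousOn y (Icc 0 1)) (hy1 : y 1 = 0)
    (hy : ∀ w ∈ Ioo (0:ℝ) 1, HasDerivAt y (2 * c * √(y w) - 2 * g w) w)
    (hV : IsFront g₂ c V) (ξ : ℝ) : y (V ξ) ≤ (deriv V ξ) ^ 2 := by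
  have hmem := front_mem hV
  obtain ⟨h1, h2, h3, h4, h5⟩ := hV
  have hV1 : ∀ x, HasDerivAt V (deriv V x) x := fun x =>
    ((h1.differentiable (by norm_num)) x).hasDerivAt
  have hV2 : ∀ x, HasDerivAt (deriv V) (deriv (deriv V) x) x := fun x =>
    ((h1.differentiable_deriv_two) x).hasDerivAt
  by_contra! hlt
  -- time-reversed difference
  set d : ℝ → ℝ := fun t => (deriv V (-t)) ^ 2 - y (V (-t)) with hd
  set d' : ℝ → ℝ := fun t => -(2 * deriv V (-t) * deriv (deriv V) (-t)
    - (2 * c * √(y (V (-t))) - 2 * g (V (-t))) * deriv V (-t)) with hd'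
  have hdd : ∀ t, HasDerivAt d (d' t) t := by
    intro t
    have ha : HasDerivAt (fun x => (deriv V x) ^ 2 - y (V x))
      (2 * deriv V (-t) * deriv (deriv V) (-t)
        - (2 * c * √(y (V (-t))) - 2 * g (V (-t))) * deriv V (-t)) (-t) := by
      have := ((hV2 (-t)).pow 2).sub ((hy _ (hmem (-t))).comp (-t) (hV1 (-t)))
      exact this.congr_deriv (by push_cast; ring)
    have := ha.comp t (hasDerivAt_neg t)
    exact this.congr_deriv (by simp only [hd']; ring)
  have hstay : ∀ t, -ξ ≤ t → d t ≤ d (-ξ) / 2 := by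
    intro t ht
    refine stay_neg (d' := d') ht (fun x _ => (hdd x).continuousAt.continuousWithinAt)
      (fun x _ => (hdd x).hasDerivWithinAt) (by simp only [hd, neg_neg]; linarith) ?_
    intro x _ hxn
    simp only [hd] at hxn
    simp only [hd']
    have e1 := h2 (-x)
    have e2 := h5 (-x)
    have e3 := hle _ (hmem (-x))
    have e4 : - deriv V (-x) ≤ √(y (V (-x))) := by
      apply Real.le_sqrt_of_sq_le
      nlinarith
    have e5 : deriv (deriv V) (-x) = - c * deriv V (-x) - g₂ (V (-x)) := by linarith
    rw [e5]
    have e6 := mul_le_mul_of_nonneg_left e4 hc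
    nlinarith
  have hlim : Tendsto (fun t => - y (V (-t))) atTop (nhds 0) := by
    have a1 : Tendsto (fun t : ℝ => V (-t)) atTop (nhds 1) := h3.comp tendsto_neg_atTop_atBot
    have a2 : Tendsto (fun t : ℝ => V (-t)) atTop (nhdsWithin 1 (Icc 0 1)) :=
      tendsto_nhdsWithin_iff.2 ⟨a1, Eventually.of_forall fun t => Ioo_subset_Icc_self (hmem _)⟩
    have a3 := (hyc 1 (by simp)).tendsto.comp a2
    rw [hy1] at a3
    simpa using a3.neg
  have hneg : d (-ξ) < 0 := by simp only [hd, neg_neg]; linarith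
  have : (0:ℝ) ≤ d (-ξ) / 2 := by
    refine le_of_tendsto hlim ?_
    filter_upwards [eventually_ge_atTop (-ξ)] with t ht
    have := hstay t ht
    simp only [hd] at this ⊢
    nlinarith [sq_nonneg (deriv V (-t))]
  linarith

lemma y_zero {g g₂ y V : ℝ → ℝ} {c : ℝ} (hc : 0 ≤ c) (hgpos : ∀ w ∈ Ioo (0:ℝ) 1, 0 < g w)
    (hle : ∀ w ∈ Ioo (0:ℝ) 1, g w ≤ g₂ w)
    (hyc : ContinuousOn y (Icc 0 1)) (hy1 : y 1 = 0)
    (hy : ∀ w ∈ Ioo (0:ℝ) 1, HasDerivAt y (2 * c * √(y w) - 2 * g w) w)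
    (hV : IsFront g₂ c V) : y 0 = 0 := by
  have hyV := y_le hc hle hyc hy1 hy hV
  have hpos := y_pos hgpos hyc hy1 hy
  have hmem := front_mem hV
  obtain ⟨h1, h2, h3, h4, h5⟩ := hV
  have hmvt : ∀ n : ℕ, ∃ x ∈ Ioo (n:ℝ) (n + 1), deriv V x = V (n + 1) - V n := by
    intro n
    obtain ⟨x, hx, hx'⟩ := exists_deriv_eq_slope V (lt_add_one (n:ℝ)) h1.continuous.continuousOn
      (h1.differentiable (by norm_num)).differentiableOn
    refine ⟨x, hx, ?_⟩
    rw [hx']; simp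
  choose x hx hx' using hmvt
  have hxt : Tendsto x atTop atTop :=
    tendsto_atTop_mono (fun n => (hx n).1.le) tendsto_natCast_atTop_atTop
  have hdt : Tendsto (fun n => (deriv V (x n)) ^ 2) atTop (nhds 0) := by
    have a1 : Tendsto (fun n : ℕ => V (n:ℝ)) atTop (nhds 0) := h4.comp tendsto_natCast_atTop_atTop
    have a2 : Tendsto (fun n : ℕ => V ((n:ℝ) + 1)) atTop (nhds 0) :=
      h4.comp (tendsto_atTop_add_const_right _ _ tendsto_natCast_atTop_atTop)
    have := (a2.sub a1).pow 2
    simpa [hx'] using this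
  have hyt : Tendsto (fun n => y (V (x n))) atTop (nhds (y 0)) := by
    have a2 : Tendsto (fun n => V (x n)) atTop (nhdsWithin 0 (Icc 0 1)) :=
      tendsto_nhdsWithin_iff.2 ⟨h4.comp hxt,
        Eventually.of_forall fun t => Ioo_subset_Icc_self (hmem _)⟩
    exact (hyc 0 (by simp)).tendsto.comp a2
  apply le_antisymm
  · exact le_of_tendsto_of_tendsto' hyt hdt (fun n => hyV (x n))
  · exact ge_of_tendsto' hyt (fun n => (hpos _ (hmem _)).le)

lemma exists_inverse {q : ℝ → ℝ} {K c : ℝ} (hc : 0 < c) (hK : 0 < K)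
    (hqc : ContinuousOn q (Ioo 0 1)) (hqpos : ∀ w ∈ Ioo (0:ℝ) 1, 0 < q w)
    (hq0 : ∀ w ∈ Ioo (0:ℝ) 1, q w ≤ c * w) (hq1 : ∀ w ∈ Ioo (0:ℝ) 1, q w ≤ K * (1 - w)) :
    ∃ U : ℝ → ℝ, (∀ ξ, U ξ ∈ Ioo (0:ℝ) 1) ∧ (∀ ξ, HasDerivAt U (q (U ξ)) ξ) ∧
      Tendsto U atTop (nhds 1) ∧ Tendsto U atBot (nhds 0) := by
  have hic : ContinuousOn (fun w => (q w)⁻¹) (Ioo 0 1) := hqc.inv₀ fun w hw => (hqpos w hw).ne'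
  set Φ : ℝ → ℝ := fun w => ∫ u in (1/2:ℝ)..w, (q u)⁻¹ with hΦ
  have hΦd : ∀ w ∈ Ioo (0:ℝ) 1, HasDerivAt Φ (q w)⁻¹ w := by
    intro w hw
    have hsub : uIcc (1/2:ℝ) w ⊆ Ioo 0 1 := by
      apply (ordConnected_Ioo).uIcc_subset _ hw
      constructor <;> norm_num
    apply intervalIntegral.integral_hasDerivAt_right
    · exact (hic.mono hsub).intervalIntegrable
    · exact hic.stronglyMeasurableAtFilter isOpen_Ioo w hw
    · exact hic.continuousAt (isOpen_Ioo.mem_nhds hw)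
  have hΦc : ContinuousOn Φ (Ioo 0 1) := fun w hw => (hΦd w hw).continuousAt.continuousWithinAt
  have hΦm : StrictMonoOn Φ (Ioo 0 1) := by
    apply strictMonoOn_of_deriv_pos (convex_Ioo 0 1) hΦc
    intro w hw
    rw [interior_Ioo] at hw
    rw [(hΦd w hw).deriv]
    exact inv_pos.2 (hqpos w hw)
  have hhalf : (1/2:ℝ) ∈ Ioo (0:ℝ) 1 := by constructor <;> norm_num
  -- lower bound
  have hmon0 : MonotoneOn (fun w => Φ w - c⁻¹ * Real.log w) (Ioo 0 1) := by
    have hd : ∀ w ∈ Ioo (0:ℝ) 1, HasDerivAt (fun w => Φ w - c⁻¹ * Real.log w)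
        ((q w)⁻¹ - c⁻¹ * w⁻¹) w := fun w hw =>
      (hΦd w hw).sub ((Real.hasDerivAt_log hw.1.ne').const_mul _)
    apply monotoneOn_of_deriv_nonneg (convex_Ioo 0 1)
      (fun w hw => (hd w hw).continuousAt.continuousWithinAt)
    · rw [interior_Ioo]; exact fun w hw => (hd w hw).differentiableAt.differentiableWithinAt
    · rw [interior_Ioo]; intro w hw
      rw [(hd w hw).deriv, ← mul_inv, sub_nonneg]
      exact inv_anti₀ (hqpos w hw) (hq0 w hw)
  have hmon1 : MonotoneOn (fun w => Φ w + K⁻¹ * Real.log (1 - w)) (Ioo 0 1) := by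
    have hd : ∀ w ∈ Ioo (0:ℝ) 1, HasDerivAt (fun w => Φ w + K⁻¹ * Real.log (1 - w))
        ((q w)⁻¹ - K⁻¹ * (1 - w)⁻¹) w := fun w hw => by
      have h1 : (1 - w) ≠ 0 := by linarith [hw.2]
      have := (hΦd w hw).add ((((hasDerivAt_id w).const_sub 1).log h1).const_mul K⁻¹)
      exact this.congr_deriv (by simp only [id]; field_simp; ring)
    apply monotoneOn_of_deriv_nonneg (convex_Ioo 0 1)
      (fun w hw => (hd w hw).continuousAt.continuousWithinAt)
    · rw [interior_Ioo]; exact fun w hw => (hd w hw).differentiableAt.differentiableWithinAt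
    · rw [interior_Ioo]; intro w hw
      rw [(hd w hw).deriv, ← mul_inv, sub_nonneg]
      exact inv_anti₀ (hqpos w hw) (hq1 w hw)
  have hlow : ∀ ξ, ∃ a ∈ Ioo (0:ℝ) 1, Φ a < ξ := by
    intro ξ
    have h1 : Tendsto (fun w => Φ (1/2) - c⁻¹ * Real.log (1/2) + c⁻¹ * Real.log w)
        (nhdsWithin 0 (Ioi 0)) atBot :=
      tendsto_atBot_add_const_left _ _
        (Real.tendsto_log_nhdsGT_zero.const_mul_atBot (inv_pos.2 hc))
    obtain ⟨a, ha, ha'⟩ := ((h1.eventually (eventually_lt_atBot ξ)).and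
      (Ioo_mem_nhdsGT (by norm_num : (0:ℝ) < 1/2))).exists
    have ham : a ∈ Ioo (0:ℝ) 1 := ⟨ha'.1, by linarith [ha'.2]⟩
    refine ⟨a, ham, ?_⟩
    have := hmon0 ham hhalf ha'.2.le
    simp only at this
    linarith
  have hhigh : ∀ ξ, ∃ a ∈ Ioo (0:ℝ) 1, ξ < Φ a := by
    intro ξ
    have h1 : Tendsto (fun w => -Φ (1/2) - K⁻¹ * Real.log (1 - 1/2) + K⁻¹ * Real.log w)
        (nhdsWithin 0 (Ioi 0)) atBot :=
      tendsto_atBot_add_const_left _ _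
        (Real.tendsto_log_nhdsGT_zero.const_mul_atBot (inv_pos.2 hK))
    obtain ⟨a, ha, ha'⟩ := ((h1.eventually (eventually_lt_atBot (-ξ))).and
      (Ioo_mem_nhdsGT (by norm_num : (0:ℝ) < 1/2))).exists
    have ham : 1 - a ∈ Ioo (0:ℝ) 1 := ⟨by linarith [ha'.2], by linarith [ha'.1]⟩
    refine ⟨1 - a, ham, ?_⟩
    have := hmon1 hhalf ham (by linarith [ha'.2])
    simp only [sub_sub_cancel] at this
    linarith
  have hsurj : ∀ ξ, ∃ w ∈ Ioo (0:ℝ) 1, Φ w = ξ := by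
    intro ξ
    obtain ⟨a, ha, ha'⟩ := hlow ξ
    obtain ⟨b, hb, hb'⟩ := hhigh ξ
    have := (convex_Ioo (0:ℝ) 1).isPreconnected.intermediate_value ha hb hΦc
    exact this ⟨ha'.le, hb'.le⟩
  choose U hU hΦU using hsurj
  have hUΦ : ∀ w ∈ Ioo (0:ℝ) 1, U (Φ w) = w := fun w hw =>
    hΦm.injOn (hU _) hw (hΦU _)
  have hUm : StrictMono U := by
    intro a b hab
    rw [← hΦm.lt_iff_lt (hU a) (hU b), hΦU, hΦU]
    exact hab
  have hUc : ∀ ξ, ContinuousAt U ξ := by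
    intro ξ
    refine (hUm.strictMonoOn univ).continuousAt_of_image_mem_nhds univ_mem ?_
    filter_upwards [isOpen_Ioo.mem_nhds (hU ξ)] with w hw
    exact ⟨Φ w, trivial, hUΦ w hw⟩
  refine ⟨U, hU, ?_, ?_, ?_⟩
  · intro ξ
    have := HasDerivAt.of_local_left_inverse (hUc ξ) (hΦd _ (hU ξ))
      (inv_pos.2 (hqpos _ (hU ξ))).ne' (Eventually.of_forall hΦU)
    simpa using this
  · rw [tendsto_order]
    refine ⟨fun a ha => ?_, fun a ha => Eventually.of_forall fun ξ => (hU ξ).2.trans ha⟩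
    obtain ⟨w, hw1, hw2⟩ := exists_between (max_lt ha one_pos)
    have hw : w ∈ Ioo (0:ℝ) 1 := ⟨(le_max_right _ _).trans_lt hw1, hw2⟩
    filter_upwards [eventually_ge_atTop (Φ w)] with ξ hξ
    have := hUm.monotone hξ
    rw [hUΦ w hw] at this
    exact ((le_max_left _ _).trans_lt hw1).trans_le this
  · rw [tendsto_order]
    refine ⟨fun a ha => Eventually.of_forall fun ξ => ha.trans (hU ξ).1, fun a ha => ?_⟩
    obtain ⟨w, hw1, hw2⟩ := exists_between (lt_min ha one_pos)
    have hw : w ∈ Ioo (0:ℝ) 1 := ⟨hw1, hw2.trans_le (min_le_right _ _)⟩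
    filter_upwards [eventually_le_atBot (Φ w)] with ξ hξ
    have := hUm.monotone hξ
    rw [hUΦ w hw] at this
    exact this.trans_lt (hw2.trans_le (min_le_left _ _))

lemma build_front {g y : ℝ → ℝ} {c K : ℝ} (hc : 0 < c) (hK : 0 < K)
    (hgc : ContinuousOn g (Icc 0 1)) (hgpos : ∀ w ∈ Ioo (0:ℝ) 1, 0 < g w)
    (hgK : ∀ w ∈ Ioo (0:ℝ) 1, g w ≤ K ^ 2 * (1 - w))
    (hyc : ContinuousOn y (Icc 0 1)) (hy0 : y 0 = 0) (hy1 : y 1 = 0)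
    (hy : ∀ w ∈ Ioo (0:ℝ) 1, HasDerivAt y (2 * c * √(y w) - 2 * g w) w) :
    ∃ W, IsFront g c W := by
  have hpos := y_pos hgpos hyc hy1 hy
  have hqpos : ∀ w ∈ Ioo (0:ℝ) 1, 0 < √(y w) := fun w hw => Real.sqrt_pos.2 (hpos w hw)
  have hqc : ContinuousOn (fun w => √(y w)) (Icc 0 1) := hyc.sqrt
  have hqd : ∀ w ∈ Ioo (0:ℝ) 1, HasDerivAt (fun w => √(y w)) (c - g w / √(y w)) w := by
    intro w hw
    have := (hy w hw).sqrt (hpos w hw).ne'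
    have h0 := (hqpos w hw).ne'
    exact this.congr_deriv (by field_simp)
  have hq0 : ∀ w ∈ Ioo (0:ℝ) 1, √(y w) ≤ c * w := by
    intro w hw
    have hm : MonotoneOn (fun x => c * x - √(y x)) (Icc 0 1) := by
      have hd : ∀ x ∈ Ioo (0:ℝ) 1, HasDerivAt (fun x => c * x - √(y x)) (g x / √(y x)) x :=
        fun x hx => by
          have := ((hasDerivAt_id x).const_mul c).sub (hqd x hx)
          exact this.congr_deriv (by ring)
      apply monotoneOn_of_deriv_nonneg (convex_Icc 0 1)
        ((continuousOn_const.mul continuousOn_id).sub hqc)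
      · rw [interior_Icc]; exact fun x hx => (hd x hx).differentiableAt.differentiableWithinAt
      · rw [interior_Icc]; intro x hx
        change 0 ≤ deriv (fun x => c * x - √(y x)) x
        rw [(hd x hx).deriv]
        exact (div_pos (hgpos x hx) (hqpos x hx)).le
    have := hm (left_mem_Icc.2 zero_le_one) (Ioo_subset_Icc_self hw) hw.1.le
    simp only [hy0, Real.sqrt_zero] at this
    linarith
  have hq1 : ∀ w ∈ Ioo (0:ℝ) 1, √(y w) ≤ K * (1 - w) := by
    intro w hw
    have hm : AntitoneOn (fun x => K ^ 2 * (1 - x) ^ 2 - y x) (Icc 0 1) := by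
      have hd : ∀ x ∈ Ioo (0:ℝ) 1, HasDerivAt (fun x => K ^ 2 * (1 - x) ^ 2 - y x)
          (- 2 * K ^ 2 * (1 - x) - (2 * c * √(y x) - 2 * g x)) x :=
        fun x hx => by
          have := ((((hasDerivAt_id x).const_sub 1).pow 2).const_mul (K ^ 2)).sub (hy x hx)
          exact this.congr_deriv (by simp only [id]; push_cast; ring)
      apply antitoneOn_of_deriv_nonpos (convex_Icc 0 1)
        ((Continuous.continuousOn (by fun_prop)).sub hyc)
      · rw [interior_Icc]; exact fun x hx => (hd x hx).differentiableAt.differentiableWithinAt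
      · rw [interior_Icc]; intro x hx
        change deriv (fun x => K ^ 2 * (1 - x) ^ 2 - y x) x ≤ 0
        rw [(hd x hx).deriv]
        have := mul_pos hc (hqpos x hx)
        linarith [hgK x hx]
    have := hm (Ioo_subset_Icc_self hw) (right_mem_Icc.2 zero_le_one) hw.2.le
    simp only [hy1] at this
    rw [Real.sqrt_le_left (mul_nonneg hK.le (by linarith [hw.2]))]
    nlinarith
  obtain ⟨U, hU, hUd, hU1, hU0⟩ := exists_inverse hc hK (hqc.mono Ioo_subset_Icc_self) hqpos hq0 hq1
  set W : ℝ → ℝ := fun ξ => U (-ξ) with hW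
  have hWm : ∀ ξ, W ξ ∈ Ioo (0:ℝ) 1 := fun ξ => hU _
  have hWd : ∀ ξ, HasDerivAt W (- √(y (W ξ))) ξ := fun ξ => by
    have := (hUd (-ξ)).comp ξ (hasDerivAt_neg ξ)
    exact this.congr_deriv (by simp only [hW]; ring)
  have hWd' : deriv W = fun ξ => - √(y (W ξ)) := funext fun ξ => (hWd ξ).deriv
  have hWc : Continuous W := continuous_iff_continuousAt.2 fun ξ => (hWd ξ).continuousAt
  have hWdd : ∀ ξ, HasDerivAt (deriv W) (c * √(y (W ξ)) - g (W ξ)) ξ := fun ξ => by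
    rw [hWd']
    have := ((hqd _ (hWm ξ)).comp ξ (hWd ξ)).neg
    have h0 := (hqpos _ (hWm ξ)).ne'
    exact this.congr_deriv (by field_simp)
  have hWdd' : deriv (deriv W) = fun ξ => c * √(y (W ξ)) - g (W ξ) :=
    funext fun ξ => (hWdd ξ).deriv
  have hmem : ∀ ξ, W ξ ∈ Icc (0:ℝ) 1 := fun ξ => Ioo_subset_Icc_self (hWm ξ)
  refine ⟨W, ?_, ?_, ?_, ?_, ?_⟩
  · have : ContDiff ℝ (1 + 1) W := by
      rw [contDiff_succ_iff_deriv]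
      refine ⟨fun ξ => (hWd ξ).differentiableAt, by simp, ?_⟩
      rw [contDiff_one_iff_deriv]
      refine ⟨fun ξ => (hWdd ξ).differentiableAt, ?_⟩
      rw [hWdd']
      exact (continuous_const.mul (hqc.comp_continuous hWc hmem)).sub
        (hgc.comp_continuous hWc hmem)
    simpa [one_add_one_eq_two] using this
  · intro ξ
    rw [hWdd', hWd']
    ring
  · exact hU1.comp tendsto_neg_atBot_atTop
  · exact hU0.comp tendsto_neg_atTop_atBot
  · intro ξ
    rw [hWd']
    simpa using hpos _ (hWm ξ)

lemma front_scale {g V : ℝ → ℝ} {c κ : ℝ} (hκ : 0 < κ) (hV : IsFront g c V) :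
    IsFront (fun w => κ ^ 2 * g w) (κ * c) (fun ξ => V (κ * ξ)) := by
  obtain ⟨h1, h2, h3, h4, h5⟩ := hV
  have hd : deriv (fun ξ => V (κ * ξ)) = fun ξ => κ * deriv V (κ * ξ) := by
    funext ξ
    rw [deriv_comp_mul_left]
    simp
  have hdd : deriv (deriv (fun ξ => V (κ * ξ))) = fun ξ => κ ^ 2 * deriv (deriv V) (κ * ξ) := by
    funext ξ
    rw [hd, deriv_const_mul_field, deriv_comp_mul_left]
    simp only [smul_eq_mul]
    ring
  refine ⟨h1.comp (contDiff_const.mul contDiff_id), ?_, ?_, ?_, ?_⟩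
  · intro ξ
    rw [hdd, hd]
    linear_combination κ ^ 2 * h2 (κ * ξ)
  · exact h3.comp (tendsto_id.const_mul_atBot hκ)
  · exact h4.comp (tendsto_id.const_mul_atTop hκ)
  · intro ξ
    rw [hd]
    exact mul_neg_of_pos_of_neg hκ (h5 _)

lemma front_compare {g g₂ V : ℝ → ℝ} {c k : ℝ} (hc : 0 < c) (hk : 0 < k)
    (hg : ContDiffOn ℝ 2 g (Icc 0 1)) (hg1 : g 1 = 0) (hgpos : ∀ w ∈ Ioo (0:ℝ) 1, 0 < g w)
    (hle : ∀ w ∈ Ioo (0:ℝ) 1, g w ≤ k * g₂ w) (hV : IsFront g₂ c V) :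
    ∃ W, IsFront g (√k * c) W := by
  have hκ : 0 < √k := Real.sqrt_pos.2 hk
  have hV' := front_scale hκ hV
  rw [Real.sq_sqrt hk.le] at hV'
  have hc' : 0 < √k * c := mul_pos hκ hc
  obtain ⟨K, hK⟩ := hg.exists_lipschitzOnWith (by norm_num) (convex_Icc 0 1) isCompact_Icc
  obtain ⟨y, hyc, hy1, hy⟩ := exists_y g hg.continuousOn (√k * c) hc'.le
  have hy0 := y_zero hc'.le hgpos hle hyc hy1 hy hV'
  refine build_front (K := K + 1) hc' (by positivity) hg.continuousOn hgpos ?_ hyc hy0 hy1 hy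
  intro w hw
  have h := hK.dist_le_mul w (Ioo_subset_Icc_self hw) 1 (by simp)
  rw [Real.dist_eq, Real.dist_eq, hg1, sub_zero, abs_sub_comm w 1,
    abs_of_pos (by linarith [hw.2] : 0 < 1 - w)] at h
  refine (le_abs_self _).trans (h.trans ?_)
  have hK0 : (0:ℝ) ≤ K := K.2
  refine mul_le_mul_of_nonneg_right ?_ (by linarith [hw.2])
  nlinarith

lemma lower_bound {φ : ℝ → ℝ} (hφ : ContDiffOn ℝ 2 φ (Icc 0 1)) (h0 : φ 0 = 0) (h1 : φ 1 = 0)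
    (hd0 : derivWithin φ (Icc 0 1) 0 = 1) (hd1 : derivWithin φ (Icc 0 1) 1 < 0)
    (hpos : ∀ w ∈ Ioo (0:ℝ) 1, 0 < φ w) :
    ∃ m > 0, ∀ w ∈ Ioo (0:ℝ) 1, m * (w * (1 - w)) ≤ φ w := by
  have hdiff := hφ.differentiableOn (by norm_num)
  have hD0 := (hdiff 0 (by simp)).hasDerivWithinAt
  have hD1 := (hdiff 1 (by simp)).hasDerivWithinAt
  set D := derivWithin φ (Icc 0 1) 1 with hD
  rw [hd0] at hD0
  have hA : ∃ a ∈ Ioo (0:ℝ) 1, ∀ w ∈ Ioo 0 a, (1/2) * w ≤ φ w := by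
    have h := hasDerivWithinAt_iff_tendsto_slope.1 hD0
    have h' : Tendsto (slope φ 0) (nhdsWithin 0 (Ioi 0)) (nhds 1) := by
      refine h.mono_left (nhdsWithin_le_of_mem ?_)
      filter_upwards [Ioo_mem_nhdsGT (zero_lt_one' ℝ)] with x hx
      exact ⟨Ioo_subset_Icc_self hx, hx.1.ne'⟩
    have h2 := (h'.eventually (lt_mem_nhds (by norm_num : (1/2:ℝ) < 1))).and
      (Ioo_mem_nhdsGT (zero_lt_one' ℝ))
    obtain ⟨a, ha, ha'⟩ := (mem_nhdsGT_iff_exists_Ioo_subset' (zero_lt_one' ℝ)).1 h2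
    have ha0 : (0:ℝ) < a := ha
    refine ⟨min a (1/2), ⟨by positivity, ?_⟩, ?_⟩
    · exact (min_le_right _ _).trans_lt (by norm_num)
    · intro w hw
      have := (ha' ⟨hw.1, hw.2.trans_le (min_le_left _ _)⟩).1
      rw [slope_def_field, h0, sub_zero, sub_zero, lt_div_iff₀ hw.1] at this
      exact this.le
  have hB : ∃ b ∈ Ioo (0:ℝ) 1, ∀ w ∈ Ioo b 1, (-D/2) * (1 - w) ≤ φ w := by
    have h := hasDerivWithinAt_iff_tendsto_slope.1 hD1
    have h' : Tendsto (slope φ 1) (nhdsWithin 1 (Iio 1)) (nhds D) := by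
      refine h.mono_left (nhdsWithin_le_of_mem ?_)
      filter_upwards [Ioo_mem_nhdsLT (zero_lt_one' ℝ)] with x hx
      exact ⟨Ioo_subset_Icc_self hx, hx.2.ne⟩
    have h2 := (h'.eventually (gt_mem_nhds (by linarith : D < D/2))).and
      (Ioo_mem_nhdsLT (zero_lt_one' ℝ))
    obtain ⟨a, ha, ha'⟩ := (mem_nhdsLT_iff_exists_Ioo_subset' (zero_lt_one' ℝ)).1 h2
    have ha0 : a < (1:ℝ) := ha
    refine ⟨max a (1/2), ⟨lt_of_lt_of_le (by norm_num) (le_max_right _ _), ?_⟩, ?_⟩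
    · exact max_lt ha0 (by norm_num)
    · intro w hw
      have := (ha' ⟨(le_max_left _ _).trans_lt hw.1, hw.2⟩).1
      rw [slope_def_field, h1, sub_zero, div_lt_iff_of_neg (by linarith [hw.2])] at this
      linarith
  obtain ⟨a, ha, haφ⟩ := hA
  obtain ⟨b, hb, hbφ⟩ := hB
  have hM : ∃ m₀ > 0, ∀ w ∈ Icc a b, m₀ ≤ φ w := by
    rcases (Icc a b).eq_empty_or_nonempty with he | hne
    · exact ⟨1, one_pos, fun w hw => by simp [he] at hw⟩
    · have hsub : Icc a b ⊆ Ioo 0 1 := fun x hx => ⟨ha.1.trans_le hx.1, hx.2.trans_lt hb.2⟩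
      obtain ⟨z, hz, hz'⟩ := isCompact_Icc.exists_isMinOn hne
        (hφ.continuousOn.mono (hsub.trans Ioo_subset_Icc_self))
      exact ⟨φ z, hpos z (hsub hz), fun w hw => hz' hw⟩
  obtain ⟨m₀, hm₀, hmφ⟩ := hM
  have hDp : 0 < -D/2 := by linarith
  refine ⟨min (1/2) (min (-D/2) m₀), by positivity, ?_⟩
  intro w hw
  set m := min (1/2) (min (-D/2) m₀) with hm
  have hm0 : 0 < m := by positivity
  have m1 : m ≤ 1/2 := min_le_left _ _
  have m2 : m ≤ -D/2 := (min_le_right _ _).trans (min_le_left _ _)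
  have m3 : m ≤ m₀ := (min_le_right _ _).trans (min_le_right _ _)
  have hw0 := hw.1
  have hw1 : 0 < 1 - w := by linarith [hw.2]
  rcases lt_or_ge w a with hwa | hwa
  · refine le_trans ?_ (haφ w ⟨hw0, hwa⟩)
    exact mul_le_mul m1 (by nlinarith) (by positivity) (by norm_num)
  rcases lt_or_ge b w with hwb | hwb
  · refine le_trans ?_ (hbφ w ⟨hwb, hw.2⟩)
    exact mul_le_mul m2 (by nlinarith) (by positivity) hDp.le
  · refine le_trans ?_ (hmφ w ⟨hwa, hwb⟩)
    have : w * (1 - w) ≤ 1 := by nlinarith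
    calc m * (w * (1 - w)) ≤ m * 1 := by gcongr
      _ ≤ m₀ := by linarith

lemma diff_bound {φ ψ : ℝ → ℝ} (hφ : ContDiffOn ℝ 2 φ (Icc 0 1)) (hψ : ContDiffOn ℝ 2 ψ (Icc 0 1))
    (h0 : φ 0 = 0) (h1 : φ 1 = 0) (h0' : ψ 0 = 0) (h1' : ψ 1 = 0) {B : ℝ} (hB : 0 ≤ B)
    (hd : ∀ w ∈ Icc (0:ℝ) 1, |derivWithin φ (Icc 0 1) w - derivWithin ψ (Icc 0 1) w| ≤ B) :
    ∀ w ∈ Ioo (0:ℝ) 1, |φ w - ψ w| ≤ 2 * B * (w * (1 - w)) := by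
  have hD : ∀ w ∈ Icc (0:ℝ) 1, HasDerivWithinAt (fun x => φ x - ψ x)
      (derivWithin φ (Icc 0 1) w - derivWithin ψ (Icc 0 1) w) (Icc 0 1) w := fun w hw =>
    (hφ.differentiableOn (by norm_num) w hw).hasDerivWithinAt.sub
      (hψ.differentiableOn (by norm_num) w hw).hasDerivWithinAt
  intro w hw
  have hwm := Ioo_subset_Icc_self hw
  have a0 := (convex_Icc (0:ℝ) 1).norm_image_sub_le_of_norm_hasDerivWithin_le hD hd
    (left_mem_Icc.2 zero_le_one) hwm
  have a1 := (convex_Icc (0:ℝ) 1).norm_image_sub_le_of_norm_hasDerivWithin_le hD hd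
    (right_mem_Icc.2 zero_le_one) hwm
  simp only [h0, h1, h0', h1', sub_zero, Real.norm_eq_abs] at a0 a1
  rw [abs_of_pos hw.1] at a0
  rw [abs_sub_comm w 1, abs_of_pos (by linarith [hw.2] : 0 < 1 - w)] at a1
  have hw0 := hw.1
  have hw1 : 0 < 1 - w := by linarith [hw.2]
  rcases le_total w (1/2) with h | h
  · refine a0.trans ?_
    rw [mul_comm 2 B, mul_assoc]
    exact mul_le_mul_of_nonneg_left (by nlinarith) hB
  · refine a1.trans ?_
    rw [mul_comm 2 B, mul_assoc]
    exact mul_le_mul_of_nonneg_left (by nlinarith) hB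

/-- Under (A1)-(A2), the minimal traveling wave speed `s ↦ c*(s)` is continuous on `[0, ∞)`. -/
theorem cstar_continuous
    (f : ℝ → ℝ → ℝ) (cstar : ℝ → ℝ)
    -- (A1)
    (hA1 : ∀ s, 0 ≤ s →
      ContDiffOn ℝ 2 (fun w => f w s) (Icc 0 1) ∧
      f 0 s = 0 ∧ f 1 s = 0 ∧
      derivWithin (fun w => f w s) (Icc 0 1) 0 = 1 ∧
      derivWithin (fun w => f w s) (Icc 0 1) 1 < 0 ∧
      (∀ w ∈ Ioo (0:ℝ) 1, 0 < f w s))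
    -- (A2)
    (hA2 : ∃ L₀ > (0:ℝ), ∀ n : ℕ, n ≤ 2 → ∀ w ∈ Icc (0:ℝ) 1, ∀ sa sb : ℝ, 0 ≤ sa → 0 ≤ sb →
      |iteratedDerivWithin n (fun w => f w sa) (Icc 0 1) w -
        iteratedDerivWithin n (fun w => f w sb) (Icc 0 1) w| ≤ L₀ * |sa - sb|)
    -- minimal-speed characterization
    (hmin : ∀ s, 0 ≤ s → 2 ≤ cstar s ∧
      ∀ c, (∃ W : ℝ → ℝ, IsFront (fun w => f w s) c W) ↔ cstar s ≤ c)
    -- uniqueness up to translation of the minimal front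
    (huniq : ∀ s, 0 ≤ s → ∀ W₁ W₂ : ℝ → ℝ, IsFront (fun w => f w s) (cstar s) W₁ →
      IsFront (fun w => f w s) (cstar s) W₂ → ∃ τ, ∀ ξ, W₂ ξ = W₁ (ξ + τ)) :
    ContinuousOn cstar (Ici 0) := by
  obtain ⟨L, hL, hA2⟩ := hA2
  intro s₀ hs₀
  have hs₀' : 0 ≤ s₀ := hs₀
  obtain ⟨c1, c2, c3, c4, c5, c6⟩ := hA1 s₀ hs₀'
  obtain ⟨m, hm, hmf⟩ := lower_bound c1 c2 c3 c4 c5 c6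
  set C : ℝ := 2 * L / m with hC
  have hC0 : 0 < C := by positivity
  have hratio : ∀ s, 0 ≤ s → ∀ w ∈ Ioo (0:ℝ) 1,
      |f w s - f w s₀| ≤ C * |s - s₀| * f w s₀ := by
    intro s hs w hw
    obtain ⟨d1, d2, d3, -, -, -⟩ := hA1 s hs
    have := diff_bound d1 c1 d2 d3 c2 c3 (B := L * |s - s₀|) (by positivity)
      (fun w hw => by
        have := hA2 1 (by norm_num) w hw s s₀ hs hs₀'
        simpa only [iteratedDerivWithin_one] using this) w hw
    refine this.trans ?_
    have h2 := mul_le_mul_of_nonneg_left (hmf w hw) (by positivity : 0 ≤ C * |s - s₀|)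
    refine le_trans (le_of_eq ?_) h2
    rw [hC]
    field_simp
  obtain ⟨hc0, hmin0⟩ := hmin s₀ hs₀'
  have hdist : Tendsto (fun s => C * |s - s₀|) (nhdsWithin s₀ (Ici 0)) (nhds 0) := by
    have : Continuous (fun s => C * |s - s₀|) := by fun_prop
    have h := this.tendsto s₀
    simp only [sub_self, abs_zero, mul_zero] at h
    exact h.mono_left nhdsWithin_le_nhds
  have hlo : Tendsto (fun s => √(1 - C * |s - s₀|) * cstar s₀) (nhdsWithin s₀ (Ici 0))
      (nhds (cstar s₀)) := by
    have := ((hdist.const_sub 1).sqrt).mul_const (cstar s₀)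
    simpa using this
  have hhi : Tendsto (fun s => √(1 + C * |s - s₀|) * cstar s₀) (nhdsWithin s₀ (Ici 0))
      (nhds (cstar s₀)) := by
    have := ((hdist.const_add 1).sqrt).mul_const (cstar s₀)
    simpa using this
  refine tendsto_of_tendsto_of_tendsto_of_le_of_le' hlo hhi ?_ ?_
  · filter_upwards [self_mem_nhdsWithin, hdist.eventually (gt_mem_nhds one_pos)] with s hs hlt
    have hs' : 0 ≤ s := hs
    obtain ⟨hcs, hmins⟩ := hmin s hs'
    obtain ⟨V, hV⟩ := (hmins (cstar s)).2 le_rfl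
    have hk : 0 < 1 - C * |s - s₀| := by linarith
    have hW := front_compare (k := (1 - C * |s - s₀|)⁻¹) (by linarith) (inv_pos.2 hk) c1 c3 c6
      (fun w hw => by
        have := (abs_le.1 (hratio s hs' w hw)).1
        rw [inv_mul_eq_div, le_div_iff₀ hk]
        linarith) hV
    have h := (hmin0 _).1 hW
    rw [Real.sqrt_inv, inv_mul_eq_div, le_div_iff₀ (Real.sqrt_pos.2 hk)] at h
    linarith
  · filter_upwards [self_mem_nhdsWithin] with s hs
    have hs' : 0 ≤ s := hs
    obtain ⟨hcs, hmins⟩ := hmin s hs'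
    obtain ⟨V, hV⟩ := (hmin0 (cstar s₀)).2 le_rfl
    obtain ⟨d1, d2, d3, d4, d5, d6⟩ := hA1 s hs'
    have hW := front_compare (k := 1 + C * |s - s₀|) (by linarith) (by positivity) d1 d3 d6
      (fun w hw => by
        have := (abs_le.1 (hratio s hs' w hw)).2
        linarith) hV
    exact (hmins _).1 hW
end
end
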